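/- arXiv:1608.00617 — 3 statements merged into one kernel-verified Lean document; each statement's English description precedes it below -/
import Mathlib

section
/- Let F be a free group, let H and K be finitely generated subgroups of F, and let S ⊆ F be a set of double coset representatives for (H,K), i.e. (i) for every s ∈ S the intersection H ∩ sKs⁻¹ is nontrivial, (ii) distinct elements s, s' ∈ S lie in distinct double cosets HsK ≠ Hs'K, and (iii) for every g ∈ F with H ∩ gKg⁻¹ nontrivial there is s ∈ S with HgK = HsK. Let L = ⟨H, K, S⟩ be the subgroup of F generated by H, K and S, and suppose that neither H nor K has finite index in L. Then there exists a surjective group homomorphism ε : L → F₂ onto a free group F₂ of rank 2 such that: (a) the restriction of ε to H is injective and the restriction of ε to K is injective; (b) the image ε(S) is a set of double coset representatives for (ε(H), ε(K)) in F₂ (i.e. ε(S) satisfies conditions (i)–(iii) with respect to ε(H) and ε(K)), and ε restricted to S is injective; and (c) for every s ∈ S one has ε(H ∩ sKs⁻¹) = ε(H) ∩ ε(s)ε(K)ε(s)⁻¹. -/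
/-!
The subgroup `L` is free, and the proof embeds the relevant part of `L` into the free group on `T`
and `Y` by a homomorphism that is far from injective on `L` but loses nothing about `H`, `K` and the
conjugacies between them.

* Choice of basis (`GJ.exists_basis`). As `H` and `K` have infinite index in `L`, there is a basis
  of `L` and an element `t` of it no nontrivial power of which is conjugate into `H` or `K`. One
  minimises the number of `t`-periodic points of the `L`-set `L ⧸ H ⊔ L ⧸ K` over all elements of
  all bases; replacing `b` by `t ^ k * b` shows that the periodic points of a minimal `t` are
  invariant under `L`, and a finite invariant set is empty because the index is infinite.
* Bounded runs (`GJ.exists_noRun`). By finiteness of the core graphs, reduced words of elements of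
  `H` and `K` then contain no `t ^ V` or `t ^ (-V)` for a suitable `V`.
* The homomorphism (`GJ.eps`). It sends `t` to `T` and any other generator `a` to
  `T ^ (M * ι a) * Y ^ ι a * T ^ (M * ι a)`, where `ι` is injective with positive values, `1` among
  them, and `M = 6 * V`. It is surjective. On a word whose runs of `t` are shorter than `M` no
  `Y`-syllables of the image merge (`GJ.exponent_ne_zero`), so the image can be read letter by
  letter (`GJ.code`, `GJ.decode`) and is nontrivial if the word is (`GJ.eq_one_of_eps`).
* Conjugacies. Quotients and short products of elements with runs shorter than `V` have runs shorter
  than `M`, which gives injectivity on `H` and `K`. Elements conjugating a nontrivial element of `K`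
  into `H` are quotients of prefixes of elements of `H` and `K` (`GJ.noRun_conj`), so they too are
  determined by their images (`GJ.eq_of_eps_eq`). If conjugation by `f` takes the image of `k ∈ K`
  to the image of `h ∈ H`, decoding a syllable in the middle of a high power exhibits `f` as the
  image of a conjugator of `k` to `h` (`GJ.exists_common_cut`, `GJ.lift_conj`).

The last two facts say that the homomorphism matches the conjugators on both sides bijectively; that
it carries double coset representatives to double coset representatives and respects the
intersections is then formal (`GJ.image_isDCRep`).
-/

/-- The conjugate subgroup `g K g⁻¹`. -/
def conjSubgroup {G : Type*} [Group G] (g : G) (K : Subgroup G) : Subgroup G :=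
  K.map (MulAut.conj g).toMonoidHom

/-- `a` and `b` lie in the same double coset `H a K = H b K`. -/
def DosetEq {G : Type*} [Group G] (H K : Subgroup G) (a b : G) : Prop :=
  ∃ h ∈ H, ∃ k ∈ K, b = h * a * k

/-- `S` is a set of double coset representatives for `(H, K)`:
(i) every `s ∈ S` has `H ∩ sKs⁻¹` nontrivial, (ii) distinct elements of `S` lie in
distinct double cosets, (iii) every `g` with `H ∩ gKg⁻¹` nontrivial has its double coset
represented in `S`. -/
def IsDCRep {G : Type*} [Group G] (H K : Subgroup G) (S : Set G) : Prop :=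
  (∀ s ∈ S, H ⊓ conjSubgroup s K ≠ ⊥) ∧
  (∀ s ∈ S, ∀ s' ∈ S, s ≠ s' → ¬ DosetEq H K s s') ∧
  (∀ g : G, H ⊓ conjSubgroup g K ≠ ⊥ → ∃ s ∈ S, DosetEq H K g s)

/-! ### Cancellation in free groups -/

namespace GJ

open FreeGroup

section Words

variable {α : Type*}

theorem red_left {A B : List (α × Bool)} (h : IsReduced (A ++ B)) : IsReduced A :=
  (List.isChain_append.1 h).1

theorem red_right {A B : List (α × Bool)} (h : IsReduced (A ++ B)) : IsReduced B :=
  (List.isChain_append.1 h).2.1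

theorem red_sub {A B : List (α × Bool)} (h : IsReduced B) (hA : A <:+: B) : IsReduced A := by
  obtain ⟨X, Y, rfl⟩ := hA
  exact red_right (red_left h)

theorem mk_invRev (A : List (α × Bool)) : mk (invRev A) = (mk A)⁻¹ := by
  rw [inv_mk]

theorem mk_app (A B : List (α × Bool)) : mk (A ++ B) = mk A * mk B := by
  rw [mul_mk]

variable [DecidableEq α]

theorem toWord_mk_of {A : List (α × Bool)} (h : IsReduced A) : (mk A).toWord = A := by
  rw [toWord_mk, h.reduce_eq]

theorem eq_mk_of_toWord {g : FreeGroup α} {A : List (α × Bool)} (h : g.toWord = A) :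
    g = mk A := by rw [← h, mk_toWord]

/-- In a product of two reduced words only a suffix `C` of the first factor cancels, against the
prefix `invRev C` of the second. -/
theorem list_cancel (L₁ : List (α × Bool)) : ∀ L₂, IsReduced L₁ → IsReduced L₂ →
    ∃ A C B, L₁ = A ++ C ∧ L₂ = invRev C ++ B ∧ IsReduced (A ++ B) := by
  induction L₁ using List.reverseRecOn with
  | nil => intro L₂ _ h; exact ⟨[], [], L₂, by simp, by simp, by simpa⟩
  | append_singleton L x ih =>
    intro L₂ h₁ h₂
    cases L₂ with
    | nil => exact ⟨L ++ [x], [], [], by simp, by simp, by simpa using h₁⟩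
    | cons y L₂ =>
      by_cases hxy : y = (x.1, !x.2)
      · obtain ⟨A, C, B, h3, h4, h5⟩ := ih L₂ (red_left h₁) (red_right (A := [y]) h₂)
        refine ⟨A, C ++ [x], B, by simp [h3], ?_, h5⟩
        simp [h4, invRev, hxy]
      · refine ⟨L ++ [x], [], y :: L₂, by simp, by simp, ?_⟩
        have h6 : IsReduced ([x] ++ (y :: L₂)) := by
          rw [List.singleton_append, isReduced_cons_cons]
          refine ⟨fun h => ?_, h₂⟩
          by_contra h7
          exact hxy (Prod.ext h.symm (by
            simp only
            cases hx : x.2 <;> cases hy : y.2 <;> simp_all))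
        exact IsReduced.append_overlap h₁ h6 (by simp)

/-- Products in the free group at the level of reduced words, see `list_cancel`. -/
theorem mul_word (g b : FreeGroup α) : ∃ A C B, g.toWord = A ++ C ∧ b.toWord = invRev C ++ B ∧
    (g * b).toWord = A ++ B := by
  obtain ⟨A, C, B, h1, h2, h3⟩ := list_cancel g.toWord b.toWord isReduced_toWord isReduced_toWord
  refine ⟨A, C, B, h1, h2, ?_⟩
  have : g * b = mk (A ++ B) := by
    rw [eq_mk_of_toWord h1, eq_mk_of_toWord h2]
    simp only [mk_app, mk_invRev]; group
  rw [this, toWord_mk_of h3]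

/-- A factor `g` on the left only disturbs the first `norm g` letters of a reduced word. -/
theorem toWord_mul_left {g : FreeGroup α} {B₁ B₂ : List (α × Bool)} (h : IsReduced (B₁ ++ B₂))
    (hg : g.norm < B₁.length) :
    (g * mk (B₁ ++ B₂)).toWord = (g * mk B₁).toWord ++ B₂ := by
  obtain ⟨A, C, B, h1, h2, h3⟩ := mul_word g (mk B₁)
  rw [toWord_mk_of (red_left h)] at h2
  have hB : B ≠ [] := by
    rintro rfl
    have := congrArg List.length h1
    have h4 := congrArg List.length h2
    simp [invRev_length] at this h4
    simp only [FreeGroup.norm] at hg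
    omega
  have h5 : IsReduced (A ++ B ++ B₂) := by
    refine IsReduced.append_overlap ?_ ?_ hB
    · rw [← h3]; exact isReduced_toWord
    · rw [h2, List.append_assoc] at h; exact red_right h
  have h6 : g * mk (B₁ ++ B₂) = mk (A ++ B ++ B₂) := by
    rw [mk_app (A ++ B) B₂, ← eq_mk_of_toWord h3, mk_app, mul_assoc]
  rw [h3, h6, toWord_mk_of h5]

theorem toWord_mul_right {c : FreeGroup α} {B₁ B₂ : List (α × Bool)} (h : IsReduced (B₁ ++ B₂))
    (hc : c.norm < B₂.length) :
    (mk (B₁ ++ B₂) * c).toWord = B₁ ++ (mk B₂ * c).toWord := by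
  obtain ⟨A, C, B, h1, h2, h3⟩ := mul_word (mk B₂) c
  rw [toWord_mk_of (red_right h)] at h1
  have hB : A ≠ [] := by
    rintro rfl
    have := congrArg List.length h1
    have h4 := congrArg List.length h2
    simp [invRev_length] at this h4
    simp only [FreeGroup.norm] at hc
    omega
  have h5 : IsReduced (B₁ ++ A ++ B) := by
    refine IsReduced.append_overlap ?_ ?_ hB
    · rw [h1, ← List.append_assoc] at h; exact red_left h
    · rw [← h3]; exact isReduced_toWord
  have h6 : mk (B₁ ++ B₂) * c = mk (B₁ ++ A ++ B) := by
    rw [List.append_assoc, mk_app _ (A ++ B), ← eq_mk_of_toWord h3, mk_app, mul_assoc]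
  rw [h3, h6, toWord_mk_of h5, List.append_assoc]

/-- If both halves of the reduced word `B₁ ++ B₂` are long compared with `g` and `c`, then in
`g * B₁ * B₂ * c` nothing cancels at the cut. -/
theorem toWord_mul_both {g c : FreeGroup α} {B₁ B₂ : List (α × Bool)} (h : IsReduced (B₁ ++ B₂))
    (hg : g.norm < B₁.length) (hc : c.norm < B₂.length) :
    (g * mk (B₁ ++ B₂) * c).toWord = (g * mk B₁).toWord ++ (mk B₂ * c).toWord := by
  have h1 := toWord_mul_left h hg
  rw [eq_mk_of_toWord h1]
  exact toWord_mul_right (by rw [← h1]; exact isReduced_toWord) hc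

/-- Prefixes of the reduced words of elements of a finitely generated subgroup `H` represent
finitely many cosets of `H`: this is the finiteness of its core graph. -/
theorem exists_finite_cosets {H : Subgroup (FreeGroup α)} (hH : H.FG) :
    ∃ P : Finset (FreeGroup α), ∀ h ∈ H, ∀ A B, h.toWord = A ++ B →
      ∃ h' ∈ H, ∃ q ∈ P, mk A = h' * q := by
  obtain ⟨S, rfl⟩ := hH
  refine ⟨insert 1 (S.biUnion fun s => (s.toWord.inits.map mk).toFinset), fun h hh => ?_⟩
  induction hh using Subgroup.closure_induction with
  | mem x hx =>
    intro A B hAB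
    refine ⟨1, one_mem _, mk A, ?_, by simp⟩
    rw [Finset.mem_insert, Finset.mem_biUnion]
    right
    refine ⟨x, hx, ?_⟩
    simp only [List.mem_toFinset, List.mem_map, List.mem_inits]
    exact ⟨A, ⟨B, hAB.symm⟩, rfl⟩
  | one =>
    intro A B hAB
    rw [toWord_one] at hAB
    have : A = [] := by
      have := congrArg List.length hAB
      simp at this; exact List.eq_nil_of_length_eq_zero (by omega)
    exact ⟨1, one_mem _, 1, by simp, by rw [this]; simp [one_eq_mk]⟩
  | mul x y hx hy ihx ihy =>
    intro A B hAB
    obtain ⟨A', C, B', h1, h2, h3⟩ := mul_word x y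
    rw [h3, List.append_eq_append_iff] at hAB
    rcases hAB with ⟨D, hD1, hD2⟩ | ⟨D, hD1, hD2⟩
    · obtain ⟨h', hh', q, hq, he⟩ := ihy (invRev C ++ D) B (by rw [h2, hD2]; simp)
      refine ⟨x * h', mul_mem hx hh', q, hq, ?_⟩
      rw [mul_assoc, ← he, hD1, eq_mk_of_toWord h1]
      simp only [mk_app, mk_invRev]; group
    · exact ihx A (D ++ C) (by rw [h1, hD1]; simp)
  | inv x hx ih =>
    intro A B hAB
    rw [toWord_inv] at hAB
    have h2 : x.toWord = invRev B ++ invRev A := by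
      rw [← invRev_invRev (L₁ := x.toWord), hAB, invRev_append]
    obtain ⟨h', hh', q, hq, he⟩ := ih _ _ h2
    refine ⟨x⁻¹ * h', mul_mem (inv_mem hx) hh', q, hq, ?_⟩
    rw [mul_assoc, ← he, eq_mk_of_toWord h2]
    simp only [mk_app, mk_invRev]; group

/-- Powers of a nontrivial element are long, as its cyclically reduced core does not cancel. -/
theorem le_norm_pow {b : FreeGroup α} (hb : b ≠ 1) (m : ℕ) : m ≤ (b ^ m).norm := by
  have h0 : reduceCyclically b.toWord ≠ [] := by
    intro h
    have h1 := reduceCyclically.conj_conjugator_reduceCyclically b.toWord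
    rw [h] at h1
    apply hb
    rw [eq_mk_of_toWord h1.symm, mk_app, mk_app, mk_invRev, ← one_eq_mk]
    group
  rw [FreeGroup.norm, toWord_pow, reduceCyclically.reduce_flatten_replicate isReduced_toWord]
  have : 0 < (reduceCyclically b.toWord).length := List.length_pos_iff.2 h0
  split_ifs with h
  · simp [h]
  · simp only [List.length_append, List.length_flatten, List.map_replicate, List.sum_replicate,
      smul_eq_mul]
    nlinarith

end Words
end GJ

/-! ### A basis element with no power conjugate into `H` or `K` -/

namespace GJ

open FreeGroup

section Periodic

variable {α : Type*} [DecidableEq α]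

/-- If a power of the cyclically reduced element `mk (W₁ ++ W₂)` is conjugated into `H` by `g`,
then `g * mk W₁` lies in one of the finitely many cosets `H * q`, `q ∈ P`, visited by reduced words
of elements of `H`: in a high power, `g * mk (W₁ ++ W₂) ^ N * mk W₁` is represented by such
a prefix. -/
theorem periodic_coset {H : Subgroup (FreeGroup α)} {P : Finset (FreeGroup α)}
    (hP : ∀ h ∈ H, ∀ A B, h.toWord = A ++ B → ∃ h' ∈ H, ∃ q ∈ P, mk A = h' * q)
    {W₁ W₂ : List (α × Bool)} (hW : IsCyclicallyReduced (W₁ ++ W₂)) (hne : W₁ ++ W₂ ≠ [])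
    {g : FreeGroup α} {m : ℕ} (hm : 0 < m) (hg : g * mk (W₁ ++ W₂) ^ m * g⁻¹ ∈ H) :
    ∃ h' ∈ H, ∃ q ∈ P, g * mk W₁ = h' * q := by
  set W := W₁ ++ W₂ with hWdef
  have hlen : 1 ≤ W.length := List.length_pos_iff.2 hne
  have hpow : ∀ n, mk (List.replicate n W).flatten = mk W ^ n := fun n => by rw [pow_mk]
  have hlen' : ∀ n, n ≤ (List.replicate n W).flatten.length := by
    intro n
    simp only [List.length_flatten, List.map_replicate, List.sum_replicate, smul_eq_mul]
    nlinarith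
  set N := m * (g.norm + 1) with hN
  have hNg : g.norm + 1 ≤ N := by rw [hN]; exact Nat.le_mul_of_pos_left _ hm
  set B₁ := (List.replicate N W).flatten ++ W₁ with hB₁
  set B₂ := W₂ ++ (List.replicate (N + (m - 1)) W).flatten with hB₂
  have hB : B₁ ++ B₂ = (List.replicate (N + 1 + (N + (m - 1))) W).flatten := by
    rw [List.replicate_add (N + 1), List.replicate_add N, List.flatten_append,
      List.flatten_append]
    simp [hB₁, hB₂, hWdef]
  have hred : IsReduced (B₁ ++ B₂) := by
    rw [hB]; exact (hW.flatten_replicate _).isReduced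
  have h1 : g.norm < B₁.length := by
    have := hlen' N
    rw [hB₁, List.length_append]; omega
  have h2 : (g⁻¹).norm < B₂.length := by
    have := hlen' (N + (m - 1))
    rw [hB₂, List.length_append, norm_inv_eq]; omega
  have h3 := toWord_mul_both hred h1 h2
  have hN2 : N + 1 + (N + (m - 1)) = m * (2 * (g.norm + 1) + 1) := by
    have : m - 1 + 1 = m := by omega
    rw [hN]; nlinarith
  have hconj : ∀ n, g * mk W ^ (m * n) * g⁻¹ ∈ H := by
    intro n
    have : g * mk W ^ (m * n) * g⁻¹ = (g * mk W ^ m * g⁻¹) ^ n := by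
      rw [conj_pow, pow_mul]
    rw [this]; exact pow_mem hg n
  have hmem : g * mk (B₁ ++ B₂) * g⁻¹ ∈ H := by
    rw [hB, hpow, hN2]; exact hconj _
  obtain ⟨h', hh', q, hq, he⟩ := hP _ hmem _ _ h3
  rw [mk_toWord, hB₁, mk_app, hpow] at he
  refine ⟨(g * mk W ^ N * g⁻¹)⁻¹ * h', mul_mem (inv_mem (hconj _)) hh', q, hq, ?_⟩
  rw [mul_assoc, ← he]; group

end Periodic

section Basis

variable {α : Type*} {G : Type*} [Group G]

/-- The points of `X` that are periodic under `y`. -/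
def per (X : Type*) [MulAction G X] (y : G) : Set X := {x | ∃ m : ℕ, 0 < m ∧ y ^ m • x = x}

/-- Fixed points of `y` on `G ⧸ H` correspond to conjugates of `y` lying in `H`. -/
theorem coset_fix {H : Subgroup G} (g y : G) :
    y • (QuotientGroup.mk g⁻¹ : G ⧸ H) = QuotientGroup.mk g⁻¹ ↔ g * y * g⁻¹ ∈ H := by
  rw [← QuotientGroup.mk_mul_of_mem g⁻¹ (one_mem H)]
  rw [eq_comm]
  change QuotientGroup.mk (g⁻¹ * 1) = (QuotientGroup.mk (y * (g⁻¹ * 1)) : G ⧸ H) ↔ _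
  rw [QuotientGroup.eq]
  simp [mul_assoc]

theorem comap_fg (e : FreeGroup α ≃* G) {H : Subgroup G} (hH : H.FG) :
    (H.comap e.toMonoidHom).FG := by
  rw [show H.comap e.toMonoidHom = H.map e.symm.toMonoidHom from
    (Subgroup.map_equiv_eq_comap_symm' e.symm H).symm]
  rw [Subgroup.fg_iff_submonoid_fg] at hH ⊢
  exact hH.map e.symm.toMonoidHom

/-- A finite set mapped into itself by the generators is mapped into itself by their inverses too,
hence by the whole group. -/
theorem smul_mem_of_generators (e : FreeGroup α ≃* G) {X : Type*} [MulAction G X] {C : Set X}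
    (hC : C.Finite) (h : ∀ b : α, ∀ x ∈ C, e (of b) • x ∈ C) (g : FreeGroup α) :
    ∀ x ∈ C, e g • x ∈ C := by
  induction g using FreeGroup.induction_on with
  | C1 => simp
  | of b => exact h b
  | inv_of b _ =>
    intro x hx
    have hs : (fun z => e (of b) • z) '' C = C :=
      Set.eq_of_subset_of_ncard_le (by rintro _ ⟨z, hz, rfl⟩; exact h b z hz)
        (by rw [Set.ncard_image_of_injective _ (MulAction.injective _)]) hC
    rw [← hs] at hx
    obtain ⟨z, hz, rfl⟩ := hx
    simpa using hz
  | mul x y hx hy => intro z hz; rw [_root_.map_mul, mul_smul]; exact hx _ (hy _ hz)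

variable [DecidableEq α]

/-- An `a`-periodic coset comes from a `g` with `g * a ^ m * g⁻¹ ∈ H`, and so from a vertex of the
finite core of `H`. -/
theorem per_finite (e : FreeGroup α ≃* G) {H : Subgroup G} (hH : H.FG) (a : α) :
    (per (G ⧸ H) (e (of a))).Finite := by
  obtain ⟨P, hP⟩ := exists_finite_cosets (comap_fg e hH)
  refine (P.finite_toSet.image fun q => (QuotientGroup.mk (e q)⁻¹ : G ⧸ H)).subset ?_
  rintro x ⟨m, hm, hx⟩
  obtain ⟨g, rfl⟩ := QuotientGroup.mk_surjective x
  obtain ⟨g, rfl⟩ := inv_surjective g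
  obtain ⟨g, rfl⟩ := e.surjective g
  rw [coset_fix] at hx
  have hx' : g * mk ([] ++ [(a, true)]) ^ m * g⁻¹ ∈ H.comap e.toMonoidHom := by
    change e (g * of a ^ m * g⁻¹) ∈ H
    simpa using hx
  obtain ⟨h', hh', q, hq, he⟩ := periodic_coset hP
    (by simp) (by simp) hm hx'
  refine ⟨q, hq, ?_⟩
  rw [← one_eq_mk, mul_one] at he
  simp only
  have hmem : e h' ∈ H := hh'
  rw [QuotientGroup.eq, he]
  simpa using hmem

/-- Once `k` exceeds the number of vertices of the core, a loop labelled by a power of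
`a ^ k * b` runs `a`-periodically, by the pigeonhole principle. -/
theorem per_subset (e : FreeGroup α ≃* G) {H : Subgroup G} (hH : H.FG) (a b : α) :
    ∃ k₀, ∀ k ≥ k₀, per (G ⧸ H) (e (of a ^ k * of b)) ⊆ per (G ⧸ H) (e (of a)) := by
  obtain ⟨P, hP⟩ := exists_finite_cosets (comap_fg e hH)
  refine ⟨P.card + 1, fun k hk => ?_⟩
  rintro x ⟨m, hm, hx⟩
  obtain ⟨g, rfl⟩ := QuotientGroup.mk_surjective x
  obtain ⟨g, rfl⟩ := inv_surjective g
  obtain ⟨g, rfl⟩ := e.surjective g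
  rw [coset_fix] at hx
  have hcyc : IsCyclicallyReduced (List.replicate k (a, true) ++ [(b, true)]) := by
    have hall : ∀ c ∈ List.replicate k (a, true) ++ [(b, true)], c.2 = true := by
      intro c hc
      simp only [List.mem_append, List.mem_replicate, List.mem_singleton] at hc
      rcases hc with ⟨_, rfl⟩ | rfl <;> rfl
    refine ⟨?_, ?_⟩
    · refine List.Pairwise.isChain (List.pairwise_of_forall_mem_list ?_)
      intro c hc d hd _
      rw [hall c hc, hall d hd]
    · intro c hc d hd _
      rw [hall c (List.mem_of_getLast? hc), hall d (List.mem_of_head? hd)]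
  have hmk : mk (List.replicate k (a, true) ++ [(b, true)]) = of a ^ k * of b := by
    rw [mk_app, of, pow_mk]; simp [of]
  have key : ∀ i : Fin k, ∃ h' ∈ H.comap e.toMonoidHom, ∃ q ∈ P, g * of a ^ (i : ℕ) = h' * q := by
    intro i
    have hsplit : List.replicate k (a, true) ++ [(b, true)] =
        List.replicate (i : ℕ) (a, true) ++
          (List.replicate (k - i) (a, true) ++ [(b, true)]) := by
      rw [← List.append_assoc, List.replicate_append_replicate]
      congr 2; omega
    rw [hsplit] at hcyc hmk
    have hx' : g * mk (List.replicate (i : ℕ) (a, true) ++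
          (List.replicate (k - i) (a, true) ++ [(b, true)])) ^ m * g⁻¹ ∈
        H.comap e.toMonoidHom := by
      rw [hmk]
      simpa [Subgroup.mem_comap] using hx
    obtain ⟨h', hh', q, hq, he⟩ := periodic_coset hP hcyc (by simp) hm hx'
    refine ⟨h', hh', q, hq, ?_⟩
    rw [← he, of, pow_mk]; simp
  choose h' hh' q hq he using key
  obtain ⟨i, j, hij, hqq⟩ : ∃ i j, i ≠ j ∧ q i = q j := by
    by_contra! hcon
    have := Finset.card_le_card_of_injOn q (s := Finset.univ) (t := P) (fun i _ => hq i)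
      (fun i _ j _ h => by by_contra h2; exact hcon i j h2 h)
    simp at this; omega
  wlog hlt : j < i generalizing i j
  · exact this j i hij.symm hqq.symm (lt_of_le_of_ne (not_lt.1 hlt) hij)
  have hlt' : (j : ℕ) < i := hlt
  refine ⟨i - j, by omega, ?_⟩
  rw [coset_fix]
  have : g * of a ^ ((i : ℕ) - j) * g⁻¹ = h' i * (h' j)⁻¹ := by
    have h1 : h' i = g * of a ^ (i : ℕ) * (q i)⁻¹ := by rw [he i]; group
    have h2 : h' j = g * of a ^ (j : ℕ) * (q i)⁻¹ := by rw [he j, hqq]; group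
    rw [h1, h2, pow_sub _ hlt'.le]; group
  have h3 : g * of a ^ ((i : ℕ) - j) * g⁻¹ ∈ H.comap e.toMonoidHom := by
    rw [this]; exact mul_mem (hh' i) (inv_mem (hh' j))
  simpa [Subgroup.mem_comap] using h3

/-- The automorphism `b ↦ a ^ k * b` of the free group, fixing the other generators. -/
def transvection {a b : α} (hab : a ≠ b) (k : ℕ) : FreeGroup α ≃* FreeGroup α :=
  MonoidHom.toMulEquiv
    (FreeGroup.lift fun c => if c = b then of a ^ k * of b else of c)
    (FreeGroup.lift fun c => if c = b then (of a ^ k)⁻¹ * of b else of c)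
    (by
      ext c
      by_cases hc : c = b
      · simp [hc, hab]
      · simp [hc])
    (by
      ext c
      by_cases hc : c = b
      · simp [hc, hab]
      · simp [hc])

theorem transvection_apply {a b : α} (hab : a ≠ b) (k : ℕ) :
    transvection hab k (of b) = of a ^ k * of b := by
  simp [transvection]

theorem per_sum {H K : Subgroup G} (y : G) :
    per ((G ⧸ H) ⊕ (G ⧸ K)) y = Sum.inl '' per (G ⧸ H) y ∪ Sum.inr '' per (G ⧸ K) y := by
  ext x
  rcases x with x | x <;> simp [per]

theorem per_smul {X : Type*} [MulAction G X] {y : G} {x : X} (hx : x ∈ per X y) :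
    y • x ∈ per X y := by
  obtain ⟨m, hm, h⟩ := hx
  refine ⟨m, hm, ?_⟩
  rw [smul_smul, (Commute.pow_self y m).eq, mul_smul, h]

theorem per_inv_pow_smul {X : Type*} [MulAction G X] {y : G} {x : X} (hx : x ∈ per X y) (k : ℕ) :
    (y ^ k)⁻¹ • x ∈ per X y := by
  obtain ⟨m, hm, h⟩ := hx
  refine ⟨m, hm, ?_⟩
  rw [smul_smul, ((Commute.refl y).pow_pow m k).inv_right.eq, mul_smul, h]

/-- `G ⧸ H` is transitive, so a nonempty invariant subset is everything. -/
theorem index_ne_zero_of_finite_invariant {H : Subgroup G} {C : Set (G ⧸ H)} (hC : C.Finite)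
    (hne : C.Nonempty) (h : ∀ g : G, ∀ x ∈ C, g • x ∈ C) : H.index ≠ 0 := by
  obtain ⟨x, hx⟩ := hne
  have : C = Set.univ := by
    rw [Set.eq_univ_iff_forall]
    intro y
    obtain ⟨g, rfl⟩ := MulAction.exists_smul_eq G x y
    exact h g x hx
  rw [this, Set.finite_univ_iff] at hC
  exact (Subgroup.index_ne_zero_iff_finite).2 hC

/-- For finitely generated `H` and `K` of infinite index some basis of the free group contains an
element with no nontrivial power conjugate into `H` or `K`. Minimise, over all elements `a` of all
bases, the number of `a`-periodic points of `G ⧸ H ⊔ G ⧸ K`. For `b` in the same basis and `k`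
large `a ^ k * b` has at most as many periodic points as `a`, hence the same ones; so they are
permuted by `a` and by every `b`, and a finite invariant set is empty. -/
theorem exists_basis [Nonempty α] (e₀ : FreeGroup α ≃* G) {H K : Subgroup G} (hH : H.FG)
    (hK : K.FG) (hHi : H.index = 0) (hKi : K.index = 0) :
    ∃ (e : FreeGroup α ≃* G) (a : α), ∀ (g : G) (m : ℕ), 0 < m →
      g * e (of a) ^ m * g⁻¹ ∉ H ∧ g * e (of a) ^ m * g⁻¹ ∉ K := by
  let X := (G ⧸ H) ⊕ (G ⧸ K)
  have hfin : ∀ (e : FreeGroup α ≃* G) (a : α), (per X (e (of a))).Finite := by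
    intro e a
    rw [per_sum]
    exact ((per_finite e hH a).image _).union ((per_finite e hK a).image _)
  obtain ⟨⟨e, a⟩, hmin⟩ : ∃ p : (FreeGroup α ≃* G) × α, ∀ p' : (FreeGroup α ≃* G) × α,
      (per X (p.1 (of p.2))).ncard ≤ (per X (p'.1 (of p'.2))).ncard := by
    have : Nonempty ((FreeGroup α ≃* G) × α) := ⟨(e₀, Classical.arbitrary α)⟩
    exact ⟨_, fun p' => Function.argmin_le
      (fun p : (FreeGroup α ≃* G) × α => (per X (p.1 (of p.2))).ncard) p'⟩
  set C := per X (e (of a)) with hCdef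
  have hinv : ∀ b : α, ∀ x ∈ C, e (of b) • x ∈ C := by
    intro b x hx
    by_cases hab : a = b
    · subst hab; exact per_smul hx
    obtain ⟨k₁, hk₁⟩ := per_subset e hH a b
    obtain ⟨k₂, hk₂⟩ := per_subset e hK a b
    set k := max k₁ k₂
    have hsub : per X (e (of a ^ k * of b)) ⊆ C := by
      rw [hCdef, per_sum, per_sum]
      exact Set.union_subset_union (Set.image_mono (hk₁ _ (le_max_left _ _)))
        (Set.image_mono (hk₂ _ (le_max_right _ _)))
    have hEq : per X (e (of a ^ k * of b)) = C := by
      refine Set.eq_of_subset_of_ncard_le hsub ?_ (hfin e a)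
      have := hmin ((transvection hab k).trans e, b)
      simpa [transvection_apply] using this
    have h1 : e (of a ^ k * of b) • x ∈ C := by
      rw [← hEq] at hx ⊢; exact per_smul hx
    have h2 := per_inv_pow_smul h1 k
    rwa [_root_.map_mul, map_pow, mul_smul, inv_smul_smul] at h2
  have hinv' : ∀ g : G, ∀ x ∈ C, g • x ∈ C := by
    intro g
    obtain ⟨g, rfl⟩ := e.surjective g
    exact smul_mem_of_generators e (hfin e a) hinv g
  refine ⟨e, a, fun g m hm => ⟨fun hg => ?_, fun hg => ?_⟩⟩
  · refine index_ne_zero_of_finite_invariant (C := Sum.inl ⁻¹' C) ?_ ?_ ?_ hHi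
    · exact (hfin e a).preimage Sum.inl_injective.injOn
    · exact ⟨QuotientGroup.mk g⁻¹, m, hm, congrArg Sum.inl ((coset_fix g _).2 hg)⟩
    · intro g x hx; exact hinv' g _ hx
  · refine index_ne_zero_of_finite_invariant (C := Sum.inr ⁻¹' C) ?_ ?_ ?_ hKi
    · exact (hfin e a).preimage Sum.inr_injective.injOn
    · exact ⟨QuotientGroup.mk g⁻¹, m, hm, congrArg Sum.inr ((coset_fix g _).2 hg)⟩
    · intro g x hx; exact hinv' g _ hx

end Basis
end GJ

/-! ### Bounded runs and the coding homomorphism -/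

namespace GJ

open FreeGroup

section NoRun

variable {α : Type*}

/-- The word `w` contains neither `t ^ V` nor `t ^ (-V)` as a subword. -/
def NoRun (t : α) (V : ℕ) (w : List (α × Bool)) : Prop :=
  ∀ s, ¬ List.replicate V (t, s) <:+: w

theorem NoRun.sub {t : α} {V : ℕ} {w w' : List (α × Bool)} (h : NoRun t V w)
    (hw : w' <:+: w) : NoRun t V w' := fun s hs => h s (hs.trans hw)

theorem NoRun.mono {t : α} {V W : ℕ} {w : List (α × Bool)} (h : NoRun t V w)
    (hw : V ≤ W) : NoRun t W w := fun s hs => h s (by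
  refine List.IsInfix.trans ?_ hs
  obtain ⟨k, rfl⟩ := Nat.exists_eq_add_of_le hw
  rw [List.replicate_add]
  exact (List.prefix_append _ _).isInfix)

theorem NoRun.append {t : α} {V W : ℕ} {A B : List (α × Bool)} (hA : NoRun t V A)
    (hB : NoRun t W B) : NoRun t (V + W) (A ++ B) := by
  rintro s ⟨X, Y, h⟩
  have h1 : (X ++ List.replicate V (t, s)) ++ (List.replicate W (t, s) ++ Y) = A ++ B := by
    rw [← h, List.replicate_add]; simp only [List.append_assoc]
  rw [List.append_eq_append_iff] at h1
  rcases h1 with ⟨D, hD, -⟩ | ⟨D, -, hD⟩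
  · exact hA s ⟨X, D, by rw [hD]⟩
  · exact hB s ⟨D, Y, by rw [hD]; simp⟩

theorem NoRun.invRev {t : α} {V : ℕ} {A : List (α × Bool)} (hA : NoRun t V A) :
    NoRun t V (FreeGroup.invRev A) := by
  rintro s ⟨X, Y, h⟩
  refine hA (!s) ⟨FreeGroup.invRev Y, FreeGroup.invRev X, ?_⟩
  have h2 := congrArg FreeGroup.invRev h
  rw [FreeGroup.invRev_invRev, invRev_append, invRev_append] at h2
  rw [← h2]
  simp [FreeGroup.invRev]

variable [DecidableEq α]

theorem NoRun.mul {t : α} {V W : ℕ} {g h : FreeGroup α} (hg : NoRun t V g.toWord)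
    (hh : NoRun t W h.toWord) : NoRun t (V + W) (g * h).toWord := by
  obtain ⟨A, C, B, h1, h2, h3⟩ := mul_word g h
  rw [h3]
  exact (hg.sub ⟨[], C, by simp [h1]⟩).append (hh.sub ⟨FreeGroup.invRev C, [], by simp [h2]⟩)

theorem NoRun.inv {t : α} {V : ℕ} {g : FreeGroup α} (hg : NoRun t V g.toWord) :
    NoRun t V (g⁻¹).toWord := by
  rw [toWord_inv]; exact hg.invRev

/-- If no nontrivial power of `t` is conjugate into the finitely generated subgroup `H`, then the
runs of `t` in elements of `H` have bounded length: a long run would visit a vertex of the core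
twice. -/
theorem exists_noRun {H : Subgroup (FreeGroup α)} (hH : H.FG) {t : α}
    (ht : ∀ (g : FreeGroup α) (m : ℕ), 0 < m → g * of t ^ m * g⁻¹ ∉ H) :
    ∃ V, ∀ h ∈ H, NoRun t V h.toWord := by
  obtain ⟨P, hP⟩ := exists_finite_cosets hH
  refine ⟨P.card + 1, fun h hh s ⟨A, B, hAB⟩ => ?_⟩
  have key : ∀ i : Fin (P.card + 1), ∃ h' ∈ H, ∃ q ∈ P,
      mk A * mk [(t, s)] ^ (i : ℕ) = h' * q := by
    intro i
    have hsplit : h.toWord = (A ++ List.replicate (i : ℕ) (t, s)) ++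
        (List.replicate (P.card + 1 - i) (t, s) ++ B) := by
      rw [← hAB]
      simp only [List.append_assoc]
      rw [← List.append_assoc (List.replicate _ _), List.replicate_append_replicate]
      congr 3; omega
    obtain ⟨h', hh', q, hq, he⟩ := hP h hh _ _ hsplit
    refine ⟨h', hh', q, hq, ?_⟩
    rw [← he, mk_app, pow_mk]; simp
  choose h' hh' q hq he using key
  obtain ⟨i, j, hij, hqq⟩ : ∃ i j, i ≠ j ∧ q i = q j := by
    by_contra! hcon
    have := Finset.card_le_card_of_injOn q (s := Finset.univ) (t := P) (fun i _ => hq i)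
      (fun i _ j _ h => by by_contra h2; exact hcon i j h2 h)
    simp at this
  wlog hlt : j < i generalizing i j
  · exact this j i hij.symm hqq.symm (lt_of_le_of_ne (not_lt.1 hlt) hij)
  have hlt' : (j : ℕ) < i := hlt
  have h3 : mk A * mk [(t, s)] ^ ((i : ℕ) - j) * (mk A)⁻¹ ∈ H := by
    have : mk A * mk [(t, s)] ^ ((i : ℕ) - j) * (mk A)⁻¹ = h' i * (h' j)⁻¹ := by
      have h1 : h' i = mk A * mk [(t, s)] ^ (i : ℕ) * (q i)⁻¹ := by rw [he i]; group
      have h2 : h' j = mk A * mk [(t, s)] ^ (j : ℕ) * (q i)⁻¹ := by rw [he j, hqq]; group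
      rw [h1, h2, pow_sub _ hlt'.le]; group
    rw [this]; exact mul_mem (hh' i) (inv_mem (hh' j))
  cases s with
  | true => exact ht (mk A) _ (by omega) h3
  | false =>
    refine ht (mk A) ((i : ℕ) - j) (by omega) ?_
    have h4 : (mk [(t, false)] : FreeGroup α) = (of t)⁻¹ := by
      rw [of, inv_mk]; rfl
    rw [h4] at h3
    have h5 := inv_mem h3
    simpa [mul_assoc] using h5

end NoRun

section Code

/-- The exponent `±1` encoded by a sign. -/
def sgn (s : Bool) : ℤ := if s then 1 else -1

/-- The reduced word of `i ^ e`. For `e = 0` it is empty, whatever sign is chosen. -/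
def zw {β : Type*} (i : β) (e : ℤ) : List (β × Bool) :=
  List.replicate e.natAbs (i, decide (0 ≤ e))

theorem zw_zero {β : Type*} (i : β) : zw i 0 = [] := rfl

theorem mk_zw {β : Type*} (i : β) (e : ℤ) : mk (zw i e) = of i ^ e := by
  have h1 : ∀ n : ℕ, mk (List.replicate n (i, true)) = of i ^ n := fun n => by
    rw [of, pow_mk]; simp
  have h2 : ∀ n : ℕ, mk (List.replicate n (i, false)) = (of i ^ n)⁻¹ := fun n => by
    rw [← h1, inv_mk]; simp [invRev]
  rcases le_or_gt 0 e with h | h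
  · rw [zw, decide_eq_true h, h1, ← zpow_natCast, Int.natAbs_of_nonneg h]
  · rw [zw, decide_eq_false (not_le.2 h), h2, ← zpow_natCast, ← zpow_neg,
      Int.ofNat_natAbs_of_nonpos h.le, neg_neg]

theorem zw_ne_nil {β : Type*} (i : β) {e : ℤ} (he : e ≠ 0) : zw i e ≠ [] := by
  simp [zw, List.replicate_eq_nil_iff, he]

theorem fst_of_mem_zw {β : Type*} {i : β} {e : ℤ} {x : β × Bool} (h : x ∈ zw i e) :
    x.1 = i := by
  rw [List.eq_of_mem_replicate h]

theorem isReduced_zw {β : Type*} (i : β) (e : ℤ) : IsReduced (zw i e) :=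
  List.isChain_replicate_of_rel _ (by simp)

theorem cons_zw {β : Type*} {x : β × Bool} {i : β} {d : ℤ} (hx : x.1 = i)
    (h : IsReduced (x :: zw i d)) : x :: zw i d = zw i (d + sgn x.2) := by
  obtain ⟨a, s⟩ := x
  simp only at hx
  subst hx
  by_cases hd : d = 0
  · subst hd; cases s <;> simp [zw, sgn]
  have hs : s = decide (0 ≤ d) := by
    obtain ⟨n, hn⟩ : ∃ n, d.natAbs = n + 1 := ⟨d.natAbs - 1, by omega⟩
    rw [zw, hn, List.replicate_succ, isReduced_cons_cons] at h
    exact h.1 rfl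
  have h1 : (d + sgn s).natAbs = d.natAbs + 1 ∧ (0 ≤ d + sgn s ↔ 0 ≤ d) := by
    rw [hs]
    by_cases h0 : 0 ≤ d <;> simp [sgn, h0] <;> omega
  rw [zw, zw, h1.1, List.replicate_succ, decide_eq_decide.2 h1.2, hs]

variable {α : Type*}

theorem NoRun.natAbs_lt {t : α} {V : ℕ} {d : ℤ} (h : NoRun t V (zw t d)) : d.natAbs < V := by
  by_contra! hV
  refine h (decide (0 ≤ d)) ?_
  obtain ⟨k, hk⟩ := Nat.exists_eq_add_of_le hV
  rw [zw, hk, List.replicate_add]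
  exact (List.prefix_append _ _).isInfix

/-- The signed index of a letter. -/
def kap (ι : α → ℕ) (x : α × Bool) : ℤ := sgn x.2 * ι x.1

theorem kap_ne_zero {ι : α → ℕ} (hι : ∀ a, 1 ≤ ι a) (x : α × Bool) : kap ι x ≠ 0 := by
  have := hι x.1
  obtain ⟨a, s⟩ := x
  cases s <;> simp [kap, sgn] <;> simp at this <;> omega

/-- The `T`-exponent between consecutive `Y`-syllables does not vanish: `M` exceeds the length
of the runs of `t`, so `t ^ d` can only compensate `T ^ (M * kap x₀ + M * kap x)` when
`kap x₀ = - kap x` and `d = 0`, which is excluded in a reduced word. -/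
theorem exponent_ne_zero {t : α} {ι : α → ℕ} {M : ℕ} (hι : ∀ a, 1 ≤ ι a)
    (hinj : Function.Injective ι) {x₀ x : α × Bool} {d : ℤ} {w : List (α × Bool)}
    (hr : IsReduced (x₀ :: (zw t d ++ x :: w))) (hd : d.natAbs < M) :
    M * kap ι x₀ + d + M * kap ι x ≠ 0 := by
  intro h
  have h1 : (M : ℤ) * (kap ι x₀ + kap ι x) = -d := by linarith
  have h2 : kap ι x₀ + kap ι x = 0 := by
    by_contra h2
    have h3 : M * (kap ι x₀ + kap ι x).natAbs = d.natAbs := by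
      rw [← Int.natAbs_neg d, ← h1, Int.natAbs_mul]; rfl
    have h4 : 1 ≤ (kap ι x₀ + kap ι x).natAbs := by omega
    nlinarith
  have hd0 : d = 0 := by rw [h2] at h1; linarith
  rw [hd0, zw_zero, List.nil_append, isReduced_cons_cons] at hr
  have h5 : x₀.1 = x.1 := by
    apply hinj
    have := hι x.1
    have := hι x₀.1
    obtain ⟨a, s⟩ := x
    obtain ⟨a₀, s₀⟩ := x₀
    cases s <;> cases s₀ <;> simp [kap, sgn] at * <;> omega
  have h6 := hr.1 h5
  have h7 : x₀ = x := Prod.ext h5 h6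
  rw [h7] at h2
  exact kap_ne_zero hι x (by linarith)

variable [DecidableEq α]

/-- A reduced word starts with a power of `t`, which is the whole word or is followed by a letter
other than `t`. -/
theorem parse (t : α) {w : List (α × Bool)} (h : IsReduced w) :
    (∃ d, w = zw t d) ∨ ∃ d x w', x.1 ≠ t ∧ w = zw t d ++ x :: w' := by
  induction w with
  | nil => exact Or.inl ⟨0, rfl⟩
  | cons x w ih =>
    by_cases hx : x.1 = t
    · rcases ih (red_right (A := [x]) h) with ⟨d, rfl⟩ | ⟨d, y, w', hy, rfl⟩
      · exact Or.inl ⟨_, cons_zw hx h⟩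
      · refine Or.inr ⟨d + sgn x.2, y, w', hy, ?_⟩
        rw [← cons_zw hx (red_left (B := y :: w') h)]; simp
    · exact Or.inr ⟨0, x, w, hx, rfl⟩

/-- The number of letters of `w` other than `t`. -/
def cnt (t : α) (w : List (α × Bool)) : ℕ := w.countP fun x => decide (x.1 ≠ t)

theorem cnt_zw (t : α) (d : ℤ) : cnt t (zw t d) = 0 := by
  simp only [cnt, List.countP_eq_zero]
  intro x hx
  simp [fst_of_mem_zw hx]

theorem cnt_append (t : α) (A B : List (α × Bool)) : cnt t (A ++ B) = cnt t A + cnt t B :=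
  List.countP_append

theorem cnt_cons {t : α} {x : α × Bool} (hx : x.1 ≠ t) (B : List (α × Bool)) :
    cnt t (x :: B) = cnt t B + 1 := by
  simp [cnt, hx]

/-- Without long runs of `t`, a long word has many letters other than `t`. -/
theorem length_le_cnt {t : α} {V : ℕ} : ∀ (n : ℕ) (w : List (α × Bool)), w.length = n →
    IsReduced w → NoRun t V w → w.length ≤ V * (cnt t w + 1) := by
  intro n
  induction n using Nat.strong_induction_on with
  | _ n ih =>
    intro w hn hr hV
    rcases parse t hr with ⟨d, rfl⟩ | ⟨d, x, w', hx, rfl⟩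
    · have := hV.natAbs_lt
      rw [cnt_zw]
      simp [zw]; omega
    · have h1 := (hV.sub (List.prefix_append (zw t d) (x :: w')).isInfix).natAbs_lt
      have h2 := ih w'.length (by rw [← hn]; simp; omega) w' rfl
        (red_sub hr ⟨zw t d ++ [x], [], by simp⟩) (hV.sub ⟨zw t d ++ [x], [], by simp⟩)
      rw [cnt_append, cnt_zw, cnt_cons hx]
      simp only [List.length_append, List.length_cons, zw, List.length_replicate]
      nlinarith

theorem exists_split {t : α} : ∀ (N : ℕ) (w : List (α × Bool)), N < cnt t w →
    ∃ u x v, w = u ++ x :: v ∧ x.1 ≠ t ∧ cnt t u = N := by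
  intro N w
  induction w generalizing N with
  | nil => intro h; simp [cnt] at h
  | cons y w ih =>
    intro h
    by_cases hy : y.1 = t
    · have hc : ∀ z, cnt t (y :: z) = cnt t z := fun z => by simp [cnt, hy]
      rw [hc] at h
      obtain ⟨u, x, v, rfl, hx, hu⟩ := ih N h
      exact ⟨y :: u, x, v, by simp, hx, by rw [hc, hu]⟩
    · rw [cnt_cons hy] at h
      cases N with
      | zero => exact ⟨[], y, w, by simp, hy, by simp [cnt]⟩
      | succ N =>
        obtain ⟨u, x, v, rfl, hx, hu⟩ := ih N (by omega)
        exact ⟨y :: u, x, v, by simp, hx, by rw [cnt_cons hy, hu]⟩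

variable (t : α) (ι : α → ℕ) (M : ℕ)

/-- The homomorphism `t ↦ T`, `a ↦ T ^ (M * ι a) * Y ^ ι a * T ^ (M * ι a)` to the free group on
`T = of 0` and `Y = of 1`. The exponent of `Y` records the letter. -/
def eps : FreeGroup α →* FreeGroup (Fin 2) :=
  FreeGroup.lift fun a => if a = t then of 0 else
    of 0 ^ ((M : ℤ) * ι a) * of 1 ^ (ι a : ℤ) * of 0 ^ ((M : ℤ) * ι a)

/-- The word of `T ^ c * eps w * T ^ z`, written syllable by syllable; it is reduced as soon as
`w` is reduced and has no run of `t` of length `M`. -/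
def code : ℤ → List (α × Bool) → ℤ → List (Fin 2 × Bool)
  | c, [], z => zw 0 (c + z)
  | c, x :: w, z => if x.1 = t then code (c + sgn x.2) w z else
      zw 0 (c + M * kap ι x) ++ (zw 1 (kap ι x) ++ code (M * kap ι x) w z)

theorem eps_t (s : Bool) : eps t ι M (mk [(t, s)]) = of 0 ^ sgn s := by
  cases s <;> simp [eps, sgn]

theorem eps_letter {x : α × Bool} (hx : x.1 ≠ t) : eps t ι M (mk [x]) =
    of 0 ^ (M * kap ι x) * of 1 ^ (kap ι x) * of 0 ^ (M * kap ι x) := by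
  obtain ⟨a, s⟩ := x
  simp only [ne_eq] at hx
  cases s
  · simp [eps, kap, sgn, hx, mul_assoc]
  · simp [eps, kap, sgn, hx]

theorem mk_code (c : ℤ) (w : List (α × Bool)) (z : ℤ) :
    mk (code t ι M c w z) = of 0 ^ c * eps t ι M (mk w) * of 0 ^ z := by
  induction w generalizing c with
  | nil => rw [code, mk_zw, ← one_eq_mk, _root_.map_one, zpow_add]; group
  | cons x w ih =>
    have hxw : mk (x :: w) = mk [x] * mk w := by rw [← mk_app]; rfl
    rw [code, hxw, _root_.map_mul]
    split_ifs with hx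
    · rw [ih]
      obtain ⟨a, s⟩ := x
      simp only at hx
      subst hx
      rw [eps_t, zpow_add]; group
    · rw [eps_letter t ι M hx, mk_app, mk_app, mk_zw, mk_zw, ih, zpow_add]
      simp only [mul_assoc]

theorem code_zw (c d : ℤ) (w : List (α × Bool)) (z : ℤ) :
    code t ι M c (zw t d ++ w) z = code t ι M (c + d) w z := by
  have key : ∀ (n : ℕ) (s : Bool) (c : ℤ), code t ι M c (List.replicate n (t, s) ++ w) z =
      code t ι M (c + n * sgn s) w z := by
    intro n s
    induction n with
    | zero => intro c; simp
    | succ n ih =>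
      intro c
      rw [List.replicate_succ, List.cons_append, code, if_pos rfl, ih]
      congr 1; push_cast; ring
  rw [zw, key]
  congr 1
  by_cases h : 0 ≤ d
  · simp [sgn, h, abs_of_nonneg h]
  · simp [sgn, h, abs_of_neg (not_le.1 h)]

theorem code_letter {x : α × Bool} (hx : x.1 ≠ t) (c : ℤ) (w : List (α × Bool)) (z : ℤ) :
    code t ι M c (x :: w) z =
      zw 0 (c + M * kap ι x) ++ (zw 1 (kap ι x) ++ code t ι M (M * kap ι x) w z) := by
  rw [code, if_neg hx]

/-- A code can be cut in front of the `Y`-syllable of any letter. -/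
theorem code_cut {x : α × Bool} (hx : x.1 ≠ t) (c : ℤ) (w₁ w₂ : List (α × Bool)) (z : ℤ) :
    code t ι M c (w₁ ++ x :: w₂) z = code t ι M c w₁ (M * kap ι x) ++
      (zw 1 (kap ι x) ++ code t ι M (M * kap ι x) w₂ z) := by
  induction w₁ generalizing c with
  | nil => simp [code, hx]
  | cons y w ih =>
    rw [List.cons_append, code, code]
    split_ifs with hy
    · rw [ih]
    · rw [ih]; simp

variable {t ι M}

theorem cnt_le_length_code (hι : ∀ a, 1 ≤ ι a) (c : ℤ) (w : List (α × Bool)) (z : ℤ) :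
    cnt t w ≤ (code t ι M c w z).length := by
  induction w generalizing c with
  | nil => simp [cnt]
  | cons x w ih =>
    by_cases hx : x.1 = t
    · have hc : cnt t (x :: w) = cnt t w := by simp [cnt, hx]
      rw [code, if_pos hx, hc]; exact ih _
    · rw [code_letter t ι M hx, cnt_cons hx]
      have h1 := ih (M * kap ι x)
      have h2 := List.length_pos_iff.2 (zw_ne_nil (1 : Fin 2) (kap_ne_zero hι x))
      simp only [List.length_append]
      omega

theorem isReduced_syllables {e k : ℤ} (hk : k ≠ 0) {B : List (Fin 2 × Bool)} (hB : IsReduced B)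
    (hB0 : ∀ y ∈ B.head?, y.1 = 0) : IsReduced (zw 0 e ++ (zw 1 k ++ B)) := by
  have h1 : IsReduced (zw 1 k ++ B) := by
    refine List.isChain_append.2 ⟨isReduced_zw _ _, hB, fun x hx y hy hxy => ?_⟩
    rw [fst_of_mem_zw (List.mem_of_getLast? hx), hB0 y hy] at hxy
    exact absurd hxy (by simp)
  refine List.isChain_append.2 ⟨isReduced_zw _ _, h1, fun x hx y hy hxy => ?_⟩
  rw [List.head?_append_of_ne_nil _ (zw_ne_nil _ hk)] at hy
  rw [fst_of_mem_zw (List.mem_of_getLast? hx), fst_of_mem_zw (List.mem_of_head? hy)] at hxy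
  exact absurd hxy (by simp)

/-- Reducedness of the part of a code that follows the `Y`-syllable of `x₀`; the head condition says
that this syllable does not continue. -/
theorem isReduced_code_aux (hι : ∀ a, 1 ≤ ι a) (hinj : Function.Injective ι) :
    ∀ (n : ℕ) (w : List (α × Bool)) (x₀ : α × Bool), w.length = n →
      IsReduced (x₀ :: w) → NoRun t M w →
      IsReduced (code t ι M (M * kap ι x₀) w 0) ∧
        ∀ y ∈ (code t ι M (M * kap ι x₀) w 0).head?, y.1 = 0 := by
  intro n
  induction n using Nat.strong_induction_on with
  | _ n ih =>
    intro w x₀ hn hr hV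
    rcases parse t (red_right (A := [x₀]) hr) with ⟨d, rfl⟩ | ⟨d, x, w', hx, rfl⟩
    · rw [← List.append_nil (zw t d), code_zw, code]
      exact ⟨isReduced_zw _ _, fun y hy => fst_of_mem_zw (List.mem_of_head? hy)⟩
    · have h1 := (hV.sub (List.prefix_append (zw t d) (x :: w')).isInfix).natAbs_lt
      have he := exponent_ne_zero hι hinj hr h1
      have hr' : IsReduced (x :: w') := red_sub hr ⟨x₀ :: zw t d, [], by simp⟩
      obtain ⟨h2, h3⟩ := ih w'.length (by rw [← hn]; simp; omega) w' x rfl hr'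
        (hV.sub ⟨zw t d ++ [x], [], by simp⟩)
      rw [code_zw, code_letter t ι M hx]
      refine ⟨isReduced_syllables (kap_ne_zero hι x) h2 h3, fun y hy => ?_⟩
      rw [List.head?_append_of_ne_nil _ (zw_ne_nil _ he)] at hy
      exact fst_of_mem_zw (List.mem_of_head? hy)

theorem isReduced_code_letter (hι : ∀ a, 1 ≤ ι a) (hinj : Function.Injective ι)
    {w : List (α × Bool)} {x₀ : α × Bool} (hr : IsReduced (x₀ :: w)) (hV : NoRun t M w) :
    IsReduced (code t ι M (M * kap ι x₀) w 0) ∧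
      ∀ y ∈ (code t ι M (M * kap ι x₀) w 0).head?, y.1 = 0 :=
  isReduced_code_aux hι hinj _ w x₀ rfl hr hV

theorem isReduced_code (hι : ∀ a, 1 ≤ ι a) (hinj : Function.Injective ι)
    {w : List (α × Bool)} (hr : IsReduced w) (hV : NoRun t M w) (c : ℤ) :
    IsReduced (code t ι M c w 0) := by
  rcases parse t hr with ⟨d, rfl⟩ | ⟨d, x, w', hx, rfl⟩
  · rw [← List.append_nil (zw t d), code_zw, code]
    exact isReduced_zw _ _
  · obtain ⟨h2, h3⟩ := isReduced_code_letter hι hinj (red_right hr)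
      (hV.sub ⟨zw t d ++ [x], [], by simp⟩)
    rw [code_zw, code_letter t ι M hx]
    exact isReduced_syllables (kap_ne_zero hι x) h2 h3

theorem toWord_eps (hι : ∀ a, 1 ≤ ι a) (hinj : Function.Injective ι) {g : FreeGroup α}
    (hV : NoRun t M g.toWord) : (eps t ι M g).toWord = code t ι M 0 g.toWord 0 := by
  rw [← toWord_mk_of (isReduced_code hι hinj isReduced_toWord hV 0), mk_code, mk_toWord]
  simp

/-- `eps` kills no nontrivial element without long runs of `t`. -/
theorem eq_one_of_eps (hι : ∀ a, 1 ≤ ι a) (hinj : Function.Injective ι) {g : FreeGroup α}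
    (hV : NoRun t M g.toWord) (h : eps t ι M g = 1) : g = 1 := by
  have h1 := toWord_eps hι hinj hV
  rw [h, toWord_one] at h1
  rcases parse t (isReduced_toWord (x := g)) with ⟨d, hd⟩ | ⟨d, x, w', hx, hd⟩
  · rw [hd, ← List.append_nil (zw t d), code_zw, code] at h1
    have : d = 0 := by
      by_contra h0
      exact zw_ne_nil (0 : Fin 2) (by simpa using h0) h1.symm
    rw [this, zw_zero] at hd
    exact toWord_eq_nil_iff.1 hd
  · rw [hd, code_zw, code_letter t ι M hx] at h1
    have := congrArg List.length h1
    have h2 := List.length_pos_iff.2 (zw_ne_nil (1 : Fin 2) (kap_ne_zero hι x))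
    simp at this
    omega

/-- The exponent of a complete `Y`-syllable can be read off from a word. -/
theorem eq_of_run {k k' : ℤ} (hk : k ≠ 0) (hk' : k' ≠ 0) {B B' : List (Fin 2 × Bool)}
    (hB : ∀ y ∈ B.head?, y.1 = 0) (hB' : ∀ y ∈ B'.head?, y.1 = 0)
    (h : zw 1 k ++ B = zw 1 k' ++ B') : k = k' := by
  have main : ∀ {k k' : ℤ} {B B' : List (Fin 2 × Bool)}, k ≠ 0 → k' ≠ 0 →
      (∀ y ∈ B.head?, y.1 = 0) → zw 1 k ++ B = zw 1 k' ++ B' → k'.natAbs ≤ k.natAbs := by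
    intro k k' B B' hk hk' hB h
    rw [List.append_eq_append_iff] at h
    rcases h with ⟨D, hD, hB2⟩ | ⟨D, hD, -⟩
    · cases D with
      | nil => simpa [zw] using (congrArg List.length hD).le
      | cons y D =>
        have h1 : y.1 = 1 := fst_of_mem_zw (e := k') (by rw [hD]; simp)
        have h2 := hB y (by rw [hB2]; simp)
        rw [h1] at h2; exact absurd h2 (by simp)
    · have := congrArg List.length hD
      simp [zw] at this; omega
  have h1 := main hk hk' hB h
  have h2 := main hk' hk hB' h.symm
  obtain ⟨n, hn⟩ : ∃ n, k.natAbs = n + 1 := ⟨k.natAbs - 1, by omega⟩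
  obtain ⟨n', hn'⟩ : ∃ n', k'.natAbs = n' + 1 := ⟨k'.natAbs - 1, by omega⟩
  rw [zw, zw, hn, hn', List.replicate_succ, List.replicate_succ] at h
  simp only [List.cons_append, List.cons.injEq, Prod.mk.injEq, true_and] at h
  have h3 := decide_eq_decide.1 h.1
  omega

/-- Decoding: every complete `Y`-syllable `Y ^ k` of the code of `w` comes from a letter of `w`, so
the part of the code up to that syllable is, up to `T ^ (M * k)`, the image of a prefix of `w`. -/
theorem decode (hι : ∀ a, 1 ≤ ι a) (hinj : Function.Injective ι) {k : ℤ} (hk : k ≠ 0)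
    {B : List (Fin 2 × Bool)} (hB : ∀ y ∈ B.head?, y.1 = 0) (w : List (α × Bool)) :
    ∀ (c : ℤ) (A : List (Fin 2 × Bool)), IsReduced w → NoRun t M w →
      (∀ y ∈ A.getLast?, y.1 = 0) → code t ι M c w 0 = A ++ (zw 1 k ++ B) →
      ∃ p v, w = p ++ v ∧
        mk (A ++ zw 1 k) = of 0 ^ c * eps t ι M (mk p) * of 0 ^ (-(M * k)) := by
  induction w with
  | nil =>
    intro c A _ _ _ h
    obtain ⟨y, hy⟩ := List.exists_mem_of_ne_nil _ (zw_ne_nil (1 : Fin 2) hk)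
    have h1 : y ∈ code t ι M c [] 0 := by rw [h]; simp [hy]
    rw [code] at h1
    have h2 := fst_of_mem_zw hy
    rw [fst_of_mem_zw h1] at h2
    exact absurd h2 (by simp)
  | cons x w ih =>
    intro c A hr hV hA h
    have hr' := red_right (A := [x]) hr
    have hV' : NoRun t M w := hV.sub ⟨[x], [], by simp⟩
    by_cases hx : x.1 = t
    · rw [code, if_pos hx] at h
      obtain ⟨p, v, rfl, hp⟩ := ih _ A hr' hV' hA h
      refine ⟨x :: p, v, rfl, ?_⟩
      have hxp : mk (x :: p) = mk [x] * mk p := by rw [← mk_app]; rfl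
      obtain ⟨a, s⟩ := x
      simp only at hx
      subst hx
      rw [hp, hxp, _root_.map_mul, eps_t, zpow_add]
      simp only [mul_assoc]
    · obtain ⟨h2, h3⟩ := isReduced_code_letter hι hinj hr hV'
      rw [code_letter t ι M hx] at h
      have hx1 : of 0 ^ c * eps t ι M (mk [x]) * of 0 ^ (-(M * kap ι x)) =
          of 0 ^ (c + M * kap ι x) * of 1 ^ kap ι x := by
        rw [eps_letter t ι M hx, zpow_add, zpow_neg]; group
      have hkx := kap_ne_zero hι x
      have sub : ∀ D, (∀ y ∈ D.getLast?, y.1 = 0) → A = zw 0 (c + M * kap ι x) ++ D →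
          zw 1 (kap ι x) ++ code t ι M (M * kap ι x) w 0 = D ++ (zw 1 k ++ B) →
          ∃ p v, x :: w = p ++ v ∧
            mk (A ++ zw 1 k) = of 0 ^ c * eps t ι M (mk p) * of 0 ^ (-(M * k)) := by
        intro D hDl hD1 hD2
        by_cases hD0 : D = []
        · subst hD0
          have hkk := eq_of_run hkx hk h3 hB hD2
          refine ⟨[x], w, rfl, ?_⟩
          rw [← hkk, hx1, hD1, mk_app, mk_app, mk_zw, mk_zw, ← one_eq_mk, mul_one]
        · rw [List.append_eq_append_iff] at hD2
          rcases hD2 with ⟨D', hD3, hD4⟩ | ⟨D', hD3, -⟩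
          · obtain ⟨p, v, rfl, hp⟩ := ih _ D' hr' hV' (by
              intro y hy
              refine hDl y ?_
              rw [hD3, List.getLast?_append, Option.mem_def.1 hy]; rfl) hD4
            refine ⟨x :: p, v, rfl, ?_⟩
            have hxp : mk (x :: p) = mk [x] * mk p := by rw [← mk_app]; rfl
            rw [hD1, hD3, List.append_assoc, List.append_assoc, mk_app, mk_app, hp, mk_zw, mk_zw,
              hxp, _root_.map_mul, eps_letter t ι M hx, zpow_add]
            simp only [mul_assoc]
          · exfalso
            obtain ⟨y, hy⟩ : ∃ y, D.getLast? = some y := ⟨_, List.getLast?_eq_some_getLast hD0⟩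
            have h4 := hDl y hy
            rw [fst_of_mem_zw (i := 1) (e := kap ι x)
              (by rw [hD3]; exact List.mem_append_left _ (List.mem_of_getLast? hy))] at h4
            exact absurd h4 (by simp)
      rw [List.append_eq_append_iff] at h
      rcases h with ⟨D, hD1, hD2⟩ | ⟨D, hD1, hD2⟩
      · by_cases hD0 : D = []
        · exact sub D (by simp [hD0]) hD1 hD2
        · refine sub D (fun y hy => hA y ?_) hD1 hD2
          rw [hD1, List.getLast?_append, Option.mem_def.1 hy]; rfl
      · cases D with
        | nil => exact sub [] (by simp) (by simpa using hD1.symm) (by simpa using hD2.symm)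
        | cons y D =>
          exfalso
          have h4 : y.1 = 0 := fst_of_mem_zw (e := c + M * kap ι x) (by rw [hD1]; simp)
          have h5 : y ∈ (zw (1 : Fin 2) k).head? := by
            rw [← List.head?_append_of_ne_nil _ (zw_ne_nil _ hk), hD2]; simp
          rw [fst_of_mem_zw (List.mem_of_head? h5)] at h4
          exact absurd h4 (by simp)

end Code
end GJ

/-! ### Injectivity and conjugacies under the coding homomorphism -/

namespace GJ

open FreeGroup

section Claims

variable {α : Type*} [DecidableEq α] {t : α} {ι : α → ℕ} {M V : ℕ}

/-- If `eps h` is conjugate to `eps k` by `f`, then `f` is a quotient of images of prefixes of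
powers of `h` and `k`. The axes of the two elements agree up to translation by `f`, so a complete
`Y`-syllable in the middle of `f * eps (k ^ m) * f⁻¹` decodes to a letter of `k ^ m` and to a letter
of `h ^ m`; `p` and `q` are the prefixes ending in these letters. -/
theorem exists_common_cut (hι : ∀ a, 1 ≤ ι a) (hinj : Function.Injective ι) (hVM : V ≤ M)
    {h k : FreeGroup α} (hh : ∀ m : ℕ, NoRun t V (h ^ m).toWord)
    (hk : ∀ m : ℕ, NoRun t V (k ^ m).toWord) (hk1 : k ≠ 1) {f : FreeGroup (Fin 2)}
    (hf : eps t ι M h = f * eps t ι M k * f⁻¹) :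
    ∃ (m : ℕ) (p v q u : List (α × Bool)), (h ^ m).toWord = p ++ v ∧ (k ^ m).toWord = q ++ u ∧
      f * eps t ι M (mk q) = eps t ι M (mk p) := by
  -- `m` is chosen so that `k ^ m` has at least `2 * N + 3` letters other than `t`: at least
  -- `N` on each side absorb the cancellation with `f` or its inverse, and two adjacent
  -- ones, `x₀` and `x`, stay in the middle
  obtain ⟨N, hN⟩ : ∃ N, N = f.norm + 1 := ⟨_, rfl⟩
  obtain ⟨m, hm⟩ : ∃ m, m = V * (2 * N + 3) + 1 := ⟨_, rfl⟩
  have hr : IsReduced (k ^ m).toWord := isReduced_toWord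
  have hkm := (hk m).mono hVM
  have hlen : m ≤ (k ^ m).toWord.length := le_norm_pow hk1 m
  have hcnt : 2 * N + 3 ≤ cnt t (k ^ m).toWord := by
    by_contra! hc
    have h1 := length_le_cnt (t := t) _ _ rfl hr (hk m)
    have h2 : V * (cnt t (k ^ m).toWord + 1) ≤ V * (2 * N + 3) :=
      Nat.mul_le_mul_left _ (by omega)
    omega
  obtain ⟨u₁, x₀, rest, hw, hx₀, hu₁⟩ := exists_split (t := t) N (k ^ m).toWord (by omega)
  have hc1 : cnt t (k ^ m).toWord = N + (cnt t rest + 1) := by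
    rw [hw, cnt_append, cnt_cons hx₀, hu₁]
  have hrx : IsReduced (x₀ :: rest) := by rw [hw] at hr; exact red_right hr
  obtain ⟨d, x, w₂, hx, rfl⟩ : ∃ d x w', x.1 ≠ t ∧ rest = zw t d ++ x :: w' := by
    rcases parse t (red_right (A := [x₀]) hrx) with ⟨d, rfl⟩ | h
    · rw [cnt_zw] at hc1; omega
    · exact h
  rw [cnt_append, cnt_zw, cnt_cons hx] at hc1
  have hd : d.natAbs < M := NoRun.natAbs_lt (t := t)
    (hkm.sub ⟨u₁ ++ [x₀], x :: w₂, by rw [hw]; simp⟩)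
  have he := exponent_ne_zero hι hinj hrx hd
  have hκ := kap_ne_zero hι x
  -- `e` is the exponent of `T` between the `Y`-syllables of `x₀` and `x`
  obtain ⟨e, hee⟩ : ∃ e, e = M * kap ι x₀ + d + M * kap ι x := ⟨_, rfl⟩
  rw [← hee] at he
  obtain ⟨A₁, hA₁⟩ : ∃ A₁, A₁ = code t ι M 0 u₁ (M * kap ι x₀) ++ zw 1 (kap ι x₀) := ⟨_, rfl⟩
  obtain ⟨B₂, hB₂⟩ : ∃ B₂, B₂ = code t ι M (M * kap ι x) w₂ 0 := ⟨_, rfl⟩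
  have hcut : ∀ v, code t ι M 0 (u₁ ++ x₀ :: (zw t d ++ x :: v)) 0 =
      (A₁ ++ (zw 0 e ++ zw 1 (kap ι x))) ++ code t ι M (M * kap ι x) v 0 := by
    intro v
    rw [code_cut t ι M hx₀, code_zw, code_letter t ι M hx, ← hee, hA₁]
    simp only [List.append_assoc]
  have hmk1 : mk (A₁ ++ (zw 0 e ++ zw 1 (kap ι x))) = mk A₁ * of 0 ^ e * of 1 ^ kap ι x := by
    rw [mk_app, mk_app, mk_zw, mk_zw, mul_assoc]
  have hlA : f.norm < A₁.length := by
    have h1 := cnt_le_length_code (t := t) (M := M) hι 0 u₁ (M * kap ι x₀)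
    rw [hA₁, List.length_append]; omega
  have hlB : f.norm + 2 ≤ B₂.length := by
    have h1 := cnt_le_length_code (t := t) (M := M) hι (M * kap ι x) w₂ 0
    rw [hB₂]; omega
  have hredx : IsReduced (x :: w₂) := by
    refine red_sub hrx ⟨x₀ :: zw t d, [], by simp⟩
  have hB₂0 := (isReduced_code_letter hι hinj hredx
    (hkm.sub (w' := w₂) ⟨u₁ ++ x₀ :: (zw t d ++ [x]), [], by rw [hw]; simp⟩)).2
  rw [← hB₂] at hB₂0
  have hek := toWord_eps hι hinj hkm
  rw [hw, hcut w₂, ← hB₂] at hek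
  have hredk : IsReduced (A₁ ++ (zw 0 e ++ zw 1 (kap ι x)) ++ B₂) := by
    rw [← hek]; exact isReduced_toWord
  -- conjugation by `f` does not affect the `Y`-syllable of the letter `x`
  have hconj : code t ι M 0 (h ^ m).toWord 0 = ((f * mk A₁).toWord ++ zw 0 e) ++
      (zw 1 (kap ι x) ++ (mk B₂ * f⁻¹).toWord) := by
    have h1 : eps t ι M (h ^ m) = f * eps t ι M (k ^ m) * f⁻¹ := by
      rw [_root_.map_pow, hf, conj_pow, _root_.map_pow]
    rw [← toWord_eps hι hinj ((hh m).mono hVM), h1, eq_mk_of_toWord hek,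
      toWord_mul_both hredk (by rw [List.length_append]; omega) (by rw [norm_inv_eq]; omega),
      toWord_mul_left (red_left hredk) hlA]
    simp only [List.append_assoc]
  have hhead : ∀ y ∈ (mk B₂ * f⁻¹).toWord.head?, y.1 = 0 := by
    cases hB : B₂ with
    | nil => rw [hB] at hlB; simp at hlB
    | cons b B =>
      rw [hB] at hlB hB₂0 hredk
      have h1 := toWord_mul_right (c := f⁻¹) (B₁ := [b]) (B₂ := B) (red_right hredk)
        (by rw [norm_inv_eq]; simp at hlB; omega)
      rw [List.singleton_append] at h1
      rw [h1]
      intro y hy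
      exact hB₂0 y (by simpa using hy)
  obtain ⟨p, v, hp, hpv⟩ := decode hι hinj hκ hhead (h ^ m).toWord 0 _ isReduced_toWord
    ((hh m).mono hVM) (by
      intro y hy
      rw [List.getLast?_append_of_ne_nil _ (zw_ne_nil _ he)] at hy
      exact fst_of_mem_zw (List.mem_of_getLast? hy)) hconj
  refine ⟨m, p, v, u₁ ++ x₀ :: (zw t d ++ [x]), w₂, hp, by rw [hw]; simp, ?_⟩
  have h1 := mk_code t ι M 0 (u₁ ++ x₀ :: (zw t d ++ [x])) 0
  rw [hcut [], code, mk_app, hmk1, mk_zw] at h1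
  rw [mk_app, mk_app, mk_zw, mk_zw, mk_toWord] at hpv
  simp only [zpow_zero, one_mul, mul_one, add_zero] at h1 hpv
  have h2 : eps t ι M (mk p) = f * mk A₁ * of 0 ^ e * of 1 ^ kap ι x * of 0 ^ (M * kap ι x) := by
    rw [hpv]; group
  rw [h2, ← h1]; group

variable {H K : Subgroup (FreeGroup α)}

theorem injOn_eps (hι : ∀ a, 1 ≤ ι a) (hinj : Function.Injective ι)
    (hH : ∀ h ∈ H, NoRun t V h.toWord) (hVM : 2 * V ≤ M) : Set.InjOn (eps t ι M) H := by
  intro x hx y hy hxy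
  have h1 := (hH _ (mul_mem hx (inv_mem hy))).mono (W := M) (by omega)
  refine mul_inv_eq_one.1 (eq_one_of_eps hι hinj h1 ?_)
  rw [_root_.map_mul, hxy, ← _root_.map_mul, mul_inv_cancel, _root_.map_one]

/-- Conjugacies between the images of `H` and `K` come from conjugacies in the source. With `p`, `q`
from `exists_common_cut` and `g = p * q⁻¹`, both `p⁻¹ * h * p` and `q⁻¹ * k * q` are products of
three elements without long runs and have the same image, which forces them to be equal. -/
theorem lift_conj (hι : ∀ a, 1 ≤ ι a) (hinj : Function.Injective ι)
    (hH : ∀ h ∈ H, NoRun t V h.toWord) (hK : ∀ k ∈ K, NoRun t V k.toWord) (hVM : 6 * V ≤ M)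
    {h k : FreeGroup α} (hh : h ∈ H) (hk : k ∈ K) (hh1 : h ≠ 1) {f : FreeGroup (Fin 2)}
    (hf : eps t ι M h = f * eps t ι M k * f⁻¹) :
    ∃ g, eps t ι M g = f ∧ h = g * k * g⁻¹ := by
  have hk1 : k ≠ 1 := by
    rintro rfl
    refine hh1 (eq_one_of_eps hι hinj ((hH h hh).mono (W := M) (by omega)) ?_)
    rw [hf]; simp
  obtain ⟨m, p, v, q, u, hp, hq, hpq⟩ := exists_common_cut hι hinj (V := V) (by omega)
    (fun m => hH _ (pow_mem hh m)) (fun m => hK _ (pow_mem hk m)) hk1 hf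
  have hpV : NoRun t V (mk p).toWord := by
    have h1 : IsReduced (p ++ v) := by rw [← hp]; exact isReduced_toWord
    rw [toWord_mk_of (red_left h1)]
    exact (hH _ (pow_mem hh m)).sub (by rw [hp]; exact (List.prefix_append _ _).isInfix)
  have hqV : NoRun t V (mk q).toWord := by
    have h1 : IsReduced (q ++ u) := by rw [← hq]; exact isReduced_toWord
    rw [toWord_mk_of (red_left h1)]
    exact (hK _ (pow_mem hk m)).sub (by rw [hq]; exact (List.prefix_append _ _).isInfix)
  have hg : eps t ι M (mk p * (mk q)⁻¹) = f := by
    rw [_root_.map_mul, _root_.map_inv, ← hpq]; group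
  refine ⟨mk p * (mk q)⁻¹, hg, ?_⟩
  have h1 : NoRun t M (((mk p)⁻¹ * h * mk p)⁻¹ * ((mk q)⁻¹ * k * mk q)).toWord :=
    (((hpV.inv.mul (hH h hh)).mul hpV).inv.mul ((hqV.inv.mul (hK k hk)).mul hqV)).mono (by omega)
  have h2 := eq_one_of_eps hι hinj h1 (by
    simp only [_root_.map_mul, _root_.map_inv, hf, ← hpq]; group)
  have h3 := inv_mul_eq_one.1 h2
  calc h = mk p * ((mk p)⁻¹ * h * mk p) * (mk p)⁻¹ := by group
    _ = mk p * ((mk q)⁻¹ * k * mk q) * (mk p)⁻¹ := by rw [h3]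
    _ = _ := by group

/-- An element conjugating a nontrivial element of `K` into `H` has no long run of `t`: it is a
quotient of prefixes of elements of `H` and `K`. -/
theorem noRun_conj (hH : ∀ h ∈ H, NoRun t V h.toWord) (hK : ∀ k ∈ K, NoRun t V k.toWord)
    {g h k : FreeGroup α} (hh : h ∈ H) (hk : k ∈ K) (hh1 : h ≠ 1) (hg : h = g * k * g⁻¹) :
    NoRun t (2 * V) g.toWord := by
  have hk1 : k ≠ 1 := by rintro rfl; exact hh1 (by rw [hg]; simp)
  -- a power so long that each half outlasts the cancellation with `g`
  obtain ⟨m, hm⟩ : ∃ m, m = 2 * g.norm + 2 := ⟨_, rfl⟩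
  have hlen : m ≤ (k ^ m).toWord.length := le_norm_pow hk1 m
  obtain ⟨B₁, hB₁⟩ : ∃ B₁, B₁ = (k ^ m).toWord.take (g.norm + 1) := ⟨_, rfl⟩
  obtain ⟨B₂, hB₂⟩ : ∃ B₂, B₂ = (k ^ m).toWord.drop (g.norm + 1) := ⟨_, rfl⟩
  have hw : (k ^ m).toWord = B₁ ++ B₂ := by rw [hB₁, hB₂, List.take_append_drop]
  have hr : IsReduced (B₁ ++ B₂) := by rw [← hw]; exact isReduced_toWord
  have h1 := toWord_mul_both (g := g) (c := g⁻¹) hr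
    (by rw [hB₁, List.length_take]; omega)
    (by rw [hB₂, List.length_drop, norm_inv_eq]; omega)
  rw [← eq_mk_of_toWord hw, ← conj_pow, ← hg] at h1
  have h2 : NoRun t V (g * mk B₁).toWord :=
    (hH _ (pow_mem hh m)).sub (by rw [h1]; exact (List.prefix_append _ _).isInfix)
  have h3 : NoRun t V (mk B₁).toWord := by
    rw [toWord_mk_of (red_left hr)]
    exact (hK _ (pow_mem hk m)).sub (by rw [hw]; exact (List.prefix_append _ _).isInfix)
  have h4 := h2.mul h3.inv
  rw [mul_inv_cancel_right, ← two_mul] at h4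
  exact h4

/-- `eps` is injective on the elements that conjugate a nontrivial element of `K` into `H`. -/
theorem eq_of_eps_eq (hι : ∀ a, 1 ≤ ι a) (hinj : Function.Injective ι)
    (hH : ∀ h ∈ H, NoRun t V h.toWord) (hK : ∀ k ∈ K, NoRun t V k.toWord) (hVM : 4 * V ≤ M)
    {g h k g' h' k' : FreeGroup α} (hh : h ∈ H) (hk : k ∈ K) (hh1 : h ≠ 1)
    (hg : h = g * k * g⁻¹) (hh' : h' ∈ H) (hk' : k' ∈ K) (hh1' : h' ≠ 1)
    (hg' : h' = g' * k' * g'⁻¹) (he : eps t ι M g = eps t ι M g') : g = g' := by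
  have h1 := ((noRun_conj hH hK hh hk hh1 hg).mul
    (noRun_conj hH hK hh' hk' hh1' hg').inv).mono (W := M) (by omega)
  refine mul_inv_eq_one.1 (eq_one_of_eps hι hinj h1 ?_)
  rw [_root_.map_mul, he, _root_.map_inv, mul_inv_cancel]

theorem eps_surjective {a : α} (hat : a ≠ t) (ha : ι a = 1) :
    Function.Surjective (eps t ι M) := by
  have h0 : of 0 ∈ (eps t ι M).range := ⟨of t, by simp [eps]⟩
  have h1 : of 1 ∈ (eps t ι M).range := by
    have h2 : eps t ι M (of a) = of 0 ^ (M : ℤ) * of 1 * of 0 ^ (M : ℤ) := by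
      simp [eps, hat, ha]
    have h3 : of 1 = (of 0 ^ (M : ℤ))⁻¹ * eps t ι M (of a) * (of 0 ^ (M : ℤ))⁻¹ := by
      rw [h2]; group
    rw [h3]
    have h4 := inv_mem (zpow_mem h0 (M : ℤ))
    exact mul_mem (mul_mem h4 ⟨_, rfl⟩) h4
  rw [← MonoidHom.range_eq_top, eq_top_iff, ← closure_range_of, Subgroup.closure_le]
  rintro _ ⟨i, rfl⟩
  fin_cases i
  · exact h0
  · exact h1

end Claims
end GJ

/-! ### Double coset representatives -/

namespace GJ

section Abstract

variable {G : Type*} [Group G] {H K : Subgroup G}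

theorem mem_conjSubgroup {g x : G} : x ∈ conjSubgroup g K ↔ ∃ k ∈ K, x = g * k * g⁻¹ := by
  simp only [conjSubgroup, Subgroup.mem_map]
  exact exists_congr fun k => and_congr_right fun _ => eq_comm

/-- Elementwise form of the nontriviality of `H ∩ g K g⁻¹`. -/
theorem inf_conj_ne_bot {g : G} : H ⊓ conjSubgroup g K ≠ ⊥ ↔
    ∃ h ∈ H, ∃ k ∈ K, h ≠ 1 ∧ h = g * k * g⁻¹ := by
  rw [Subgroup.ne_bot_iff_exists_ne_one]
  constructor
  · rintro ⟨⟨x, hx⟩, h1⟩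
    obtain ⟨hxH, hxK⟩ := Subgroup.mem_inf.1 hx
    obtain ⟨k, hk, he⟩ := mem_conjSubgroup.1 hxK
    exact ⟨x, hxH, k, hk, fun h => h1 (Subtype.ext h), he⟩
  · rintro ⟨h, hh, k, hk, h1, he⟩
    exact ⟨⟨h, Subgroup.mem_inf.2 ⟨hh, mem_conjSubgroup.2 ⟨k, hk, he⟩⟩⟩,
      fun h2 => h1 (congrArg Subtype.val h2)⟩

/-- Double coset representatives in `G` contained in `L` also represent within `L`. -/
theorem isDCRep_subgroupOf {S : Set G} (hS : IsDCRep H K S) {L : Subgroup G} (hH : H ≤ L)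
    (hK : K ≤ L) (hSL : S ⊆ L) :
    IsDCRep (H.subgroupOf L) (K.subgroupOf L) {x : L | (x : G) ∈ S} := by
  refine ⟨fun s hs => ?_, fun s hs s' hs' hss hd => ?_, fun g hg => ?_⟩
  · obtain ⟨h, hh, k, hk, h1, he⟩ := inf_conj_ne_bot.1 (hS.1 s hs)
    exact inf_conj_ne_bot.2 ⟨⟨h, hH hh⟩, hh, ⟨k, hK hk⟩, hk,
      fun h2 => h1 (congrArg Subtype.val h2), Subtype.ext he⟩
  · obtain ⟨h, hh, k, hk, he⟩ := hd
    exact hS.2.1 s hs s' hs' (fun h2 => hss (Subtype.ext h2)) ⟨h, hh, k, hk, by rw [he]; rfl⟩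
  · obtain ⟨h, hh, k, hk, h1, he⟩ := inf_conj_ne_bot.1 hg
    obtain ⟨s, hs, a, ha, b, hb, hd⟩ := hS.2.2 g (inf_conj_ne_bot.2
      ⟨h, hh, k, hk, fun h2 => h1 (Subtype.ext h2), by rw [he]; rfl⟩)
    exact ⟨⟨s, hSL hs⟩, hs, ⟨a, hH ha⟩, ha, ⟨b, hK hb⟩, hb, Subtype.ext hd⟩

/-- A homomorphism that is injective on `H`, lifts every conjugation relation between the images of
`H` and `K`, and is injective on the set of conjugators, carries double coset representatives to
double coset representatives and preserves the corresponding intersections. -/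
theorem image_isDCRep {Γ : Type*} [Group Γ] {S : Set G} (hS : IsDCRep H K S) (ε : G →* Γ)
    (hεH : Set.InjOn ε H)
    (hlift : ∀ h ∈ H, ∀ k ∈ K, h ≠ 1 → ∀ f, ε h = f * ε k * f⁻¹ →
      ∃ g, ε g = f ∧ h = g * k * g⁻¹)
    (huniq : ∀ g g', H ⊓ conjSubgroup g K ≠ ⊥ → H ⊓ conjSubgroup g' K ≠ ⊥ → ε g = ε g' →
      g = g') :
    IsDCRep (H.map ε) (K.map ε) (ε '' S) ∧ Set.InjOn ε S ∧
      ∀ s ∈ S, (H ⊓ conjSubgroup s K).map ε = H.map ε ⊓ conjSubgroup (ε s) (K.map ε) := by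
  have hone : ∀ h ∈ H, ε h = 1 → h = 1 := fun h hh h1 =>
    hεH hh (one_mem H) (by rw [h1, map_one])
  refine ⟨⟨?_, ?_, ?_⟩, fun s hs s' hs' h => huniq s s' (hS.1 s hs) (hS.1 s' hs') h, ?_⟩
  · rintro _ ⟨s, hs, rfl⟩
    obtain ⟨h, hh, k, hk, h1, he⟩ := inf_conj_ne_bot.1 (hS.1 s hs)
    exact inf_conj_ne_bot.2 ⟨ε h, ⟨h, hh, rfl⟩, ε k, ⟨k, hk, rfl⟩, fun h2 => h1 (hone h hh h2),
      by rw [he]; simp⟩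
  · rintro _ ⟨s, hs, rfl⟩ _ ⟨s', hs', rfl⟩ hss ⟨_, ⟨a, ha, rfl⟩, _, ⟨b, hb, rfl⟩, he⟩
    refine hS.2.1 s hs s' hs' (fun h => hss (by rw [h])) ⟨a, ha, b, hb, ?_⟩
    obtain ⟨h, hh, k, hk, h1, he'⟩ := inf_conj_ne_bot.1 (hS.1 s hs)
    refine huniq s' (a * s * b) (hS.1 s' hs') (inf_conj_ne_bot.2 ⟨a * h * a⁻¹,
      mul_mem (mul_mem ha hh) (inv_mem ha), b⁻¹ * k * b, mul_mem (mul_mem (inv_mem hb) hk) hb,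
      ?_, ?_⟩) (by rw [he]; simp)
    · rwa [Ne, conj_eq_one_iff]
    · rw [he']; group
  · intro f hf
    obtain ⟨_, ⟨h, hh, rfl⟩, _, ⟨k, hk, rfl⟩, h1, he⟩ := inf_conj_ne_bot.1 hf
    have hh1 : h ≠ 1 := by rintro rfl; exact h1 (map_one ε)
    obtain ⟨g, rfl, hg⟩ := hlift h hh k hk hh1 f he
    obtain ⟨s, hs, a, ha, b, hb, hd⟩ := hS.2.2 g (inf_conj_ne_bot.2 ⟨h, hh, k, hk, hh1, hg⟩)
    exact ⟨ε s, ⟨s, hs, rfl⟩, ε a, ⟨a, ha, rfl⟩, ε b, ⟨b, hb, rfl⟩, by rw [hd]; simp⟩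
  · intro s hs
    ext y
    simp only [Subgroup.mem_inf, mem_conjSubgroup, Subgroup.mem_map]
    constructor
    · rintro ⟨x, ⟨hx, k, hk, rfl⟩, rfl⟩
      exact ⟨⟨_, hx, rfl⟩, ε k, ⟨k, hk, rfl⟩, by simp⟩
    · rintro ⟨⟨h, hh, rfl⟩, _, ⟨k, hk, rfl⟩, he⟩
      by_cases hh1 : h = 1
      · subst hh1
        exact ⟨1, ⟨one_mem H, 1, one_mem K, by simp⟩, rfl⟩
      · obtain ⟨g, hg, hgh⟩ := hlift h hh k hk hh1 _ he
        have := huniq g s (inf_conj_ne_bot.2 ⟨h, hh, k, hk, hh1, hgh⟩) (hS.1 s hs) hg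
        subst this
        exact ⟨h, ⟨hh, k, hk, hgh⟩, rfl⟩

theorem fg_subgroupOf {L : Subgroup G} (hH : H.FG) (hHL : H ≤ L) : (H.subgroupOf L).FG := by
  rw [Subgroup.fg_iff_submonoid_fg] at hH ⊢
  refine Submonoid.FG.map_injective L.subtype L.subtype_injective ?_
  have h1 : (H.subgroupOf L).map L.subtype = H := by
    rw [Subgroup.subgroupOf_map_subtype, inf_eq_left.2 hHL]
  have h2 : (H.subgroupOf L).toSubmonoid.map L.subtype = H.toSubmonoid :=
    congrArg Subgroup.toSubmonoid h1
  rw [h2]; exact hH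

/-- If all generators are equal to `t` and no power of `t` lies in `H`, then `H` is trivial. -/
theorem eq_bot_of_cyclic {α : Type*} (e : FreeGroup α ≃* G) {t : α} (ht : ∀ a, a = t)
    (hH : ∀ m : ℕ, 0 < m → e (FreeGroup.of t) ^ m ∉ H) : H = ⊥ := by
  rw [eq_bot_iff]
  intro h hh
  have h1 : e.symm h ∈ Subgroup.zpowers (FreeGroup.of t) := by
    have h2 : (⊤ : Subgroup (FreeGroup α)) ≤ Subgroup.zpowers (FreeGroup.of t) := by
      rw [← FreeGroup.closure_range_of, Subgroup.closure_le]
      rintro _ ⟨a, rfl⟩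
      rw [ht a]; exact Subgroup.mem_zpowers _
    exact h2 (Subgroup.mem_top _)
  obtain ⟨n, hn⟩ := Subgroup.mem_zpowers_iff.1 h1
  have h3 : e (FreeGroup.of t) ^ n = h := by rw [← map_zpow, hn, e.apply_symm_apply]
  rcases lt_trichotomy n 0 with h0 | rfl | h0
  · refine absurd ?_ (hH n.natAbs (by omega))
    rw [← zpow_natCast, Int.ofNat_natAbs_of_nonpos h0.le, zpow_neg, h3]
    exact inv_mem hh
  · rw [← h3, zpow_zero]; exact one_mem _
  · refine absurd ?_ (hH n.natAbs (by omega))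
    rw [← zpow_natCast, Int.natAbs_of_nonneg h0.le, h3]
    exact hh

end Abstract
end GJ

theorem rank_two_generalized_join
    (m : ℕ) (hm : 2 ≤ m)
    (H K : Subgroup (FreeGroup (Fin m))) (hH : H.FG) (hK : K.FG)
    (S : Set (FreeGroup (Fin m))) (hS : IsDCRep H K S)
    (L : Subgroup (FreeGroup (Fin m)))
    (hL : L = Subgroup.closure ((H : Set (FreeGroup (Fin m))) ∪ (K : Set (FreeGroup (Fin m))) ∪ S))
    (hHL : (H.subgroupOf L).index = 0)
    (hKL : (K.subgroupOf L).index = 0) :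
    ∃ ε : L →* FreeGroup (Fin 2),
      Function.Surjective ε ∧
      Set.InjOn ε (H.subgroupOf L : Set L) ∧
      Set.InjOn ε (K.subgroupOf L : Set L) ∧
      IsDCRep ((H.subgroupOf L).map ε) ((K.subgroupOf L).map ε)
        (ε '' {x : L | (x : FreeGroup (Fin m)) ∈ S}) ∧
      Set.InjOn ε {x : L | (x : FreeGroup (Fin m)) ∈ S} ∧
      (∀ s : L, (s : FreeGroup (Fin m)) ∈ S →
        ((H ⊓ conjSubgroup (s : FreeGroup (Fin m)) K).subgroupOf L).map ε
          = (H.subgroupOf L).map ε ⊓ conjSubgroup (ε s) ((K.subgroupOf L).map ε)) := by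
  classical
  have hsub : (H : Set (FreeGroup (Fin m))) ∪ K ∪ S ⊆ L := by
    rw [hL]; exact Subgroup.subset_closure
  have hHle : H ≤ L := fun x hx => hsub (Or.inl (Or.inl hx))
  have hKle : K ≤ L := fun x hx => hsub (Or.inl (Or.inr hx))
  have hSle : S ⊆ L := fun x hx => hsub (Or.inr hx)
  have hnot : ¬ L ≤ H := fun h => by
    rw [Subgroup.subgroupOf_eq_top.2 h, Subgroup.index_top] at hHL
    exact one_ne_zero hHL
  let α := IsFreeGroup.Generators L
  let e₀ : FreeGroup α ≃* L := (IsFreeGroup.toFreeGroup L).symm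
  have hne : Nonempty α := by
    by_contra hα
    rw [not_nonempty_iff] at hα
    refine hnot fun x hx => ?_
    have h1 : (⟨x, hx⟩ : L) = 1 := e₀.symm.injective (Subsingleton.elim _ _)
    rw [show x = 1 from congrArg Subtype.val h1]
    exact one_mem H
  obtain ⟨e, t, ht⟩ := GJ.exists_basis e₀ (GJ.fg_subgroupOf hH hHle) (GJ.fg_subgroupOf hK hKle)
    hHL hKL
  -- if `t` were the only generator, `H` and `K` would be trivial, so `S = ∅` and `L = 1`
  obtain ⟨a₀, ha₀⟩ : ∃ a₀, a₀ ≠ t := by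
    by_contra! hcon
    have hbot : ∀ {J : Subgroup (FreeGroup (Fin m))}, J ≤ L →
        (∀ n : ℕ, 0 < n → e (FreeGroup.of t) ^ n ∉ J.subgroupOf L) → J = ⊥ := by
      intro J hJ h
      have h1 := GJ.eq_bot_of_cyclic e hcon h
      rw [Subgroup.subgroupOf_eq_bot, disjoint_iff, inf_eq_left.2 hJ] at h1
      exact h1
    have hHb : H = ⊥ := hbot hHle fun n hn h => (ht 1 n hn).1 (by simpa using h)
    have hKb : K = ⊥ := hbot hKle fun n hn h => (ht 1 n hn).2 (by simpa using h)
    refine hnot ?_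
    rw [hL, Subgroup.closure_le]
    rintro x ((hx | hx) | hx)
    · exact hx
    · rw [hKb] at hx; rw [hHb]; exact hx
    · exact absurd (by rw [hHb, bot_inf_eq]) (hS.1 x hx)
  have hcα : Countable α := Function.Injective.countable (f := fun a => e (FreeGroup.of a))
    (e.injective.comp FreeGroup.of_injective)
  obtain ⟨j, hj⟩ := exists_injective_nat α
  -- some generator has index `1`, so that `Y` lies in the image of `eps`
  obtain ⟨ι, hι, hinj, hιa⟩ : ∃ ι : α → ℕ, (∀ a, 1 ≤ ι a) ∧ Function.Injective ι ∧ ι a₀ = 1 := by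
    refine ⟨fun a => Equiv.swap (j a₀) 0 (j a) + 1, fun a => Nat.le_add_left 1 _,
      fun a b h => ?_, by simp⟩
    exact hj ((Equiv.swap (j a₀) 0).injective (Nat.succ_injective h))
  let H' := (H.subgroupOf L).comap e.toMonoidHom
  let K' := (K.subgroupOf L).comap e.toMonoidHom
  obtain ⟨V₁, hV₁⟩ := GJ.exists_noRun (H := H') (t := t)
    (GJ.comap_fg e (GJ.fg_subgroupOf hH hHle)) fun g n hn h => (ht (e g) n hn).1 (by
      simpa [H', Subgroup.mem_comap] using h)
  obtain ⟨V₂, hV₂⟩ := GJ.exists_noRun (H := K') (t := t)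
    (GJ.comap_fg e (GJ.fg_subgroupOf hK hKle)) fun g n hn h => (ht (e g) n hn).2 (by
      simpa [K', Subgroup.mem_comap] using h)
  obtain ⟨V, hV⟩ : ∃ V, V = max V₁ V₂ := ⟨_, rfl⟩
  have hHV : ∀ h ∈ H', GJ.NoRun t V h.toWord := fun h hh => (hV₁ h hh).mono (by omega)
  have hKV : ∀ h ∈ K', GJ.NoRun t V h.toWord := fun h hh => (hV₂ h hh).mono (by omega)
  have hmemH : ∀ {x : L}, x ∈ H.subgroupOf L → e.symm x ∈ H' := fun {x} hx => by
    simpa [H', Subgroup.mem_comap] using hx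
  have hmemK : ∀ {x : L}, x ∈ K.subgroupOf L → e.symm x ∈ K' := fun {x} hx => by
    simpa [K', Subgroup.mem_comap] using hx
  have hconj : ∀ {g h k : L}, h = g * k * g⁻¹ →
      e.symm h = e.symm g * e.symm k * (e.symm g)⁻¹ := fun h => by rw [h]; simp
  have hne1 : ∀ {x : L}, x ≠ 1 → e.symm x ≠ 1 := fun hx h => hx (by simpa using h)
  let ε : L →* FreeGroup (Fin 2) := (GJ.eps t ι (6 * V)).comp e.symm.toMonoidHom
  have hε : ∀ x, ε x = GJ.eps t ι (6 * V) (e.symm x) := fun x => rfl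
  have hεH : Set.InjOn ε (H.subgroupOf L : Set L) := fun x hx y hy h =>
    e.symm.injective (GJ.injOn_eps hι hinj hHV (by omega) (hmemH hx) (hmemH hy) h)
  have hεK : Set.InjOn ε (K.subgroupOf L : Set L) := fun x hx y hy h =>
    e.symm.injective (GJ.injOn_eps hι hinj hKV (by omega) (hmemK hx) (hmemK hy) h)
  obtain ⟨h1, h2, h3⟩ := GJ.image_isDCRep (GJ.isDCRep_subgroupOf hS hHle hKle hSle) ε hεH
    (by
      intro h hh k hk hh1 f hf
      obtain ⟨g, hg, hgh⟩ := GJ.lift_conj hι hinj hHV hKV le_rfl (hmemH hh) (hmemK hk)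
        (hne1 hh1) hf
      refine ⟨e g, by rw [hε, e.symm_apply_apply, hg], e.symm.injective ?_⟩
      rw [hgh]; simp)
    (by
      intro g g' hg hg' he
      obtain ⟨h, hh, k, hk, hh1, hgh⟩ := GJ.inf_conj_ne_bot.1 hg
      obtain ⟨h', hh', k', hk', hh1', hgh'⟩ := GJ.inf_conj_ne_bot.1 hg'
      exact e.symm.injective (GJ.eq_of_eps_eq hι hinj hHV hKV (by omega) (hmemH hh) (hmemK hk)
        (hne1 hh1) (hconj hgh) (hmemH hh') (hmemK hk') (hne1 hh1') (hconj hgh') he))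
  refine ⟨ε, (GJ.eps_surjective ha₀ hιa).comp e.symm.surjective, hεH, hεK, h1, h2,
    fun s hs => ?_⟩
  rw [← h3 s hs]
  congr 1
  ext x
  simp only [Subgroup.mem_subgroupOf, Subgroup.mem_inf, GJ.mem_conjSubgroup]
  refine and_congr_right fun _ => ⟨?_, ?_⟩
  · rintro ⟨k, hk, he⟩
    exact ⟨⟨k, hKle hk⟩, hk, Subtype.ext he⟩
  · rintro ⟨k, hk, he⟩
    exact ⟨k, hk, by rw [he]; rfl⟩
end

section
/- Let F be a free group and let H and K be finitely generated subgroups of F such that neither H nor K has finite index in the join ⟨H, K⟩ (the subgroup of F generated by H and K). Then there exists a surjective group homomorphism δ : ⟨H, K⟩ → F₂ onto a free group F₂ of rank 2 such that the restriction of δ to H is injective, the restriction of δ to K is injective, and δ(H ∩ K) = δ(H) ∩ δ(K) (equivalently, the restriction of δ to H ∩ K maps H ∩ K onto δ(H) ∩ δ(K)). -/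
/-!
Write `L` for the join of `H` and `K`. It is free of finite rank, and the rank is at least two, since
in a free group of rank at most one a subgroup of infinite index is trivial. All three conditions on
`δ` besides surjectivity follow from one: the kernel of `δ` meets the product set `HK` only in `1`.

*A basis avoiding `H` and `K`.* There is a basis `y₀, y₁, …` of `L` such that no conjugate of `y₀ ^ k`,
`k > 0`, lies in `H` or in `K` (`exists_basis_avoiding`). To find it, complete the finite core of the
Schreier graph of `H` to a finite permutation representation by adding edges, as in Marshall Hall's
theorem, and do the same for `K`. Give the added edges weight one and the other edges weight zero.
An element of `H` labels a closed path of weight zero at the base point, and since `H` has infinite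
index at least one edge is added in each orbit, so that an edge of positive weight can be reached from
every vertex. If `n` annihilates all the permutations, then the transvection `x_i ↦ x_i x_j ^ n` does
not change the permutations but adds to the weights of `x_i` those of the full `x_j`-cycles. By repeating
such transvections one reaches a basis whose elements have positive weight at all vertices
(`exists_positive_basis`). Powers of such an element have positive weight everywhere, and therefore
no conjugate of them fixes the base point with weight zero (`conj_pow_notMem`).

*Bounded runs.* A suffix of the reduced word of `hk` spells either a suffix of the word of `k` or
`s k` with a suffix `s` of the word of `h`, so it determines a vertex of the core of `K` or of `H`.
By the pigeonhole principle, a long run of `y₀` would meet one of these vertices twice, which puts a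
conjugate of a power of `y₀` in `H` or `K`. So the runs of `y₀` in reduced words of elements of `HK`
are shorter than some `n` (`bounded_runs`).

*The homomorphism.* Let `y₀ ↦ a` and `y_j ↦ a ^ M_j b a ^ M_j` for `j ≥ 1`, where `M_j = n (j - 1)`.
As `y₁ ↦ b`, this is onto. Between two consecutive letters `b ^ η` and `b ^ ε` in the image of a word
with runs of `y₀` shorter than `n`, the exponent of `a` is `η M_k + e + ε M_j` with `|e| < n`. If
`η = -ε`, it vanishes only for `e = 0` and `j = k`, which is excluded when the word is reduced. So no
letters `b` cancel, and a nontrivial word of this kind has nontrivial image (`collapse_ne_one`).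
-/

/-! ### Suffixes of words and the finite core of a finitely generated subgroup -/

/-- The elements of the free group spelled by the suffixes of a word. -/
def sfx {α : Type} (L : List (α × Bool)) : Set (FreeGroup α) :=
  {g | ∃ s, s <:+ L ∧ FreeGroup.mk s = g}

lemma mem_sfx_append {α : Type} {L₁ L₂ : List (α × Bool)} {g : FreeGroup α} :
    g ∈ sfx (L₁ ++ L₂) ↔ g ∈ sfx L₂ ∨ ∃ s ∈ sfx L₁, g = s * FreeGroup.mk L₂ := by
  constructor
  · rintro ⟨s, hs, rfl⟩
    obtain ⟨t, ht⟩ := hs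
    rcases List.append_eq_append_iff.1 ht with ⟨u, hu, rfl⟩ | ⟨u, rfl, hu⟩
    · exact Or.inr ⟨_, ⟨u, ⟨t, hu.symm⟩, rfl⟩, FreeGroup.mul_mk.symm⟩
    · exact Or.inl ⟨s, ⟨u, hu.symm⟩, rfl⟩
  · rintro (⟨s, hs, rfl⟩ | ⟨_, ⟨s, hs, rfl⟩, rfl⟩)
    · exact ⟨s, hs.trans (List.suffix_append _ _), rfl⟩
    · obtain ⟨t, rfl⟩ := hs
      exact ⟨s ++ L₂, ⟨t, by simp⟩, FreeGroup.mul_mk.symm⟩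

lemma sfx_step {α : Type} {L₁ L₂ : List (α × Bool)} (h : FreeGroup.Red.Step L₁ L₂) :
    sfx L₂ ⊆ sfx L₁ := by
  cases h with
  | @not A B x b =>
    intro g hg
    rcases mem_sfx_append.1 hg with h | ⟨s, hs, rfl⟩
    · refine mem_sfx_append.2 (Or.inl ?_)
      obtain ⟨t, ht, rfl⟩ := h
      exact ⟨t, ht.trans ⟨[(x, b), (x, !b)], rfl⟩, rfl⟩
    · refine mem_sfx_append.2 (Or.inr ⟨s, hs, ?_⟩)
      congr 1
      exact (Quot.sound (FreeGroup.Red.Step.cons_not (L := B))).symm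

/-- Free reduction creates no new suffix values: in the Cayley tree, the path of the reduced word
is contained in the path of the word itself. -/
lemma sfx_red {α : Type} {L₁ L₂ : List (α × Bool)} (h : FreeGroup.Red L₁ L₂) :
    sfx L₂ ⊆ sfx L₁ := by
  induction h with
  | refl => exact subset_rfl
  | tail _ h ih => exact (sfx_step h).trans ih

lemma sfx_toWord_mul {α : Type} [DecidableEq α] (g h : FreeGroup α) {p : FreeGroup α}
    (hp : p ∈ sfx (g * h).toWord) : p ∈ sfx h.toWord ∨ ∃ s ∈ sfx g.toWord, p = s * h := by
  rw [FreeGroup.toWord_mul] at hp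
  have := mem_sfx_append.1 (sfx_red FreeGroup.reduce.red hp)
  rwa [FreeGroup.mk_toWord] at this

lemma sfx_finite {α : Type} (L : List (α × Bool)) : (sfx L).Finite := by
  have : sfx L = FreeGroup.mk '' {s | s ∈ L.tails} := by
    ext g; simp [sfx, List.mem_tails]
  rw [this]
  exact (List.finite_toSet _).image _

/-- The vertices of the core of the Schreier graph of `H`: the cosets `sH`, where `s` runs through
the suffixes of the reduced words of elements of `H`. -/
def core {α : Type} [DecidableEq α] (H : Subgroup (FreeGroup α)) : Set (FreeGroup α ⧸ H) :=
  {v | ∃ h ∈ H, ∃ s ∈ sfx h.toWord, v = (s : FreeGroup α ⧸ H)}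

lemma core_finite {α : Type} [DecidableEq α] {H : Subgroup (FreeGroup α)} (hH : H.FG) :
    (core H).Finite := by
  obtain ⟨S, rfl⟩ := hH
  set H := Subgroup.closure (S : Set (FreeGroup α)) with hHdef
  let W : Set (FreeGroup α) := {1} ∪ ⋃ t ∈ S, (sfx t.toWord ∪ sfx (t⁻¹).toWord)
  have hW : W.Finite := by
    refine (Set.finite_singleton _).union (Set.Finite.biUnion S.finite_toSet ?_)
    intro t _
    exact (sfx_finite _).union (sfx_finite _)
  refine (hW.image (fun g : FreeGroup α => (g : FreeGroup α ⧸ H))).subset ?_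
  rintro v ⟨h, hh, s, hs, rfl⟩
  suffices key : ∀ s ∈ sfx h.toWord,
      (s : FreeGroup α ⧸ H) ∈ (fun g : FreeGroup α => (g : FreeGroup α ⧸ H)) '' W from key s hs
  have step : ∀ t : FreeGroup α, sfx t.toWord ⊆ W → ∀ y ∈ H,
      (∀ s ∈ sfx y.toWord, (s : FreeGroup α ⧸ H) ∈ (fun g : FreeGroup α => (g : FreeGroup α ⧸ H)) '' W) →
      ∀ s ∈ sfx (t * y).toWord,
        (s : FreeGroup α ⧸ H) ∈ (fun g : FreeGroup α => (g : FreeGroup α ⧸ H)) '' W := by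
    intro t ht y hy ih s hs
    rcases sfx_toWord_mul _ _ hs with h | ⟨u, hu, rfl⟩
    · exact ih s h
    · exact ⟨u, ht hu, by rw [QuotientGroup.eq]; simpa using hy⟩
  clear hs s
  induction hh using Subgroup.closure_induction_left with
  | one =>
    rintro s ⟨t, ht, rfl⟩
    rw [FreeGroup.toWord_one, List.suffix_nil] at ht
    subst ht
    exact ⟨1, Or.inl rfl, rfl⟩
  | mul_left x hx y hy ih =>
    refine step x (fun u hu => Or.inr ?_) y hy ih
    exact Set.mem_biUnion hx (Or.inl hu)
  | inv_mul_cancel x hx y hy ih =>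
    refine step x⁻¹ (fun u hu => Or.inr ?_) y hy ih
    exact Set.mem_biUnion hx (Or.inr hu)

/-- If no conjugate of a nontrivial power of the letter `x` lies in `H` or in `K`, then the lengths
of the runs of `x` in the reduced words of elements of `HK` are bounded. -/
lemma bounded_runs {α : Type} [DecidableEq α] {H K : Subgroup (FreeGroup α)} (hH : H.FG)
    (hK : K.FG) (x : α)
    (hxH : ∀ (g : FreeGroup α) (k : ℕ), 0 < k → g⁻¹ * FreeGroup.of x ^ k * g ∉ H)
    (hxK : ∀ (g : FreeGroup α) (k : ℕ), 0 < k → g⁻¹ * FreeGroup.of x ^ k * g ∉ K) :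
    ∃ n : ℕ, ∀ h ∈ H, ∀ k ∈ K, ∀ (m : ℕ) (β : Bool),
      List.replicate m (x, β) <:+: (h * k).toWord → m < n := by
  classical
  have := (core_finite hH).to_subtype
  have := (core_finite hK).to_subtype
  refine ⟨Nat.card (core H ⊕ core K), fun h hh k hk m β hinf => ?_⟩
  by_contra! hm
  obtain ⟨A, B, hAB⟩ := hinf
  let u : FreeGroup α := FreeGroup.mk [(x, β)]
  let b : FreeGroup α := FreeGroup.mk B
  have hu : ∀ i : ℕ, FreeGroup.mk (List.replicate i (x, β)) = u ^ i := by
    intro i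
    rw [FreeGroup.pow_mk]; simp
  have hsf : ∀ i ≤ m, u ^ i * b ∈ sfx (h * k).toWord := by
    intro i hi
    refine ⟨List.replicate i (x, β) ++ B, ⟨A ++ List.replicate (m - i) (x, β), ?_⟩, ?_⟩
    · rw [← hAB]
      obtain ⟨d, rfl⟩ := Nat.exists_eq_add_of_le hi
      simp only [Nat.add_comm i d, Nat.add_sub_cancel, List.append_assoc,
        ← List.replicate_append_replicate]
    · rw [← FreeGroup.mul_mk, hu]
  have hcl : ∀ i : Fin (m + 1), (∃ c : core H, (c : FreeGroup α ⧸ H) = ↑(u ^ (i : ℕ) * b * k⁻¹)) ∨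
      (∃ c : core K, (c : FreeGroup α ⧸ K) = ↑(u ^ (i : ℕ) * b)) := by
    intro i
    rcases sfx_toWord_mul _ _ (hsf i (Nat.lt_succ_iff.1 i.2)) with hp | ⟨s, hs, hp⟩
    · exact Or.inr ⟨⟨_, k, hk, _, hp, rfl⟩, rfl⟩
    · refine Or.inl ⟨⟨_, h, hh, _, hs, rfl⟩, ?_⟩
      rw [hp]; simp
  have hf : ∀ i : Fin (m + 1), ∃ c : core H ⊕ core K, Sum.elim
      (fun c : core H => (c : FreeGroup α ⧸ H) = ↑(u ^ (i : ℕ) * b * k⁻¹))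
      (fun c : core K => (c : FreeGroup α ⧸ K) = ↑(u ^ (i : ℕ) * b)) c := by
    intro i
    rcases hcl i with ⟨c, hc⟩ | ⟨c, hc⟩
    · exact ⟨Sum.inl c, hc⟩
    · exact ⟨Sum.inr c, hc⟩
  choose f hf using hf
  have hninj : ¬ Function.Injective f := by
    intro hinj
    have := Nat.card_le_card_of_injective f hinj
    rw [Nat.card_eq_fintype_card, Fintype.card_fin] at this
    omega
  -- The cosets `u ^ i * g * P` are pairwise distinct; if `u = x⁻¹`, inverting gives a power of `x`.
  have hpow : ∀ (P : Subgroup (FreeGroup α)),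
      (∀ (g : FreeGroup α) (k : ℕ), 0 < k → g⁻¹ * FreeGroup.of x ^ k * g ∉ P) →
      ∀ (g : FreeGroup α) (i j : ℕ), i < j →
        ((u ^ i * g : FreeGroup α) : FreeGroup α ⧸ P) ≠ ((u ^ j * g : FreeGroup α)) := by
    intro P hP g i j hij heq
    rw [QuotientGroup.eq] at heq
    obtain ⟨d, rfl⟩ := Nat.exists_eq_add_of_lt hij
    have h1 : (u ^ i * g)⁻¹ * (u ^ (i + d + 1) * g) = g⁻¹ * u ^ (d + 1) * g := by
      rw [add_assoc, pow_add]; group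
    rw [h1] at heq
    cases β with
    | true => exact hP g (d + 1) (Nat.succ_pos _) heq
    | false =>
      refine hP g (d + 1) (Nat.succ_pos _) ?_
      have h2 : u = (FreeGroup.of x)⁻¹ := rfl
      rw [h2] at heq
      have h3 := P.inv_mem heq
      have h4 : (g⁻¹ * (FreeGroup.of x)⁻¹ ^ (d + 1) * g)⁻¹ = g⁻¹ * FreeGroup.of x ^ (d + 1) * g := by
        rw [inv_pow]; group
      rwa [h4] at h3
  rw [Function.Injective] at hninj
  push Not at hninj
  obtain ⟨i, j, hij, hne⟩ := hninj
  wlog hlt : i < j generalizing i j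
  · exact this j i hij.symm hne.symm (lt_of_le_of_ne (not_lt.1 hlt) hne.symm)
  have hi := hf i
  have hj := hf j
  rw [← hij] at hj
  generalize f i = c at hi hj
  rcases c with c | c
  · simp only [Sum.elim_inl, mul_assoc] at hi hj
    exact hpow H hxH _ _ _ hlt (hi.symm.trans hj)
  · simp only [Sum.elim_inr] at hi hj
    exact hpow K hxK _ _ _ hlt (hi.symm.trans hj)


/-! ### The homomorphism onto the free group of rank two -/

/-- The reduced word of the power `x_z ^ e`. -/
def run {r : ℕ} (z : Fin r) (e : ℤ) : List (Fin r × Bool) :=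
  List.replicate e.natAbs (z, decide (0 < e))

/-- The sign of the exponent of a letter. -/
def sg (ε : Bool) : ℤ := cond ε 1 (-1)

lemma mk_run {r : ℕ} (z : Fin r) (e : ℤ) : FreeGroup.mk (run z e) = FreeGroup.of z ^ e := by
  have key : ∀ (m : ℕ) (β : Bool),
      FreeGroup.mk (List.replicate m (z, β)) = (FreeGroup.mk [(z, β)]) ^ m := by
    intro m β; rw [FreeGroup.pow_mk]; simp
  rw [run, key]
  rcases lt_trichotomy e 0 with h | rfl | h
  · have h1 : decide (0 < e) = false := by simp; omega
    have h2 : FreeGroup.mk [(z, false)] = (FreeGroup.of z)⁻¹ := rfl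
    rw [h1, h2, inv_pow, ← zpow_natCast, ← zpow_neg]
    congr 1; omega
  · simp
  · have h1 : decide (0 < e) = true := by simpa using h
    have h2 : FreeGroup.mk [(z, true)] = FreeGroup.of z := rfl
    rw [h1, h2, ← zpow_natCast]
    congr 1; omega

lemma run_cons {r : ℕ} (z : Fin r) (e : ℤ) (η : Bool) (T : List (Fin r × Bool))
    (h : FreeGroup.IsReduced ((z, η) :: (run z e ++ T))) :
    (z, η) :: run z e = run z (e + sg η) := by
  rcases lt_trichotomy e 0 with he | rfl | he
  · have h1 : decide (0 < e) = false := by simp; omega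
    obtain ⟨m, hm⟩ : ∃ m, e.natAbs = m + 1 := ⟨e.natAbs - 1, by omega⟩
    have h2 : η = false := by
      rw [run, h1, hm, List.replicate_succ, List.cons_append, FreeGroup.isReduced_cons_cons] at h
      exact h.1 rfl
    subst h2
    have h3 : decide (0 < e + sg false) = false := by simp [sg]; omega
    have h4 : (e + sg false).natAbs = e.natAbs + 1 := by simp [sg]; omega
    rw [run, run, h1, h3, h4, List.replicate_succ]
  · cases η <;> simp [run, sg]
  · have h1 : decide (0 < e) = true := by simpa using he
    obtain ⟨m, hm⟩ : ∃ m, e.natAbs = m + 1 := ⟨e.natAbs - 1, by omega⟩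
    have h2 : η = true := by
      rw [run, h1, hm, List.replicate_succ, List.cons_append, FreeGroup.isReduced_cons_cons] at h
      exact h.1 rfl
    subst h2
    have h3 : decide (0 < e + sg true) = true := by simp [sg]; omega
    have h4 : (e + sg true).natAbs = e.natAbs + 1 := by simp [sg]; omega
    rw [run, run, h1, h3, h4, List.replicate_succ]

lemma isReduced_replicate {r : ℕ} (z : Fin r) (m : ℕ) (β : Bool) :
    FreeGroup.IsReduced (List.replicate m (z, β)) := by
  induction m with
  | zero => exact FreeGroup.IsReduced.nil
  | succ m ih =>
    cases m with
    | zero => exact FreeGroup.IsReduced.singleton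
    | succ m =>
      rw [List.replicate_succ, List.replicate_succ, FreeGroup.isReduced_cons_cons]
      exact ⟨fun _ => rfl, ih⟩

lemma isReduced_replicate_append {r : ℕ} {z y : Fin r} (hzy : z ≠ y) (m : ℕ) (β ε : Bool)
    {R : List (Fin r × Bool)} (hR : FreeGroup.IsReduced ((y, ε) :: R)) :
    FreeGroup.IsReduced (List.replicate m (z, β) ++ (y, ε) :: R) := by
  induction m with
  | zero => exact hR
  | succ m ih =>
    cases m with
    | zero =>
      change FreeGroup.IsReduced ((z, β) :: (y, ε) :: R)
      rw [FreeGroup.isReduced_cons_cons]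
      exact ⟨fun h => absurd h hzy, hR⟩
    | succ m =>
      rw [List.replicate_succ, List.replicate_succ, List.cons_append, List.cons_append,
        FreeGroup.isReduced_cons_cons]
      exact ⟨fun _ => rfl, ih⟩

lemma isReduced_cons_replicate {r : ℕ} {z y : Fin r} (hzy : z ≠ y) (m : ℕ) (β η : Bool)
    {R : List (Fin r × Bool)} (hR : FreeGroup.IsReduced (List.replicate (m + 1) (z, β) ++ R)) :
    FreeGroup.IsReduced ((y, η) :: (List.replicate (m + 1) (z, β) ++ R)) := by
  rw [List.replicate_succ, List.cons_append, FreeGroup.isReduced_cons_cons]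
  rw [List.replicate_succ, List.cons_append] at hR
  exact ⟨fun h => absurd h.symm hzy, hR⟩

lemma isReduced_syllable {r : ℕ} {z y : Fin r} (hzy : z ≠ y) (f : ℤ) (η ε : Bool)
    {R : List (Fin r × Bool)} (hR : FreeGroup.IsReduced ((y, ε) :: R)) (hf : f = 0 → η = ε) :
    FreeGroup.IsReduced ((y, η) :: (run z f ++ (y, ε) :: R)) := by
  by_cases h : f = 0
  · subst h
    change FreeGroup.IsReduced ((y, η) :: (y, ε) :: R)
    rw [FreeGroup.isReduced_cons_cons]
    exact ⟨fun _ => hf rfl, hR⟩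
  · obtain ⟨m, hm⟩ : ∃ m, f.natAbs = m + 1 := ⟨f.natAbs - 1, by omega⟩
    rw [run, hm]
    exact isReduced_cons_replicate hzy _ _ _ (isReduced_replicate_append hzy _ _ _ hR)

lemma isReduced_cons_run {r : ℕ} {z y : Fin r} (hzy : z ≠ y) (f : ℤ) (η : Bool) :
    FreeGroup.IsReduced ((y, η) :: run z f) := by
  by_cases h : f = 0
  · subst h
    exact FreeGroup.IsReduced.singleton
  · obtain ⟨m, hm⟩ : ∃ m, f.natAbs = m + 1 := ⟨f.natAbs - 1, by omega⟩
    have := isReduced_cons_replicate (R := []) hzy m (decide (0 < f)) η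
      (by simpa using isReduced_replicate z _ _)
    rw [run, hm]
    simpa using this

/-- The exponents used in `collapse`: multiples of `n` increasing from `0` at the letter `1`. -/
def shift {q : ℕ} (n : ℕ) (j : Fin (q + 2)) : ℤ := n * ((j : ℕ) - 1 : ℤ)

/-- The homomorphism `x₀ ↦ a`, `x_j ↦ a ^ M_j * b * a ^ M_j` for `j ≥ 1`, where `M_j = n (j - 1)`;
in particular `x₁ ↦ b`. -/
def collapse (q n : ℕ) : FreeGroup (Fin (q + 2)) →* FreeGroup (Fin 2) :=
  FreeGroup.lift fun j => if j = 0 then FreeGroup.of 0 else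
    FreeGroup.of 0 ^ shift n j * FreeGroup.of 1 * FreeGroup.of 0 ^ shift n j

lemma collapse_surjective (q n : ℕ) : Function.Surjective (collapse q n) := by
  have h : (collapse q n).range = ⊤ := by
    rw [eq_top_iff, ← FreeGroup.closure_range_of, Subgroup.closure_le]
    rintro _ ⟨i, rfl⟩
    fin_cases i
    · exact ⟨FreeGroup.of 0, by simp [collapse]⟩
    · exact ⟨FreeGroup.of 1, by simp [collapse, shift]⟩
  exact MonoidHom.range_eq_top.1 h

lemma collapse_zero (q n : ℕ) (η : Bool) :
    collapse q n (FreeGroup.mk [(0, η)]) = FreeGroup.of 0 ^ sg η := by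
  cases η <;> simp [collapse, sg, FreeGroup.lift_mk]

lemma collapse_letter (q n : ℕ) {k : Fin (q + 2)} (hk : k ≠ 0) (η : Bool) :
    collapse q n (FreeGroup.mk [(k, η)]) =
      FreeGroup.of 0 ^ (sg η * shift n k) * FreeGroup.mk [(1, η)] *
        FreeGroup.of 0 ^ (sg η * shift n k) := by
  cases η
  · have h2 : FreeGroup.mk [((1 : Fin 2), false)] = (FreeGroup.of 1)⁻¹ := rfl
    simp [collapse, sg, FreeGroup.lift_mk, hk, h2, mul_assoc]
  · have h2 : FreeGroup.mk [((1 : Fin 2), true)] = (FreeGroup.of 1) := rfl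
    simp [collapse, sg, FreeGroup.lift_mk, hk, h2, mul_assoc]

lemma shift_eq {q n : ℕ} {j k : Fin (q + 2)} {e : ℤ} (he : |e| < n)
    (h : e + shift n j - shift n k = 0) : j = k ∧ e = 0 := by
  have h1 : e = n * ((k : ℕ) - (j : ℕ) : ℤ) := by
    simp only [shift] at h; linarith
  have h2 : e = 0 := Int.eq_zero_of_abs_lt_dvd ⟨_, h1⟩ he
  have hn : (n : ℤ) ≠ 0 := by
    have := abs_nonneg e
    omega
  rw [h2] at h1
  have h3 : ((k : ℕ) - (j : ℕ) : ℤ) = 0 := by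
    rcases mul_eq_zero.1 h1.symm with h | h
    · exact absurd h hn
    · exact h
  exact ⟨Fin.ext (by omega), h2⟩

/-- If a reduced word has all its runs of `x₀` shorter than `n`, then no cancellation between the
letters `b` occurs in its image under `collapse`. The invariant describes the image of a word
`x₀ ^ e * x_j ^ ε * ⋯` with `j ≠ 0`; it starts with `a ^ (e + ε M_j) * b ^ ε`. -/
lemma collapse_form (q n : ℕ) (L : List (Fin (q + 2) × Bool)) (hL : FreeGroup.IsReduced L)
    (hrun : ∀ (m : ℕ) (β : Bool), List.replicate m (0, β) <:+: L → m < n) :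
    (∃ e : ℤ, L = run 0 e) ∨
    ∃ (e : ℤ) (j : Fin (q + 2)) (ε : Bool) (L' : List (Fin (q + 2) × Bool)),
      L = run 0 e ++ (j, ε) :: L' ∧ j ≠ 0 ∧ ∃ R : List (Fin 2 × Bool),
        FreeGroup.IsReduced ((1, ε) :: R) ∧
        collapse q n (FreeGroup.mk L) =
          FreeGroup.of 0 ^ (e + sg ε * shift n j) * FreeGroup.mk ((1, ε) :: R) := by
  have h01 : (0 : Fin 2) ≠ 1 := by decide
  induction L with
  | nil => exact Or.inl ⟨0, rfl⟩
  | cons l L ih =>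
    obtain ⟨k, η⟩ := l
    have hsub : L <:+: (k, η) :: L := (List.suffix_cons _ _).isInfix
    have ih := ih (hL.infix hsub) (fun m β h => hrun m β (h.trans hsub))
    have hmk : FreeGroup.mk ((k, η) :: L) = FreeGroup.mk [(k, η)] * FreeGroup.mk L := by
      rw [FreeGroup.mul_mk]; rfl
    have hcons : ∀ T : List (Fin 2 × Bool),
        FreeGroup.mk ((1, η) :: T) = FreeGroup.mk [(1, η)] * FreeGroup.mk T := by
      intro T; rw [FreeGroup.mul_mk]; rfl
    by_cases hk : k = 0
    · subst hk
      rcases ih with ⟨e, rfl⟩ | ⟨e, j, ε, L', rfl, hj, R, hR, hδ⟩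
      · exact Or.inl ⟨e + sg η, run_cons 0 e η [] (by simpa using hL)⟩
      · refine Or.inr ⟨e + sg η, j, ε, L', ?_, hj, R, hR, ?_⟩
        · rw [← run_cons 0 e η _ hL]; rfl
        · rw [hmk, map_mul, hδ, collapse_zero, ← mul_assoc, ← zpow_add]
          congr 2; ring
    · rcases ih with ⟨e, rfl⟩ | ⟨e, j, ε, L', rfl, hj, R, hR, hδ⟩
      · refine Or.inr ⟨0, k, η, run 0 e, rfl, hk, run 0 (sg η * shift n k + e),
          isReduced_cons_run h01 _ _, ?_⟩
        have h1 : collapse q n (FreeGroup.of 0) = FreeGroup.of 0 := by simp [collapse]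
        rw [hmk, map_mul, collapse_letter q n hk, mk_run, map_zpow, h1, hcons (run 0 _), mk_run, zero_add,
          zpow_add]
        simp only [mul_assoc]
      · refine Or.inr ⟨0, k, η, _, rfl, hk,
          run 0 (sg η * shift n k + (e + sg ε * shift n j)) ++ (1, ε) :: R,
          isReduced_syllable h01 _ _ _ hR ?_, ?_⟩
        · intro h0
          by_contra hne
          have he : |e| < n := by
            have := hrun e.natAbs (decide (0 < e))
              ⟨[(k, η)], (j, ε) :: L', by simp [run]⟩
            rw [Int.abs_eq_natAbs]
            exact_mod_cast this
          have hjk : j = k ∧ e = 0 := by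
            cases η <;> cases ε <;> simp only [sg, cond_true, cond_false] at h0 hne
            · exact absurd trivial hne
            · exact shift_eq he (by linarith)
            · have := shift_eq (e := -e) (by rwa [abs_neg]) (n := n) (j := j) (k := k)
                (by linarith)
              exact ⟨this.1, by omega⟩
            · exact absurd trivial hne
          obtain ⟨rfl, rfl⟩ := hjk
          change FreeGroup.IsReduced ((j, η) :: (j, ε) :: L') at hL
          rw [FreeGroup.isReduced_cons_cons] at hL
          exact hne (hL.1 rfl)
        · rw [hmk, map_mul, collapse_letter q n hk, hδ, hcons (run 0 _ ++ _), ← FreeGroup.mul_mk, mk_run,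
            zero_add, zpow_add _ (sg η * shift n k)]
          simp only [mul_assoc]

lemma collapse_ne_one (q n : ℕ) (g : FreeGroup (Fin (q + 2)))
    (hrun : ∀ (m : ℕ) (β : Bool), List.replicate m (0, β) <:+: g.toWord → m < n)
    (hg : collapse q n g = 1) : g = 1 := by
  have huniq : ∀ {L₁ L₂ : List (Fin 2 × Bool)}, FreeGroup.IsReduced L₁ → FreeGroup.IsReduced L₂ →
      FreeGroup.mk L₁ = FreeGroup.mk L₂ → L₁ = L₂ := by
    intro L₁ L₂ h₁ h₂ h
    rw [← h₁.reduce_eq, ← h₂.reduce_eq]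
    exact FreeGroup.reduce.sound h
  rcases collapse_form q n g.toWord FreeGroup.isReduced_toWord hrun with
    ⟨e, he⟩ | ⟨e, j, ε, L', -, -, R, hR, hδ⟩
  · have h1 : g = FreeGroup.of 0 ^ e := by rw [← mk_run, ← he, FreeGroup.mk_toWord]
    have h2 : collapse q n (FreeGroup.of 0) = FreeGroup.of 0 := by simp [collapse]
    rw [h1, map_zpow, h2, ← mk_run, FreeGroup.one_eq_mk] at hg
    have h3 := huniq (isReduced_replicate _ _ _) FreeGroup.IsReduced.nil hg
    have h4 : e = 0 := by simpa [run] using h3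
    rw [h1, h4, zpow_zero]
  · exfalso
    rw [FreeGroup.mk_toWord, hg, eq_comm, mul_eq_one_iff_eq_inv', ← zpow_neg, ← mk_run] at hδ
    have h3 := huniq hR (isReduced_replicate _ _ _) hδ
    have h4 : ((1 : Fin 2), ε) ∈ run (0 : Fin 2) (-(e + sg ε * shift n j)) := by
      rw [run, ← h3]; simp
    have h5 := List.eq_of_mem_replicate h4
    simp at h5


/-! ### Weighted permutation representations and positive automorphisms -/

/-- The permutation `(p, m) ↦ (σ p, m + w p)` of `X × ℤ`. -/
def twist {X : Type} (σ : Equiv.Perm X) (w : X → ℕ) : Equiv.Perm (X × ℤ) where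
  toFun v := (σ v.1, v.2 + w v.1)
  invFun v := (σ.symm v.1, v.2 - w (σ.symm v.1))
  left_inv v := by simp
  right_inv v := by simp

/-- The action of the free group on `X × ℤ` that lifts the action on `X` given by `σ` and records
the weights `w i p` of the edges `p → σ i p` that are traversed. -/
def act {α X : Type} (σ : α → Equiv.Perm X) (w : α → X → ℕ) :
    FreeGroup α →* Equiv.Perm (X × ℤ) :=
  FreeGroup.lift fun i => twist (σ i) (w i)

/-- The total weight of the path that starts at `p` and is labelled by `g`, where an edge traversed
backwards counts negatively. -/
def cocyc {α X : Type} (σ : α → Equiv.Perm X) (w : α → X → ℕ) (g : FreeGroup α) (p : X) : ℤ :=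
  (act σ w g (p, 0)).2

lemma act_apply {α X : Type} (σ : α → Equiv.Perm X) (w : α → X → ℕ) (g : FreeGroup α) (p : X)
    (m : ℤ) : act σ w g (p, m) = (FreeGroup.lift σ g p, m + cocyc σ w g p) := by
  suffices h : ∃ c : X → ℤ, ∀ p m, act σ w g (p, m) = (FreeGroup.lift σ g p, m + c p) by
    obtain ⟨c, hc⟩ := h
    have : cocyc σ w g p = c p := by simp [cocyc, hc]
    rw [hc, this]
  induction g using FreeGroup.induction_on with
  | C1 => exact ⟨0, by simp⟩
  | of i => exact ⟨fun p => w i p, by simp [act, twist]⟩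
  | inv_of i _ =>
    refine ⟨fun p => - w i ((σ i).symm p), fun p m => ?_⟩
    rw [map_inv, map_inv, Equiv.Perm.inv_eq_iff_eq]
    simp [act, twist]
  | mul g h hg hh =>
    obtain ⟨c, hc⟩ := hg
    obtain ⟨d, hd⟩ := hh
    refine ⟨fun p => d p + c (FreeGroup.lift σ h p), fun p m => ?_⟩
    simp [hc, hd, add_assoc]

lemma cocyc_mul {α X : Type} (σ : α → Equiv.Perm X) (w : α → X → ℕ) (g h : FreeGroup α) (p : X) :
    cocyc σ w (g * h) p = cocyc σ w h p + cocyc σ w g (FreeGroup.lift σ h p) := by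
  have h1 := act_apply σ w (g * h) p 0
  rw [map_mul, Equiv.Perm.mul_apply, act_apply, act_apply, Prod.mk.injEq] at h1
  linarith [h1.2]

lemma cocyc_one {α X : Type} (σ : α → Equiv.Perm X) (w : α → X → ℕ) (p : X) :
    cocyc σ w 1 p = 0 := by
  simp [cocyc]

lemma cocyc_of {α X : Type} (σ : α → Equiv.Perm X) (w : α → X → ℕ) (i : α) (p : X) :
    cocyc σ w (FreeGroup.of i) p = w i p := by
  simp [cocyc, act, twist]

lemma cocyc_pow_nonneg {α X : Type} (σ : α → Equiv.Perm X) (w : α → X → ℕ) (g : FreeGroup α)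
    (hg : ∀ p, 0 ≤ cocyc σ w g p) (n : ℕ) (p : X) : 0 ≤ cocyc σ w (g ^ n) p := by
  induction n generalizing p with
  | zero => simp [cocyc_one]
  | succ n ih =>
    rw [pow_succ, cocyc_mul]
    exact add_nonneg (hg _) (ih _)

lemma cocyc_le_pow {α X : Type} (σ : α → Equiv.Perm X) (w : α → X → ℕ) (g : FreeGroup α)
    (hg : ∀ p, 0 ≤ cocyc σ w g p) {n k : ℕ} (hk : k < n) (p : X) :
    cocyc σ w g ((FreeGroup.lift σ g ^ k) p) ≤ cocyc σ w (g ^ n) p := by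
  obtain ⟨d, rfl⟩ := Nat.exists_eq_add_of_lt hk
  have h1 : g ^ (k + d + 1) = g ^ d * (g * g ^ k) := by
    rw [← pow_succ', ← pow_add]; congr 1; omega
  have h2 := cocyc_pow_nonneg σ w g hg k p
  have h3 := cocyc_pow_nonneg σ w g hg d (FreeGroup.lift σ (g * g ^ k) p)
  rw [h1, cocyc_mul, cocyc_mul, map_pow]
  rw [← map_pow] at *
  linarith

/-- The transvection `x_i ↦ x_i * x_j ^ n`, fixing the other letters. -/
def transv {α : Type} [DecidableEq α] (i j : α) (hij : j ≠ i) (n : ℕ) :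
    FreeGroup α ≃* FreeGroup α :=
  MonoidHom.toMulEquiv
    (FreeGroup.lift (Function.update FreeGroup.of i (FreeGroup.of i * FreeGroup.of j ^ n)))
    (FreeGroup.lift (Function.update FreeGroup.of i (FreeGroup.of i * (FreeGroup.of j ^ n)⁻¹)))
    (by
      ext k
      by_cases hk : k = i
      · subst hk; simp [Function.update_of_ne hij]
      · simp [Function.update_of_ne hk])
    (by
      ext k
      by_cases hk : k = i
      · subst hk; simp [Function.update_of_ne hij]
      · simp [Function.update_of_ne hk])

lemma transv_self {α : Type} [DecidableEq α] (i j : α) (hij : j ≠ i) (n : ℕ) :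
    transv i j hij n (FreeGroup.of i) = FreeGroup.of i * FreeGroup.of j ^ n := by
  simp [transv]

lemma transv_ne {α : Type} [DecidableEq α] (i j : α) (hij : j ≠ i) (n : ℕ) {k : α} (hk : k ≠ i) :
    transv i j hij n (FreeGroup.of k) = FreeGroup.of k := by
  simp [transv, Function.update_of_ne hk]

/-- Suppose that from every point of the finite set `X` an edge of positive weight can be reached.
Then there is a basis `θ x_i` of the free group all of whose elements traverse positive total weight
from every starting point. It is obtained from transvections `x_i ↦ x_i * x_j ^ n`, where `n` kills
all the permutations: these do not change the action on `X`, and the set of pairs `(i, p)` such that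
`θ x_i` has positive weight at `p` can only grow, so that a maximal one is everything. -/
lemma exists_positive_basis {α X : Type} [DecidableEq α] [Finite α] [Nontrivial α] [Finite X]
    (σ : α → Equiv.Perm X) (w : α → X → ℕ)
    (hreach : ∀ p, ∃ g i, 0 < w i (FreeGroup.lift σ g p)) :
    ∃ θ : FreeGroup α ≃* FreeGroup α, ∀ i p, 0 < cocyc σ w (θ (FreeGroup.of i)) p := by
  classical
  let Adm : (FreeGroup α ≃* FreeGroup α) → Prop := fun θ =>
    ∀ i, FreeGroup.lift σ (θ (FreeGroup.of i)) = σ i ∧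
      ∀ p, (w i p : ℤ) ≤ cocyc σ w (θ (FreeGroup.of i)) p
  let G : (FreeGroup α ≃* FreeGroup α) → Set (α × X) := fun θ =>
    {e | 0 < cocyc σ w (θ (FreeGroup.of e.1)) e.2}
  obtain ⟨S, ⟨⟨θ, hθ, rfl⟩, hmax⟩⟩ :=
    (Set.toFinite {S | ∃ θ, Adm θ ∧ G θ = S}).exists_maximal
      ⟨_, MulEquiv.refl _, fun i => ⟨by simp, fun p => by simp [cocyc_of]⟩, rfl⟩
  have hnn : ∀ i p, 0 ≤ cocyc σ w (θ (FreeGroup.of i)) p := fun i p =>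
    le_trans (by positivity) ((hθ i).2 p)
  -- The factor `2` makes the exponents `1` and `n - 1` smaller than `n`.
  obtain ⟨n, hn1, hn⟩ : ∃ n : ℕ, 1 < n ∧ ∀ τ : Equiv.Perm X, τ ^ n = 1 := by
    refine ⟨2 * Nat.card (Equiv.Perm X), ?_, fun τ => ?_⟩
    · have : 0 < Nat.card (Equiv.Perm X) := Nat.card_pos
      omega
    · rw [mul_comm, pow_mul, pow_card_eq_one', one_pow]
  have hclosed : ∀ i j : α, j ≠ i → ∀ k < n, ∀ p, (j, (σ j ^ k) p) ∈ G θ → (i, p) ∈ G θ := by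
    intro i j hij k hk p hp
    let θ' := (transv i j hij n).trans θ
    have hself : θ' (FreeGroup.of i) = θ (FreeGroup.of i) * θ (FreeGroup.of j) ^ n := by
      change θ (transv i j hij n (FreeGroup.of i)) = _
      rw [transv_self, map_mul, map_pow]
    have hne : ∀ l, l ≠ i → θ' (FreeGroup.of l) = θ (FreeGroup.of l) := by
      intro l hl
      change θ (transv i j hij n (FreeGroup.of l)) = _
      rw [transv_ne _ _ _ _ hl]
    have hcoc : ∀ p, cocyc σ w (θ' (FreeGroup.of i)) p =
        cocyc σ w (θ (FreeGroup.of j) ^ n) p + cocyc σ w (θ (FreeGroup.of i)) p := by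
      intro p
      rw [hself, cocyc_mul, map_pow, hn, Equiv.Perm.one_apply]
    have hge : ∀ l p, cocyc σ w (θ (FreeGroup.of l)) p ≤ cocyc σ w (θ' (FreeGroup.of l)) p := by
      intro l p
      by_cases hl : l = i
      · subst hl
        rw [hcoc]
        linarith [cocyc_pow_nonneg σ w _ (hnn j) n p]
      · rw [hne l hl]
    have hadm : Adm θ' := by
      intro l
      refine ⟨?_, fun p => ((hθ l).2 p).trans (hge l p)⟩
      by_cases hl : l = i
      · subst hl
        rw [hself, map_mul, map_pow, hn, mul_one, (hθ _).1]
      · rw [hne l hl, (hθ l).1]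
    have hsub : G θ' ⊆ G θ :=
      hmax ⟨θ', hadm, rfl⟩ (fun e (he : 0 < _) => lt_of_lt_of_le he (hge e.1 e.2))
    apply hsub
    change 0 < cocyc σ w (θ' (FreeGroup.of i)) p
    have h1 := cocyc_le_pow σ w _ (hnn j) hk p
    rw [(hθ j).1] at h1
    have h2 : 0 < cocyc σ w (θ (FreeGroup.of j)) ((σ j ^ k) p) := hp
    rw [hcoc]
    linarith [hnn i p]
  have hfull : ∀ j q, (j, q) ∈ G θ → ∀ i, (i, q) ∈ G θ := by
    intro j q hq i
    by_cases hij : j = i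
    · exact hij ▸ hq
    · exact hclosed i j hij 0 (by omega) q (by simpa using hq)
  have hback : ∀ j k, k < n → ∀ p, (∀ i, (i, (σ j ^ k) p) ∈ G θ) → ∀ i, (i, p) ∈ G θ := by
    intro j k hk p hp
    obtain ⟨i, hi⟩ := exists_ne j
    exact hfull i p (hclosed i j hi.symm k hk p (hp j))
  have horbit : ∀ g : FreeGroup α, ∀ p, (∀ i, (i, FreeGroup.lift σ g p) ∈ G θ) →
      ∀ i, (i, p) ∈ G θ := by
    intro g
    induction g using FreeGroup.induction_on with
    | C1 => intro p hp; simpa using hp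
    | of j => intro p hp; exact hback j 1 hn1 p (by simpa using hp)
    | inv_of j _ =>
      intro p hp
      refine hback j (n - 1) (by omega) p ?_
      have : σ j ^ (n - 1) = (σ j)⁻¹ := by
        rw [eq_inv_iff_mul_eq_one, ← pow_succ, Nat.sub_add_cancel hn1.le, hn]
      rw [this]
      simpa using hp
    | mul g h hg hh =>
      intro p hp
      exact hh p (hg _ (by simpa using hp))
  refine ⟨θ, fun i p => ?_⟩
  obtain ⟨g, j, hj⟩ := hreach p
  refine horbit g p (hfull j _ ?_) i
  exact lt_of_lt_of_le (by exact_mod_cast hj) ((hθ j).2 _)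

lemma cocyc_pow_pos {α X : Type} (σ : α → Equiv.Perm X) (w : α → X → ℕ) (g : FreeGroup α)
    (hg : ∀ p, 0 < cocyc σ w g p) {k : ℕ} (hk : 0 < k) (p : X) : 0 < cocyc σ w (g ^ k) p :=
  lt_of_lt_of_le (hg _) (cocyc_le_pow σ w g (fun q => (hg q).le) hk p)

/-- The stabilizer of a point of `X × ℤ` contains no conjugate of a power of an element of everywhere
positive weight. -/
lemma conj_pow_notMem {α X : Type} (σ : α → Equiv.Perm X) (w : α → X → ℕ)
    {H : Subgroup (FreeGroup α)} (v : X × ℤ) (hv : ∀ h ∈ H, act σ w h v = v) (y : FreeGroup α)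
    (hy : ∀ p, 0 < cocyc σ w y p) (g : FreeGroup α) {k : ℕ} (hk : 0 < k) :
    g⁻¹ * y ^ k * g ∉ H := by
  intro hmem
  have h1 := hv _ hmem
  rw [map_mul, map_mul, map_inv, Equiv.Perm.mul_apply, Equiv.Perm.mul_apply,
    Equiv.Perm.inv_eq_iff_eq] at h1
  generalize act σ w g v = u at h1
  obtain ⟨p, m⟩ := u
  rw [act_apply, Prod.mk.injEq] at h1
  linarith [h1.2, cocyc_pow_pos σ w y hy hk p]

lemma act_map {α X Y : Type} {σ : α → Equiv.Perm X} {w : α → X → ℕ} {σ' : α → Equiv.Perm Y}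
    {w' : α → Y → ℕ} (f : X → Y) (hσ : ∀ i p, σ' i (f p) = f (σ i p))
    (hw : ∀ i p, w' i (f p) = w i p) (g : FreeGroup α) (v : X × ℤ) :
    act σ' w' g (f v.1, v.2) = (f (act σ w g v).1, (act σ w g v).2) := by
  induction g using FreeGroup.induction_on generalizing v with
  | C1 => simp
  | of i => simp [act, twist, hσ, hw]
  | inv_of i ih =>
    have h := ih ((act σ w (FreeGroup.of i))⁻¹ v)
    rw [← Equiv.Perm.mul_apply, mul_inv_cancel, Equiv.Perm.one_apply] at h
    rw [map_inv, map_inv, Equiv.Perm.inv_eq_iff_eq, h]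
  | mul g h hg hh => simp [hg, hh]

/-! ### Completing the core of a subgroup of infinite index -/

/-- A finitely generated subgroup `H` of infinite index fixes a point of `X × ℤ` for a finite set
`X` whose edges of positive weight are reachable from everywhere. Here `X` is the core of `H`; the
partial injections of `X` given by the letters are extended to permutations, and the edges that
were added get weight one. -/
lemma exists_weighted {α : Type} [DecidableEq α] {H : Subgroup (FreeGroup α)} (hH : H.FG)
    (hi : H.index = 0) :
    ∃ (X : Type) (_ : Finite X) (σ : α → Equiv.Perm X) (w : α → X → ℕ) (x₀ : X),
      (∀ p, ∃ g i, 0 < w i (FreeGroup.lift σ g p)) ∧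
      ∀ h ∈ H, act σ w h (x₀, 0) = (x₀, 0) := by
  classical
  have hfin := (core_finite hH).to_subtype
  have : Fintype {x // x ∈ core H} := Fintype.ofFinite (core H)
  let e : ∀ i : α, {v : core H // FreeGroup.of i • (v : FreeGroup α ⧸ H) ∈ core H} ≃
      {v : core H // (FreeGroup.of i)⁻¹ • (v : FreeGroup α ⧸ H) ∈ core H} := fun i =>
    { toFun := fun v => ⟨⟨FreeGroup.of i • (v.1 : FreeGroup α ⧸ H), v.2⟩, by simp⟩
      invFun := fun v => ⟨⟨(FreeGroup.of i)⁻¹ • (v.1 : FreeGroup α ⧸ H), v.2⟩, by simp⟩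
      left_inv := fun v => by simp
      right_inv := fun v => by simp }
  let σ : α → Equiv.Perm (core H) := fun i => (e i).extendSubtype
  let w : α → core H → ℕ := fun i v =>
    if FreeGroup.of i • (v : FreeGroup α ⧸ H) ∈ core H then 0 else 1
  have hσ : ∀ i (v : core H), FreeGroup.of i • (v : FreeGroup α ⧸ H) ∈ core H →
      (σ i v : FreeGroup α ⧸ H) = FreeGroup.of i • (v : FreeGroup α ⧸ H) := by
    intro i v hv
    exact congrArg Subtype.val (Equiv.extendSubtype_apply_of_mem (e i) v hv)
  have h1 : ((1 : FreeGroup α) : FreeGroup α ⧸ H) ∈ core H :=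
    ⟨1, H.one_mem, 1, ⟨[], List.nil_suffix, rfl⟩, rfl⟩
  refine ⟨core H, hfin, σ, w, ⟨_, h1⟩, ?_, ?_⟩
  · intro p
    by_contra! hno
    have hmem : ∀ (g : FreeGroup α) (i : α),
        FreeGroup.of i • ((FreeGroup.lift σ g p : core H) : FreeGroup α ⧸ H) ∈ core H := by
      intro g i
      by_contra hn
      have := hno g i
      simp [w, hn] at this
    -- Without added edges the orbit of `p` would be a full orbit in `F ⧸ H`.
    have horb : ∀ g g' : FreeGroup α,
        ((FreeGroup.lift σ (g * g') p : core H) : FreeGroup α ⧸ H) =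
          g • ((FreeGroup.lift σ g' p : core H) : FreeGroup α ⧸ H) := by
      intro g
      induction g using FreeGroup.induction_on with
      | C1 => intro g'; simp
      | of i =>
        intro g'
        rw [← hσ i _ (hmem g' i)]; simp
      | inv_of i ih =>
        intro g'
        rw [eq_inv_smul_iff, ← ih, mul_inv_cancel_left]
      | mul g h hg hh =>
        intro g'
        rw [mul_assoc, hg, hh, mul_smul]
    have hall : ∀ q : FreeGroup α ⧸ H, q ∈ core H := by
      intro q
      obtain ⟨g, rfl⟩ := MulAction.exists_smul_eq (FreeGroup α) (p : FreeGroup α ⧸ H) q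
      have := horb g 1
      rw [map_one, Equiv.Perm.one_apply] at this
      rw [← this]
      exact Subtype.coe_prop _
    have : Finite (FreeGroup α ⧸ H) :=
      Set.finite_univ_iff.1 ((core_finite hH).subset (fun q _ => hall q))
    have h2 : H.FiniteIndex := Subgroup.finiteIndex_of_finite_quotient
    exact h2.index_ne_zero hi
  · intro h hh
    have key : ∀ s : List (α × Bool), s <:+ h.toWord → ∀ v : core H,
        (v : FreeGroup α ⧸ H) = (FreeGroup.mk s : FreeGroup α) →
          act σ w (FreeGroup.mk s) (⟨_, h1⟩, 0) = (v, 0) := by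
      intro s
      induction s with
      | nil =>
        intro _ v hv
        rw [← FreeGroup.one_eq_mk] at hv ⊢
        rw [map_one, Equiv.Perm.one_apply]
        exact congrArg (·, (0 : ℤ)) (Subtype.ext hv.symm)
      | cons l s ih =>
        intro hs v hv
        have hs' := (List.suffix_cons l s).trans hs
        have h3 := ih hs' ⟨(FreeGroup.mk s : FreeGroup α), h, hh, _, ⟨_, hs', rfl⟩, rfl⟩ rfl
        obtain ⟨i, η⟩ := l
        have h5 : FreeGroup.mk ((i, η) :: s) = FreeGroup.mk [(i, η)] * FreeGroup.mk s := by
          rw [FreeGroup.mul_mk]; rfl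
        have h6 : ∀ v v' : core H, FreeGroup.of i • (v : FreeGroup α ⧸ H) = v' →
            act σ w (FreeGroup.of i) (v, 0) = (v', 0) := by
          intro v v' hv
          have hv' : FreeGroup.of i • (v : FreeGroup α ⧸ H) ∈ core H := hv ▸ v'.2
          have h7 : σ i v = v' := Subtype.ext ((hσ i v hv').trans hv)
          have h8 : w i v = 0 := if_pos hv'
          rw [act_apply, cocyc_of, h8, FreeGroup.lift_apply_of, h7]
          simp
        rw [h5] at hv ⊢
        rw [map_mul, Equiv.Perm.mul_apply, h3]
        cases η with
        | true =>
          refine h6 _ _ ?_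
          rw [hv]; rfl
        | false =>
          have h7 : FreeGroup.mk [(i, false)] = (FreeGroup.of i)⁻¹ := rfl
          rw [h7] at hv ⊢
          rw [map_inv, Equiv.Perm.inv_eq_iff_eq, eq_comm]
          refine h6 _ _ ?_
          rw [hv, ← smul_eq_mul, ← MulAction.Quotient.smul_coe, smul_inv_smul]
    have h2 := key h.toWord (List.suffix_refl _) ⟨_, h1⟩
    rw [FreeGroup.mk_toWord] at h2
    refine h2 ?_
    rw [QuotientGroup.eq]
    simpa using hh


/-! ### Assembling the epimorphism -/

/-- Some basis has all its elements of positive weight for both `H` and `K`, so that no conjugate of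
a power of such an element lies in `H` or in `K`. -/
lemma exists_basis_avoiding {α : Type} [DecidableEq α] [Finite α] [Nontrivial α]
    {H K : Subgroup (FreeGroup α)} (hH : H.FG) (hK : K.FG) (hHi : H.index = 0)
    (hKi : K.index = 0) :
    ∃ θ : FreeGroup α ≃* FreeGroup α, ∀ i g k, 0 < k →
      g⁻¹ * θ (FreeGroup.of i) ^ k * g ∉ H ∧ g⁻¹ * θ (FreeGroup.of i) ^ k * g ∉ K := by
  obtain ⟨X, hX, σ, w, x₀, hr, hx⟩ := exists_weighted hH hHi
  obtain ⟨Y, hY, τ, u, y₀, hs, hy⟩ := exists_weighted hK hKi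
  let ρ : α → Equiv.Perm (X ⊕ Y) := fun i => Equiv.sumCongr (σ i) (τ i)
  let v : α → X ⊕ Y → ℕ := fun i => Sum.elim (w i) (u i)
  have hl : ∀ g (p : X × ℤ), act ρ v g (Sum.inl p.1, p.2) =
      (Sum.inl (act σ w g p).1, (act σ w g p).2) :=
    act_map Sum.inl (fun _ _ => rfl) (fun _ _ => rfl)
  have hr' : ∀ g (p : Y × ℤ), act ρ v g (Sum.inr p.1, p.2) =
      (Sum.inr (act τ u g p).1, (act τ u g p).2) :=
    act_map Sum.inr (fun _ _ => rfl) (fun _ _ => rfl)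
  obtain ⟨θ, hθ⟩ := exists_positive_basis ρ v (by
    rintro (p | p)
    · obtain ⟨g, i, h⟩ := hr p
      refine ⟨g, i, ?_⟩
      have h1 := hl g (p, 0)
      rw [act_apply, act_apply, Prod.mk.injEq] at h1
      rw [h1.1]
      exact h
    · obtain ⟨g, i, h⟩ := hs p
      refine ⟨g, i, ?_⟩
      have h1 := hr' g (p, 0)
      rw [act_apply, act_apply, Prod.mk.injEq] at h1
      rw [h1.1]
      exact h)
  refine ⟨θ, fun i g k hk => ⟨?_, ?_⟩⟩
  · exact conj_pow_notMem ρ v (Sum.inl x₀, 0)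
      (fun h hh => by rw [hl h (x₀, 0), hx h hh]) _ (hθ i) g hk
  · exact conj_pow_notMem ρ v (Sum.inr y₀, 0)
      (fun h hh => by rw [hr' h (y₀, 0), hy h hh]) _ (hθ i) g hk

lemma fg_map {G G' : Type*} [Group G] [Group G'] {P : Subgroup G} (h : P.FG) (f : G →* G') :
    (P.map f).FG := by
  classical
  obtain ⟨S, rfl⟩ := h
  exact ⟨S.image f, by rw [Finset.coe_image, ← MonoidHom.map_closure]⟩

/-- The theorem for subgroups of a free group of finite rank at least two; the conclusion says that
the kernel of `δ` meets the product set `HK` trivially. -/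
lemma exists_epi {q : ℕ} {H K : Subgroup (FreeGroup (Fin (q + 2)))} (hH : H.FG) (hK : K.FG)
    (hHi : H.index = 0) (hKi : K.index = 0) :
    ∃ δ : FreeGroup (Fin (q + 2)) →* FreeGroup (Fin 2), Function.Surjective δ ∧
      ∀ h ∈ H, ∀ k ∈ K, δ (h * k) = 1 → h * k = 1 := by
  obtain ⟨θ, hθ⟩ := exists_basis_avoiding hH hK hHi hKi
  let ψ := θ.symm.toMonoidHom
  have hmem : ∀ (P : Subgroup (FreeGroup (Fin (q + 2)))) (y), y ∈ P.map ψ → θ y ∈ P := by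
    rintro P y ⟨x, hx, rfl⟩
    simpa [ψ] using hx
  obtain ⟨n, hn⟩ := bounded_runs (H := H.map ψ) (K := K.map ψ) (fg_map hH ψ) (fg_map hK ψ) 0
    (fun g k hk hg => (hθ 0 (θ g) k hk).1 (by simpa using hmem H _ hg))
    (fun g k hk hg => (hθ 0 (θ g) k hk).2 (by simpa using hmem K _ hg))
  refine ⟨(collapse q n).comp ψ, (collapse_surjective q n).comp θ.symm.surjective, ?_⟩
  intro h hh k hk h1
  rw [MonoidHom.comp_apply, map_mul] at h1
  have h2 := collapse_ne_one q n _
    (hn _ (Subgroup.mem_map_of_mem ψ hh) _ (Subgroup.mem_map_of_mem ψ hk)) h1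
  rw [← map_mul] at h2
  exact (map_eq_one_iff ψ θ.symm.injective).1 h2

/-- A generating set of a free group of infinite rank is infinite, since only finitely many letters
occur in finitely many elements. -/
lemma finite_of_fg {α : Type} (h : Group.FG (FreeGroup α)) : Finite α := by
  classical
  obtain ⟨S, hS⟩ := h.out
  let T : Set α := ⋃ s ∈ S, {a | ∃ b, (a, b) ∈ s.toWord}
  have hT : T.Finite := by
    refine Set.Finite.biUnion S.finite_toSet fun s _ => ?_
    refine ((List.finite_toSet s.toWord).image Prod.fst).subset ?_
    rintro a ⟨b, hb⟩
    exact ⟨(a, b), hb, rfl⟩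
  by_contra hinf
  rw [not_finite_iff_infinite] at hinf
  obtain ⟨a, ha⟩ := hT.exists_notMem
  -- `f` kills every letter but `a`, hence all the given generators.
  let f : FreeGroup α →* Multiplicative ℤ :=
    FreeGroup.lift (Pi.mulSingle a (Multiplicative.ofAdd 1))
  have hf : f = 1 := by
    refine MonoidHom.eq_of_eqOn_dense hS ?_
    intro s hs
    rw [← FreeGroup.mk_toWord (x := s)]
    simp only [f, FreeGroup.lift_mk, MonoidHom.one_apply]
    refine List.prod_eq_one ?_
    intro y hy
    obtain ⟨⟨c, b⟩, hc, rfl⟩ := List.mem_map.1 hy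
    have hca : c ≠ a := by
      rintro rfl
      exact ha (Set.mem_biUnion hs ⟨b, hc⟩)
    cases b <;> simp [Pi.mulSingle_eq_of_ne hca]
  have h1 := DFunLike.congr_fun hf (FreeGroup.of a)
  simp [f] at h1

/-- A subgroup of infinite index in a free group of rank at most one is trivial. -/
lemma eq_bot_of_rank_le_one {α : Type} [Subsingleton α] {H : Subgroup (FreeGroup α)}
    (hi : H.index = 0) : H = ⊥ := by
  rcases isEmpty_or_nonempty α with h | ⟨⟨a⟩⟩
  · exact Subsingleton.elim _ _
  · have := uniqueOfSubsingleton a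
    let e := (FreeGroup.mulEquivIntOfUnique (α := α))
    have hidx : (H.map e.toMonoidHom).index = 0 := by
      rw [← hi]
      exact Subgroup.index_map_equiv H e
    have hb : H.map e.toMonoidHom = ⊥ := by
      rw [Subgroup.eq_bot_iff_forall]
      intro x hx
      have h1 : Subgroup.zpowers x ≤ H.map e.toMonoidHom := by simpa using hx
      have h2 := Subgroup.index_dvd_of_le h1
      rw [hidx, zero_dvd_iff] at h2
      have h3 : (AddSubgroup.zmultiples x.toAdd).index = 0 := by
        rw [← AddSubgroup.index_toSubgroup, ← h2]
        rfl
      rw [Int.index_zmultiples, Int.natAbs_eq_zero] at h3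
      exact h3
    rwa [Subgroup.map_eq_bot_iff_of_injective _ e.injective] at hb

theorem rank_two_join
    (m : ℕ) (hm : 2 ≤ m)
    (H K : Subgroup (FreeGroup (Fin m))) (hH : H.FG) (hK : K.FG)
    (hHL : (H.subgroupOf (H ⊔ K)).index = 0)
    (hKL : (K.subgroupOf (H ⊔ K)).index = 0) :
    ∃ δ : (H ⊔ K : Subgroup (FreeGroup (Fin m))) →* FreeGroup (Fin 2),
      Function.Surjective δ ∧
      Set.InjOn δ (H.subgroupOf (H ⊔ K) : Set (H ⊔ K : Subgroup (FreeGroup (Fin m)))) ∧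
      Set.InjOn δ (K.subgroupOf (H ⊔ K) : Set (H ⊔ K : Subgroup (FreeGroup (Fin m)))) ∧
      ((H ⊓ K).subgroupOf (H ⊔ K)).map δ
        = (H.subgroupOf (H ⊔ K)).map δ ⊓ (K.subgroupOf (H ⊔ K)).map δ := by
  classical
  have hfg : ∀ P : Subgroup (FreeGroup (Fin m)), P ≤ H ⊔ K → P.FG →
      (P.subgroupOf (H ⊔ K)).FG := by
    intro P hP hPF
    rw [← Group.fg_iff_subgroup_fg] at hPF ⊢
    exact Group.fg_of_surjective (f := (Subgroup.subgroupOfEquivOfLe hP).symm.toMonoidHom)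
      (Subgroup.subgroupOfEquivOfLe hP).symm.surjective
  have hLfg : Group.FG (H ⊔ K : Subgroup (FreeGroup (Fin m))) :=
    (Group.fg_iff_subgroup_fg _).2 (hH.sup hK)
  let e₀ := IsFreeGroup.toFreeGroup (H ⊔ K : Subgroup (FreeGroup (Fin m)))
  have hgen : Finite (IsFreeGroup.Generators (H ⊔ K : Subgroup (FreeGroup (Fin m)))) :=
    finite_of_fg (Group.fg_of_surjective (f := e₀.toMonoidHom) e₀.surjective)
  obtain ⟨r, ⟨b⟩⟩ := Finite.exists_equiv_fin
    (IsFreeGroup.Generators (H ⊔ K : Subgroup (FreeGroup (Fin m))))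
  let e := e₀.trans (FreeGroup.freeGroupCongr b)
  have hidx : ∀ P : Subgroup (H ⊔ K : Subgroup (FreeGroup (Fin m))), P.index = 0 →
      (P.map e.toMonoidHom).index = 0 := fun P hP => by
    rw [← hP]; exact Subgroup.index_map_equiv P e
  -- In rank at most one, both subgroups are trivial, hence so is their join, in which they then have
  -- index one.
  have hr : 2 ≤ r := by
    by_contra! hlt
    have : Subsingleton (Fin r) := Fin.subsingleton_iff_le_one.2 (by omega)
    have hbot : ∀ P : Subgroup (H ⊔ K : Subgroup (FreeGroup (Fin m))), P.index = 0 → P = ⊥ :=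
      fun P hP => by
        have := eq_bot_of_rank_le_one (hidx P hP)
        rwa [Subgroup.map_eq_bot_iff_of_injective _ e.injective] at this
    have hH0 := hbot _ hHL
    have hK0 := hbot _ hKL
    rw [Subgroup.subgroupOf_eq_bot, disjoint_iff, inf_eq_left.2 le_sup_left] at hH0
    rw [Subgroup.subgroupOf_eq_bot, disjoint_iff, inf_eq_left.2 le_sup_right] at hK0
    subst hH0 hK0
    have h1 : ((⊥ : Subgroup (FreeGroup (Fin m))).subgroupOf (⊥ ⊔ ⊥)) = ⊤ :=
      Subgroup.subgroupOf_eq_top.2 (by simp)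
    rw [h1, Subgroup.index_top] at hHL
    exact one_ne_zero hHL
  obtain ⟨q, rfl⟩ := Nat.exists_eq_add_of_le' hr
  obtain ⟨δ₀, hsurj, hδ₀⟩ := exists_epi (fg_map (hfg H le_sup_left hH) e.toMonoidHom)
    (fg_map (hfg K le_sup_right hK) e.toMonoidHom) (hidx _ hHL) (hidx _ hKL)
  let δ := δ₀.comp e.toMonoidHom
  have hδ : ∀ h ∈ H.subgroupOf (H ⊔ K), ∀ k ∈ K.subgroupOf (H ⊔ K), δ h = δ k → h = k := by
    intro h hh k hk heq
    have h1 := hδ₀ _ (Subgroup.mem_map_of_mem e.toMonoidHom hh) _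
      (Subgroup.mem_map_of_mem e.toMonoidHom (inv_mem hk))
      (by
        rw [← map_mul]
        change δ (h * k⁻¹) = 1
        rw [map_mul, map_inv, heq, mul_inv_cancel])
    rw [← map_mul] at h1
    exact mul_inv_eq_one.1 ((map_eq_one_iff e.toMonoidHom e.injective).1 h1)
  refine ⟨δ, hsurj.comp e.surjective, ?_, ?_, ?_⟩
  · intro x hx y hy hxy
    refine mul_inv_eq_one.1 (hδ (x * y⁻¹) (mul_mem hx (inv_mem hy)) 1 (one_mem _) ?_)
    rw [map_mul, map_inv, hxy, mul_inv_cancel, map_one]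
  · intro x hx y hy hxy
    refine mul_inv_eq_one.1 (hδ 1 (one_mem _) (x * y⁻¹) (mul_mem hx (inv_mem hy)) ?_).symm
    rw [map_mul, map_inv, hxy, mul_inv_cancel, map_one]
  · refine le_antisymm (le_inf (Subgroup.map_mono ?_) (Subgroup.map_mono ?_)) ?_
    · exact fun x hx => hx.1
    · exact fun x hx => hx.2
    · rintro _ ⟨⟨h, hh, rfl⟩, ⟨k, hk, hkh⟩⟩
      have := hδ h hh k hk hkh.symm
      subst this
      exact ⟨h, ⟨hh, hk⟩, rfl⟩
end

section
/- Let F be a free group and let H and K be finitely generated subgroups of F such that neither H nor K has finite index in the join ⟨H, K⟩. Then in a free group F₂ of rank 2 there exist subgroups H' and K' such that H' is isomorphic to H, K' is isomorphic to K, H' ∩ K' is isomorphic to H ∩ K, and ⟨H', K'⟩ = F₂; in particular, the join of two finitely generated subgroups, neither of finite index in the join, can always be realized (preserving the isomorphism types of the two subgroups and of their intersection) as a join of rank 2. -/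
/-!
Write `L = H ⊔ K`. It is finitely generated and free by Nielsen–Schreier, and since `H` and `K`
have infinite index in it, its rank `n` is finite and at least two. It is enough to find a
surjection `φ : L → F₂` such that `φ h = φ k` forces `h = k` for all `h ∈ H` and `k ∈ K`
(`exists_separating`): such a `φ` is injective on `H` and on `K`, and `φ H ∩ φ K = φ (H ∩ K)`, so
`H' = φ H` and `K' = φ K` are as required.

The surjection is built in two stages.

*Change of basis.* The reduced words of elements of `H` visit only finitely many cosets in `L ⧸ H`;
these form the core of `H`, and every coset fixed by a nonempty positive word lies in it
(`mem_core_of_fixed`). Let `V` be the union of the two cores in the disjoint union of `L ⧸ H` and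
`L ⧸ K`, a set on which `L` acts with infinite orbits. Then there is a basis of `L` consisting of
positive words, each of which drives every point out of `V` at some moment along its path
(`exists_admissible_trapped_eq_empty`). Among the bases obtained by the substitutions
`xᵢ ↦ xⱼ xᵢ`, take one for which the sets `Cᵢ` of points trapped in `V` by the `i`-th word are
minimal. Minimality shows that the basis permutes a nonempty `Cᵢ`, which would then contain an
infinite orbit. With respect to the new basis, no nontrivial power of a basis element fixes a coset
of `H` or of `K`, so by pigeonhole there is a bound `D` such that no product `h * k` contains
`D` equal consecutive letters in its reduced word (`exists_power_bound`).

*Collapse.* Send two of the basis elements to the generators `a` and `b` of `F₂`, and each further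
`xᵢ` to `a ^ Nᵢ * b ^ Nᵢ`, where the `Nᵢ` are distinct positive multiples of `D`. In the image of a
reduced word without `D` equal consecutive letters the syllables never cancel, so the image is
nontrivial (`lead_collapse`). Applied to `h⁻¹ * k`, this gives the separation property.
-/

namespace JoinRankTwo

open FreeGroup
open scoped Pointwise

theorem suffix_append_cases {α : Type*} {B L₁ L₂ : List α} (h : B <:+ L₁ ++ L₂) :
    B <:+ L₂ ∨ ∃ B', B' <:+ L₁ ∧ B = B' ++ L₂ := by
  obtain ⟨A, hA⟩ := h
  rcases List.append_eq_append_iff.1 hA with ⟨C, h1, h2⟩ | ⟨C, h1, h2⟩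
  · exact .inr ⟨C, ⟨A, h1.symm⟩, h2⟩
  · exact .inl ⟨C, h2.symm⟩

variable {ι : Type*}

/-- Any condition on the group elements spelled by the suffixes of a word passes to the reductions
of that word, because a reduction step creates no new such elements. -/
theorem forall_suffix_of_red {P : FreeGroup ι → Prop} {L L' : List (ι × Bool)}
    (hr : Red L L') (h : ∀ B, B <:+ L → P (mk B)) : ∀ B, B <:+ L' → P (mk B) := by
  induction hr with
  | refl => exact h
  | tail _ hs ih =>
    rcases hs with @⟨L₁, L₂, x, b⟩
    intro B hB
    rcases suffix_append_cases hB with hB | ⟨B', hB', rfl⟩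
    · exact ih B (hB.trans ⟨L₁ ++ [(x, b), (x, !b)], by simp⟩)
    · have := ih (B' ++ (x, b) :: (x, !b) :: L₂) (by
        obtain ⟨A, rfl⟩ := hB'
        exact ⟨A, by simp⟩)
      rwa [show mk (B' ++ (x, b) :: (x, !b) :: L₂) = mk (B' ++ L₂) from Quot.sound Red.Step.not]
        at this

/-! ### The core of a finitely generated subgroup -/

section Core
variable [DecidableEq ι]

/-- The cosets `g H` visited when the reduced word of some `h ∈ H` is read from the right,
starting at the coset `H`; equivalently, the vertices of the Stallings core graph of `H` with its
base point. -/
def core (H : Subgroup (FreeGroup ι)) : Set (FreeGroup ι ⧸ H) :=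
  {c | ∃ h ∈ H, ∃ B, B <:+ h.toWord ∧ (mk B : FreeGroup ι) = c}

/-- The core is covered by the cosets visited by the reduced words of finitely many generators. -/
theorem core_finite {H : Subgroup (FreeGroup ι)} (hH : H.FG) : (core H).Finite := by
  obtain ⟨S, rfl⟩ := hH
  set H := Subgroup.closure (S : Set (FreeGroup ι)) with hHdef
  let V : Set (FreeGroup ι ⧸ H) :=
    {((1 : FreeGroup ι) : FreeGroup ι ⧸ H)} ∪
    ⋃ s ∈ S, (fun B : List (ι × Bool) => ((mk B : FreeGroup ι) : FreeGroup ι ⧸ H)) ''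
      {B | B ∈ s.toWord.tails}
  have hV : V.Finite :=
    (Set.finite_singleton _).union
      (S.finite_toSet.biUnion fun s _ => Set.Finite.image _ (List.finite_toSet _))
  refine hV.subset ?_
  have key : ∀ h ∈ H, ∀ B, B <:+ h.toWord → ((mk B : FreeGroup ι) : FreeGroup ι ⧸ H) ∈ V := by
    intro h hh
    induction hh using Subgroup.closure_induction with
    | mem s hs =>
      intro B hB
      refine .inr (Set.mem_biUnion hs ⟨B, ?_, rfl⟩)
      simpa using hB
    | one =>
      intro B hB
      rw [toWord_one] at hB
      rw [List.suffix_nil.1 hB]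
      exact .inl rfl
    | mul a b ha hb iha ihb =>
      rw [toWord_mul]
      refine forall_suffix_of_red
        (P := fun g : FreeGroup ι => (g : FreeGroup ι ⧸ H) ∈ V) reduce.red ?_
      intro B hB
      rcases suffix_append_cases hB with hB | ⟨B', hB', rfl⟩
      · exact ihb B hB
      · have h1 := iha B' hB'
        have : ((mk (B' ++ b.toWord) : FreeGroup ι) : FreeGroup ι ⧸ H) = (mk B' : FreeGroup ι) := by
          rw [← mul_mk, mk_toWord]
          exact QuotientGroup.mk_mul_of_mem _ hb
        rwa [this]
    | inv a ha iha =>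
      intro B hB
      rw [toWord_inv] at hB
      obtain ⟨A, hA⟩ := hB
      have h1 : invRev B ++ invRev A = a.toWord := by rw [← invRev_append, hA, invRev_invRev]
      have h2 := iha (invRev A) ⟨_, h1⟩
      have : ((mk B : FreeGroup ι) : FreeGroup ι ⧸ H) = (mk (invRev A) : FreeGroup ι) := by
        rw [QuotientGroup.eq]
        have h3 : a = (mk B)⁻¹ * mk (invRev A) := by
          rw [inv_mk, mul_mk, h1, mk_toWord]
        rwa [← h3]
      rwa [this]
  rintro _ ⟨h, hh, B, hB, rfl⟩
  exact key h hh B hB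

/-- When a word `W` with all letters of the same sign `b` is put to the left of `L`, the result
still starts with sign `b` after reduction, unless all of `W` is absorbed by `L`. -/
theorem append_sameSign (b : Bool) (W : List ι) (L : List (ι × Bool)) :
    (∃ x R, reduce (W.map (·, b) ++ L) = (x, b) :: R) ∨
      (reduce (W.map (·, b) ++ L)).length + W.length ≤ (reduce L).length := by
  induction W with
  | nil => right; simp
  | cons x W ih =>
    rw [List.map_cons, List.cons_append, reduce.cons]
    rcases ih with ⟨y, R, h⟩ | h
    · left
      rw [h]
      refine ⟨x, (y, b) :: R, ?_⟩
      simp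
    · rcases hR : reduce (W.map (·, b) ++ L) with _ | ⟨⟨y, c⟩, R⟩
      · left; exact ⟨x, [], rfl⟩
      · by_cases hxy : x = y ∧ b = !c
        · right
          rw [hR] at h
          simp [hxy] at h ⊢
          omega
        · left
          refine ⟨x, (y, c) :: R, ?_⟩
          simp [hxy]

/-- The element of the free group spelled by a word in the generators, without inverses. -/
def posWord (W : List ι) : FreeGroup ι := mk (W.map (·, true))

omit [DecidableEq ι] in
theorem posWord_append (W W' : List ι) : posWord (W ++ W') = posWord W * posWord W' := by
  simp [posWord]

omit [DecidableEq ι] in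
theorem posWord_singleton (i : ι) : posWord [i] = of i := rfl

omit [DecidableEq ι] in
theorem posWord_flatten (d : ℕ) (W : List ι) :
    posWord (List.replicate d W).flatten = posWord W ^ d := by
  induction d with
  | zero => rfl
  | succ d ih => rw [List.replicate_succ, List.flatten_cons, posWord_append, ih, pow_succ']

/-- A high enough power of a word of constant sign `b` survives cancellation against `g`, so the
product starts with a letter of sign `b`. -/
theorem exists_toWord_pow (b : Bool) (W : List ι) (hW : W ≠ []) (g : FreeGroup ι) :
    ∃ k : ℕ, ∃ x R, (mk (W.map (·, b)) ^ k * g).toWord = (x, b) :: R := by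
  refine ⟨g.toWord.length + 1, ?_⟩
  have h := append_sameSign b (List.replicate (g.toWord.length + 1) W).flatten g.toWord
  have e : reduce ((List.replicate (g.toWord.length + 1) W).flatten.map (·, b) ++ g.toWord) =
      (mk (W.map (·, b)) ^ (g.toWord.length + 1) * g).toWord := by
    rw [← toWord_mk, ← mul_mk, mk_toWord, pow_mk]
    simp [List.map_flatten]
  rw [e] at h
  refine h.resolve_right fun h => ?_
  have h1 : 1 ≤ W.length := List.length_pos_iff.2 hW
  rw [reduce_toWord] at h
  have : (List.replicate (g.toWord.length + 1) W).flatten.length =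
    (g.toWord.length + 1) * W.length := by simp
  nlinarith

/-- If a positive word `W` fixes `g H`, then for large `k`, `l` the reduced words of `W ^ k * g`
and `W ^ (-l) * g` start with letters of opposite signs. Hence nothing cancels in
`(W ^ (-l) * g)⁻¹ * (W ^ k * g) ∈ H`, and the reduced word of this element visits `g H`. -/
theorem mem_core_of_fixed {H : Subgroup (FreeGroup ι)} {W : List ι} (hW : W ≠ [])
    {c : FreeGroup ι ⧸ H} (hc : posWord W • c = c) : c ∈ core H := by
  induction c using QuotientGroup.induction_on with | _ g
  obtain ⟨k, x, R, hk⟩ := exists_toWord_pow true W hW g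
  obtain ⟨l, y, T, hl⟩ := exists_toWord_pow false W.reverse (by simpa using hW) g
  have hinv : mk (W.reverse.map (·, false)) = (posWord W)⁻¹ := by
    simp [posWord, inv_mk, invRev, List.map_reverse, Function.comp_def]
  rw [hinv] at hl
  change (posWord W ^ k * g).toWord = _ at hk
  have fix : ∀ m : ℕ, ((posWord W ^ m * g : FreeGroup ι) : FreeGroup ι ⧸ H) = g := by
    intro m
    induction m with
    | zero => simp
    | succ m ih =>
      have : ((posWord W ^ (m + 1) * g : FreeGroup ι) : FreeGroup ι ⧸ H) =
        posWord W • ((posWord W ^ m * g : FreeGroup ι) : FreeGroup ι ⧸ H) := by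
        rw [pow_succ', mul_assoc]; rfl
      rw [this, ih, hc]
  set u := posWord W ^ k * g with hu
  set v := (posWord W)⁻¹ ^ l * g with hv
  have hmem : v⁻¹ * u ∈ H := by
    have : v⁻¹ * u = g⁻¹ * (posWord W ^ (l + k) * g) := by
      rw [hu, hv, pow_add, inv_pow]; group
    rw [this, ← QuotientGroup.eq, fix]
  have hred : FreeGroup.IsReduced (invRev v.toWord ++ u.toWord) := by
    have h1 : FreeGroup.IsReduced (invRev v.toWord) := by rw [← toWord_inv]; exact isReduced_toWord
    have h2 : FreeGroup.IsReduced u.toWord := isReduced_toWord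
    rw [FreeGroup.IsReduced, List.isChain_append]
    refine ⟨h1, h2, ?_⟩
    rw [hl, hk]
    simp [invRev]
  refine ⟨v⁻¹ * u, hmem, u.toWord, ?_, ?_⟩
  · have : (v⁻¹ * u).toWord = invRev v.toWord ++ u.toWord := by
      rw [toWord_mul, toWord_inv, hred.reduce_eq]
    rw [this]; exact List.suffix_append _ _
  · rw [mk_toWord, hu]; exact fix k

end Core

/-! ### Positive bases that leave a finite set -/

section Escape
variable [DecidableEq ι]

/-- The families of positive words obtained from the standard basis by finitely many substitutions
`Aᵢ ↦ Aⱼ Aᵢ` with `i ≠ j`. Each of them is again a basis, by `Admissible.exists_mulEquiv`. -/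
inductive Admissible : (ι → List ι) → Prop
  | id : Admissible fun i => [i]
  | step {A : ι → List ι} {i j : ι} (hij : i ≠ j) (hA : Admissible A) :
      Admissible (Function.update A i (A j ++ A i))

/-- The automorphism of the free group that maps `xᵢ` to `xⱼ xᵢ` and fixes the other
generators. -/
def transvection {i j : ι} (hij : i ≠ j) : FreeGroup ι ≃* FreeGroup ι :=
  MonoidHom.toMulEquiv (lift (Function.update of i (of j * of i)))
    (lift (Function.update of i ((of j)⁻¹ * of i)))
    (by
      ext k
      by_cases hk : k = i
      · subst hk; simp [hij.symm]
      · simp [hk])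
    (by
      ext k
      by_cases hk : k = i
      · subst hk; simp [hij.symm]
      · simp [hk])

theorem Admissible.exists_mulEquiv {A : ι → List ι} (hA : Admissible A) :
    ∃ α : FreeGroup ι ≃* FreeGroup ι, ∀ i, α (of i) = posWord (A i) := by
  induction hA with
  | id => exact ⟨MulEquiv.refl _, fun i => rfl⟩
  | @step A i j hij _ ih =>
    obtain ⟨α, hα⟩ := ih
    refine ⟨(transvection hij).trans α, fun k => ?_⟩
    by_cases hk : k = i
    · subst hk; simp [transvection, posWord_append, hα]
    · simp [transvection, hk, hα]

theorem Admissible.ne_nil {A : ι → List ι} (hA : Admissible A) (i : ι) : A i ≠ [] := by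
  induction hA generalizing i with
  | id => simp
  | @step A k j hij _ ih =>
    by_cases hk : i = k
    · subst hk; simp [ih]
    · simp [hk, ih]

variable {X : Type*} [MulAction (FreeGroup ι) X]

/-- The points that stay in `V` at every moment while the word `W` acts on them, one letter at a
time from the right. Both the initial point and the final point have to lie in `V`. -/
def trapped (V : Set X) (W : List ι) : Set X :=
  {v | ∀ B, B <:+ W → posWord B • v ∈ V}

omit [DecidableEq ι] in
theorem mem_trapped_append {V : Set X} {W W' : List ι} {v : X} :
    v ∈ trapped V (W ++ W') ↔ v ∈ trapped V W' ∧ posWord W' • v ∈ trapped V W := by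
  constructor
  · refine fun h => ⟨fun B hB => h B (hB.trans (List.suffix_append _ _)), fun B hB => ?_⟩
    rw [smul_smul, ← posWord_append]
    refine h _ ?_
    obtain ⟨A, rfl⟩ := hB
    exact ⟨A, by simp⟩
  · rintro ⟨h1, h2⟩ B hB
    rcases suffix_append_cases hB with hB | ⟨B', hB', rfl⟩
    · exact h1 B hB
    · rw [posWord_append, mul_smul]; exact h2 B' hB'

omit [DecidableEq ι] in
theorem trapped_subset (V : Set X) (W : List ι) : trapped V W ⊆ V := by
  intro v hv
  have := hv [] List.nil_suffix
  change (1 : FreeGroup ι) • v ∈ V at this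
  simpa using this

/-- If all orbits are infinite and `V` is finite, then some admissible basis consists of words
that trap no point in `V`. -/
theorem exists_admissible_trapped_eq_empty [Finite ι] [Nontrivial ι]
    (hX : ∀ v : X, (MulAction.orbit (FreeGroup ι) v).Infinite) {V : Set X} (hV : V.Finite) :
    ∃ A : ι → List ι, Admissible A ∧ ∀ i, trapped V (A i) = ∅ := by
  let C : (ι → List ι) → ι → Set X := fun A i => trapped V (A i)
  have hfin : {c | ∃ A, Admissible A ∧ C A = c}.Finite := by
    refine (Set.Finite.pi' (t := fun _ : ι => 𝒫 V) fun _ => hV.powerset).subset ?_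
    rintro _ ⟨A, -, rfl⟩ i
    exact trapped_subset V (A i)
  obtain ⟨_, hmin⟩ := hfin.exists_minimal ⟨_, _, Admissible.id, rfl⟩
  obtain ⟨A, hA, rfl⟩ := hmin.prop
  -- By minimality, a substitution at a basis with the same trapped sets cannot shrink them.
  have hstep : ∀ A', Admissible A' → C A' = C A → ∀ i j, i ≠ j →
      C (Function.update A' i (A' j ++ A' i)) = C A := by
    intro A' hA' hC i j hij
    refine (hmin.eq_of_le ⟨_, Admissible.step hij hA', rfl⟩ ?_)
    rw [← hC]
    intro k
    by_cases hk : k = i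
    · subst hk
      intro v hv
      simp only [C, Function.update_self] at hv
      exact (mem_trapped_append.1 hv).1
    · simp [C, hk]
  -- Hence the word `Aᵢ` carries the points it traps to points trapped by `Aⱼ`.
  have hstep' : ∀ A', Admissible A' → C A' = C A → ∀ i j, i ≠ j → ∀ v ∈ C A i,
      posWord (A' i) • v ∈ C A j := by
    intro A' hA' hC i j hij v hv
    have h := congrFun (hstep A' hA' hC i j hij) i
    rw [← h] at hv
    simp only [C, Function.update_self] at hv
    rw [← hC]
    exact (mem_trapped_append.1 hv).2
  have h1 : ∀ i j, i ≠ j → ∀ v ∈ C A i, posWord (A i) • v ∈ C A j := hstep' A hA rfl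
  have h2 : ∀ i j, i ≠ j → ∀ v ∈ C A i, posWord (A j) • posWord (A i) • v ∈ C A j := by
    intro i j hij v hv
    have := hstep' _ (hA.step hij) (hstep A hA rfl i j hij) i j hij v hv
    rwa [Function.update_self, posWord_append, mul_smul] at this
  refine ⟨A, hA, fun i => ?_⟩
  by_contra hne
  obtain ⟨v, hv⟩ := Set.nonempty_iff_ne_empty.2 hne
  have hCf : (C A i).Finite := hV.subset (trapped_subset V _)
  let S := MulAction.stabilizer (FreeGroup ι) (C A i)
  have hS : ∀ g : FreeGroup ι, (∀ w ∈ C A i, g • w ∈ C A i) → g ∈ S := by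
    intro g hg
    rw [MulAction.mem_stabilizer_set_iff_smul_set_subset hCf]
    rintro _ ⟨w, hw, rfl⟩
    exact hg w hw
  -- Both `Aⱼ Aᵢ` and `Aᵢ Aⱼ Aᵢ` preserve `Cᵢ`, so both `Aᵢ` and `Aⱼ` do.
  have key : ∀ j, i ≠ j → posWord (A i) ∈ S ∧ posWord (A j) ∈ S := by
    intro j hij
    have a1 : posWord (A j) * posWord (A i) ∈ S := by
      refine hS _ fun w hw => ?_
      rw [mul_smul]
      exact h1 j i hij.symm _ (h1 i j hij w hw)
    have a2 : posWord (A i) * (posWord (A j) * posWord (A i)) ∈ S := by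
      refine hS _ fun w hw => ?_
      rw [mul_smul, mul_smul]
      exact h2 j i hij.symm _ (h1 i j hij w hw)
    have a3 : posWord (A i) ∈ S := (S.mul_mem_cancel_right a1).1 a2
    exact ⟨a3, (S.mul_mem_cancel_right a3).1 a1⟩
  obtain ⟨j₀, hj₀⟩ := exists_ne i
  have hgen : ∀ j, posWord (A j) ∈ S := by
    intro j
    by_cases hij : i = j
    · subst hij; exact (key j₀ hj₀.symm).1
    · exact (key j hij).2
  obtain ⟨α, hα⟩ := hA.exists_mulEquiv
  have htop : S.comap α.toMonoidHom = ⊤ := by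
    rw [eq_top_iff, ← closure_range_of, Subgroup.closure_le]
    rintro _ ⟨j, rfl⟩
    change α (of j) ∈ S
    rw [hα]; exact hgen j
  -- As the basis preserves `Cᵢ`, the whole orbit of `v` lies in this finite set.
  refine hX v (hCf.subset ?_)
  rintro _ ⟨g, rfl⟩
  have hg : α.symm g ∈ S.comap α.toMonoidHom := htop ▸ Subgroup.mem_top _
  have hg' : g ∈ S := by simpa using hg
  have : g • C A i = C A i := hg'
  change g • v ∈ C A i
  rw [← this]
  exact Set.smul_mem_smul_set hv

end Escape

/-! ### Bounding powers of letters in products `h * k` -/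

section Bound
variable [DecidableEq ι]

/-- If a power of a positive word `W` fixes the coset `c`, then every coset on the path of `W`
from `c` is fixed by a power of a cyclic rotation of `W`, and so the whole path stays in the
core. -/
theorem mem_core_of_pow_fixed {H : Subgroup (FreeGroup ι)} {W : List ι} (hW : W ≠ []) {d : ℕ}
    (hd : d ≠ 0) {c : FreeGroup ι ⧸ H} (hc : posWord W ^ d • c = c) : c ∈ trapped (core H) W := by
  rintro B ⟨A, rfl⟩
  obtain ⟨d, rfl⟩ := Nat.exists_eq_succ_of_ne_zero hd
  refine mem_core_of_fixed (W := B ++ (List.replicate d (A ++ B)).flatten ++ A) ?_ ?_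
  · intro h
    simp only [List.append_eq_nil_iff] at h
    exact hW (by simp [h])
  · conv_rhs => rw [← hc]
    rw [posWord_append, posWord_append, posWord_flatten, smul_smul, smul_smul, pow_succ,
      posWord_append]
    congr 1
    group

omit [DecidableEq ι] in
theorem mk_replicate (d : ℕ) (i : ι) (b : Bool) :
    mk (List.replicate d (i, b)) = of i ^ ((if b then (1 : ℤ) else -1) * d) := by
  have h : mk (List.replicate d (i, b)) = mk [(i, b)] ^ d := by
    rw [pow_mk]; simp
  rw [h]
  cases b
  · have : (mk [(i, false)] : FreeGroup ι) = (of i)⁻¹ := rfl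
    rw [this]; simp
  · have : (mk [(i, true)] : FreeGroup ι) = of i := rfl
    rw [this]; simp

/-- Reading the reduced word of `h * k` from the right visits, up to the shift by `k⁻¹` in the
case of `H`, only cosets of the two cores. A power of a letter that is longer than the number of
these cosets returns to one of them, so some smaller power of the letter fixes a coset. -/
theorem exists_power_bound {H K : Subgroup (FreeGroup ι)} (hH : H.FG) (hK : K.FG)
    (hH' : ∀ (i : ι) (d : ℕ), d ≠ 0 → ∀ c : FreeGroup ι ⧸ H, of i ^ d • c ≠ c)
    (hK' : ∀ (i : ι) (d : ℕ), d ≠ 0 → ∀ c : FreeGroup ι ⧸ K, of i ^ d • c ≠ c) :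
    ∃ D : ℕ, ∀ h ∈ H, ∀ k ∈ K, ∀ i b, ¬ List.replicate D (i, b) <:+: (h * k).toWord := by
  have hfH := core_finite hH
  have hfK := core_finite hK
  have : Finite (core H ⊕ core K) := by
    have := hfH.to_subtype
    have := hfK.to_subtype
    infer_instance
  refine ⟨Nat.card (core H ⊕ core K), fun h hh k hk i b hinf => ?_⟩
  set D := Nat.card (core H ⊕ core K) with hD
  -- The unreduced word of `h * k` has this property, and it passes to the reduced word.
  have hsuf : ∀ B, B <:+ (h * k).toWord →
      ((mk B * k⁻¹ : FreeGroup ι) : FreeGroup ι ⧸ H) ∈ core H ∨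
      ((mk B : FreeGroup ι) : FreeGroup ι ⧸ K) ∈ core K := by
    rw [toWord_mul]
    refine forall_suffix_of_red (P := fun g : FreeGroup ι =>
      ((g * k⁻¹ : FreeGroup ι) : FreeGroup ι ⧸ H) ∈ core H ∨
      (g : FreeGroup ι ⧸ K) ∈ core K) reduce.red ?_
    intro B hB
    rcases suffix_append_cases hB with hB | ⟨B', hB', rfl⟩
    · exact .inr ⟨k, hk, B, hB, rfl⟩
    · refine .inl ⟨h, hh, B', hB', ?_⟩
      rw [← mul_mk, mk_toWord, mul_inv_cancel_right]
  obtain ⟨S, T, hST⟩ := hinf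
  have hsuf' : ∀ j : Fin (D + 1),
      ((mk (List.replicate j (i, b) ++ T) * k⁻¹ : FreeGroup ι) : FreeGroup ι ⧸ H) ∈ core H ∨
      ((mk (List.replicate j (i, b) ++ T) : FreeGroup ι) : FreeGroup ι ⧸ K) ∈ core K := by
    intro j
    refine hsuf _ ⟨S ++ List.replicate (D - j) (i, b), ?_⟩
    rw [← hST, List.append_assoc, List.append_assoc, ← List.append_assoc (List.replicate _ _),
      List.replicate_append_replicate, Nat.sub_add_cancel (by omega)]
  classical
  let f : Fin (D + 1) → core H ⊕ core K := fun j =>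
    if hj : ((mk (List.replicate j (i, b) ++ T) * k⁻¹ : FreeGroup ι) : FreeGroup ι ⧸ H) ∈ core H
    then .inl ⟨_, hj⟩ else .inr ⟨_, (hsuf' j).resolve_left hj⟩
  have hninj : ¬ Function.Injective f := by
    intro hf
    have := Nat.card_le_card_of_injective f hf
    simp at this
    omega
  have hshift : ∀ j j' : Fin (D + 1), j ≤ j' → mk (List.replicate j' (i, b) ++ T) =
      of i ^ ((if b then (1 : ℤ) else -1) * ((j' - j : ℕ) : ℤ)) *
        mk (List.replicate j (i, b) ++ T) := by
    intro j j' hj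
    rw [← mk_replicate, mul_mk, ← List.append_assoc, List.replicate_append_replicate,
      Nat.sub_add_cancel (by simpa using hj)]
  have hfix : ∀ {X : Type _} [MulAction (FreeGroup ι) X] (d : ℕ) (x : X),
      of i ^ ((if b then (1 : ℤ) else -1) * (d : ℤ)) • x = x → of i ^ d • x = x := by
    intro X _ d x hx
    cases b
    · rw [show (of i ^ ((if false then (1 : ℤ) else -1) * (d : ℤ)) : FreeGroup ι) =
        (of i ^ d)⁻¹ by simp, inv_smul_eq_iff] at hx
      exact hx.symm
    · simpa using hx
  have hlt : ∀ j j' : Fin (D + 1), j < j' → f j ≠ f j' := by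
    intro j j' hj he
    have hd : (j' - j : ℕ) ≠ 0 := by
      have : (j : ℕ) < j' := hj
      omega
    simp only [f] at he
    split_ifs at he with h1 h2 h2
    · rw [Sum.inl.injEq, Subtype.mk.injEq, hshift j j' hj.le, mul_assoc] at he
      exact hH' i _ hd
        ((mk (List.replicate j (i, b) ++ T) * k⁻¹ : FreeGroup ι) : FreeGroup ι ⧸ H)
        (hfix _ _ he.symm)
    · rw [Sum.inr.injEq, Subtype.mk.injEq, hshift j j' hj.le] at he
      exact hK' i _ hd
        ((mk (List.replicate j (i, b) ++ T) : FreeGroup ι) : FreeGroup ι ⧸ K)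
        (hfix _ _ he.symm)
  refine hninj fun j j' he => ?_
  rcases lt_trichotomy j j' with h | h | h
  · exact (hlt _ _ h he).elim
  · exact h
  · exact (hlt _ _ h he.symm).elim

end Bound

/-! ### Collapsing to rank two -/

section Collapse

/-- The elements of `F₂` whose reduced word does not start with the generator `c` or its
inverse. -/
def NoStart (c : Fin 2) : Set (FreeGroup (Fin 2)) :=
  {h | ∀ s, ∀ x ∈ h.toWord.head?, x ≠ (c, s)}

theorem one_mem_noStart (c : Fin 2) : 1 ∈ NoStart c := by simp [NoStart]

theorem toWord_zpow_mul {c : Fin 2} {t : ℤ} (ht : t ≠ 0) {h : FreeGroup (Fin 2)}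
    (hh : h ∈ NoStart c) : ∃ s R, (of c ^ t * h).toWord = (c, s) :: R := by
  have key : ∀ (k : ℕ) (s : Bool), (mk (List.replicate k (c, s)) * h).toWord =
      List.replicate k (c, s) ++ h.toWord := by
    intro k s
    have : FreeGroup.IsReduced (List.replicate k (c, s) ++ h.toWord) := by
      rw [FreeGroup.IsReduced, List.isChain_append]
      refine ⟨?_, isReduced_toWord, ?_⟩
      · exact List.isChain_replicate_of_rel _ (fun _ => rfl)
      · intro x hx y hy hxy
        have hx' : x = (c, s) := List.eq_of_mem_replicate (List.mem_of_getLast? hx)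
        subst hx'
        exact (hh y.2 y hy (Prod.ext hxy.symm rfl)).elim
    rw [← this.reduce_eq, ← toWord_mk, ← mul_mk, mk_toWord]
  obtain ⟨k, rfl | rfl⟩ := t.eq_nat_or_neg
  · have := key k true
    rw [mk_replicate] at this
    obtain ⟨k, rfl⟩ := Nat.exists_eq_succ_of_ne_zero (n := k) (by rintro rfl; simp at ht)
    exact ⟨true, List.replicate k (c, true) ++ h.toWord, by
      simpa [List.replicate_succ] using this⟩
  · have := key k false
    rw [mk_replicate] at this
    obtain ⟨k, rfl⟩ := Nat.exists_eq_succ_of_ne_zero (n := k) (by rintro rfl; simp at ht)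
    exact ⟨false, List.replicate k (c, false) ++ h.toWord, by
      simpa [List.replicate_succ] using this⟩

theorem zpow_mul_mem_noStart {c c' : Fin 2} (hc : c ≠ c') {t : ℤ} (ht : t ≠ 0)
    {h : FreeGroup (Fin 2)} (hh : h ∈ NoStart c) : of c ^ t * h ∈ NoStart c' := by
  obtain ⟨s, R, hR⟩ := toWord_zpow_mul ht hh
  intro s' x hx
  rw [hR] at hx
  simp at hx
  subst hx
  simp [hc]

theorem zpow_mul_ne_one {c : Fin 2} {t : ℤ} (ht : t ≠ 0)
    {h : FreeGroup (Fin 2)} (hh : h ∈ NoStart c) : of c ^ t * h ≠ 1 := by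
  obtain ⟨s, R, hR⟩ := toWord_zpow_mul ht hh
  intro h1
  rw [h1] at hR
  simp at hR

variable [DecidableEq ι]

/-- The homomorphism to `F₂ = ⟨a, b⟩` with `xₚ ↦ a`, `x_q ↦ b` and `xᵢ ↦ a ^ Nᵢ * b ^ Nᵢ` for all
other `i`. -/
def collapse (p q : ι) (N : ι → ℤ) : FreeGroup ι →* FreeGroup (Fin 2) :=
  lift fun i => if i = p then of 0 else if i = q then of 1 else of 0 ^ N i * of 1 ^ N i

theorem collapse_surjective {p q : ι} (hpq : p ≠ q) (N : ι → ℤ) :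
    Function.Surjective (collapse p q N) := by
  rw [← MonoidHom.range_eq_top, eq_top_iff, ← closure_range_of, Subgroup.closure_le]
  rintro _ ⟨c, rfl⟩
  fin_cases c
  · exact ⟨of p, by simp [collapse]⟩
  · exact ⟨of q, by simp [collapse, hpq.symm]⟩

/-- The exponent of a letter with sign `s`. -/
abbrev sg (s : Bool) : ℤ := if s then 1 else -1

/-- The invariant for the image under `collapse p q N` of a reduced word, in terms of the first
letter of the word. The image is a power of `a = of 0` or of `b = of 1`, followed by an element
that does not start with that generator. If the first letter is `xₚ` or `x_q`, up to sign, then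
the exponent is known only up to the length `k` of some run of that letter at the start of the
word, and up to a summand `r` that is zero or some `±Nⱼ`, the latter when this run is followed by
`xⱼ` in the case of `xₚ`, or by `xⱼ⁻¹` in the case of `x_q`. -/
inductive Lead (p q : ι) (N : ι → ℤ) : List (ι × Bool) → FreeGroup (Fin 2) → Prop
  | nil : Lead p q N [] 1
  | fst {L s} (k : ℕ) (hk : k ≠ 0) (hpre : List.replicate k (p, s) <+: (p, s) :: L)
      (r : ℤ) (hr : r = 0 ∨ ∃ j, r = N j) {h} (hh : h ∈ NoStart 0) :
      Lead p q N ((p, s) :: L) (of 0 ^ (sg s * k + r) * h)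
  | snd {L s} (k : ℕ) (hk : k ≠ 0) (hpre : List.replicate k (q, s) <+: (q, s) :: L)
      (r : ℤ) (hr : r = 0 ∨ ∃ j, r = N j) {h} (hh : h ∈ NoStart 1) :
      Lead p q N ((q, s) :: L) (of 1 ^ (sg s * k - r) * h)
  | pos {L i} (hp : i ≠ p) (hq : i ≠ q) {h} (hh : h ∈ NoStart 0) :
      Lead p q N ((i, true) :: L) (of 0 ^ N i * h)
  | neg {L i} (hp : i ≠ p) (hq : i ≠ q) {h} (hh : h ∈ NoStart 1) :
      Lead p q N ((i, false) :: L) (of 1 ^ (-N i) * h)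

/-- For exponents `Nᵢ` that are at least `D` and at distance at least `D` from each other, the
leading exponent in `Lead` never vanishes, and it does not vanish either after the syllable
contributed by a further letter `xᵢ` is added. So no nonempty reduced word without `D` equal
consecutive letters collapses to the identity. -/
theorem lead_collapse {p q : ι} (hpq : p ≠ q) {D : ℕ} (hD : D ≠ 0) {N : ι → ℤ}
    (hN : ∀ i, D ≤ N i) (hNN : ∀ i j, i ≠ j → D ≤ |N i - N j|) (L : List (ι × Bool))
    (hL : FreeGroup.IsReduced L) (hb : ∀ i b, ¬ List.replicate D (i, b) <:+: L) :
    Lead p q N L (collapse p q N (mk L)) ∧ (L ≠ [] → collapse p q N (mk L) ≠ 1) := by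
  have hN0 : ∀ i, N i ≠ 0 := fun i => by have := hN i; omega
  have hbound : ∀ {L : List (ι × Bool)} {k i s}, (∀ i b, ¬ List.replicate D (i, b) <:+: L) →
      List.replicate k (i, s) <+: L → k < D := by
    intro L k i s hb hk
    by_contra hlt
    refine hb i s (List.IsInfix.trans ?_ hk.isInfix)
    exact ⟨[], List.replicate (k - D) (i, s), by
      rw [List.nil_append, List.replicate_append_replicate]; congr 1; omega⟩
  -- Each exponent below is a nonzero number of absolute value less than `D`, plus either zero or a
  -- quantity of absolute value at least `D`; the latter may also stand alone.
  have e1 : ∀ {k : ℕ} {s : Bool} {r : ℤ}, k ≠ 0 → k < D → (r = 0 ∨ ∃ j, r = N j) →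
      sg s * k + r ≠ 0 := by
    rintro k s r hk hkD (rfl | ⟨j, rfl⟩)
    · cases s <;> simp [sg, hk]
    · have := hN j
      cases s <;> simp only [sg] <;> simp <;> omega
  have e2 : ∀ {k : ℕ} {s : Bool} {r : ℤ}, k ≠ 0 → k < D → (r = 0 ∨ ∃ j, r = N j) →
      sg s * k - r ≠ 0 := by
    intro k s r hk hkD hr
    have := e1 (s := !s) hk hkD hr
    cases s <;> simp only [sg] at this ⊢ <;> simp at this ⊢ <;> omega
  have e3 : ∀ {k : ℕ} {s : Bool} {r : ℤ} (i), k ≠ 0 → k < D → (r = 0 ∨ ∃ j, r = N j) →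
      N i + (sg s * k - r) ≠ 0 := by
    rintro k s r i hk hkD (rfl | ⟨j, rfl⟩)
    · have := hN i
      cases s <;> simp only [sg] <;> simp <;> omega
    · by_cases hij : i = j
      · subst hij
        cases s <;> simp [sg, hk]
      · have := hNN i j hij
        cases s <;> simp only [sg] <;> simp <;> (rcases abs_cases (N i - N j) with h | h <;> omega)
  have e4 : ∀ {k : ℕ} {s : Bool} {r : ℤ} (i), k ≠ 0 → k < D → (r = 0 ∨ ∃ j, r = N j) →
      -N i + (sg s * k + r) ≠ 0 := by
    intro k s r i hk hkD hr
    have := e3 (s := !s) i hk hkD hr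
    cases s <;> simp only [sg] at this ⊢ <;> simp at this ⊢ <;> omega
  have e5 : ∀ {i j}, i ≠ j → N i - N j ≠ 0 := by
    intro i j hij h0
    have := hNN i j hij
    rw [h0] at this
    simp at this
    omega
  have hne : ∀ {L z}, (∀ i b, ¬ List.replicate D (i, b) <:+: L) → Lead p q N L z → L ≠ [] →
      z ≠ 1 := by
    rintro L z hb hlead hnil
    cases hlead with
    | nil => exact (hnil rfl).elim
    | fst k hk hpre r hr hh => exact zpow_mul_ne_one (e1 hk (hbound hb hpre) hr) hh
    | snd k hk hpre r hr hh => exact zpow_mul_ne_one (e2 hk (hbound hb hpre) hr) hh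
    | pos hp hq hh => exact zpow_mul_ne_one (hN0 _) hh
    | neg hp hq hh => exact zpow_mul_ne_one (neg_ne_zero.2 (hN0 _)) hh
  suffices h : Lead p q N L (collapse p q N (mk L)) from ⟨h, hne hb h⟩
  induction L with
  | nil => rw [← one_eq_mk, _root_.map_one]; exact .nil
  | cons x L ih =>
    have hbL : ∀ i b, ¬ List.replicate D (i, b) <:+: L := fun i b h =>
      hb i b (h.trans (List.suffix_cons x L).isInfix)
    have ih := ih (hL.infix (List.suffix_cons x L).isInfix) hbL
    have hx : ∀ y ∈ L.head?, x.1 = y.1 → x.2 = y.2 := by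
      rw [FreeGroup.IsReduced, List.isChain_cons] at hL
      exact hL.1
    obtain ⟨i, s⟩ := x
    rw [show (mk ((i, s) :: L) : FreeGroup ι) = of i ^ sg s * mk L by
      rw [← List.singleton_append, ← mul_mk]; cases s <;> rfl, _root_.map_mul, map_zpow]
    have hs : List.replicate 1 (i, s) <+: (i, s) :: L := ⟨L, rfl⟩
    generalize collapse p q N (mk L) = z at ih
    by_cases hip : i = p
    · subst hip
      have hi : collapse i q N (of i) = of 0 := by simp [collapse]
      rw [hi]
      have gen : z ∈ NoStart 0 → Lead i q N ((i, s) :: L) (of 0 ^ sg s * z) := fun hz => by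
        simpa using Lead.fst (p := i) (q := q) (N := N) 1 one_ne_zero hs 0 (.inl rfl) hz
      cases ih with
      | nil => exact gen (one_mem_noStart 0)
      | @fst L s' k hk hpre r hr h hh =>
        obtain rfl : s = s' := hx (i, s') rfl rfl
        have := Lead.fst (p := i) (q := q) (N := N) (L := (i, s) :: L) (s := s) (k + 1)
          (by omega) (by rw [List.replicate_succ]; exact List.cons_prefix_cons.2 ⟨rfl, hpre⟩) r hr hh
        rw [← mul_assoc, ← zpow_add]
        convert this using 3
        push_cast; ring
      | snd k hk hpre r hr hh =>
        exact gen (zpow_mul_mem_noStart (by decide) (e2 hk (hbound hbL hpre) hr) hh)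
      | @pos L j hp hq h hh =>
        have := Lead.fst (p := i) (q := q) (N := N) 1 one_ne_zero hs (N j) (.inr ⟨j, rfl⟩) hh
        rw [← mul_assoc, ← zpow_add]
        simpa using this
      | neg hp hq hh =>
        exact gen (zpow_mul_mem_noStart (by decide) (neg_ne_zero.2 (hN0 _)) hh)
    by_cases hiq : i = q
    · subst hiq
      have hi : collapse p i N (of i) = of 1 := by simp [collapse, hip]
      rw [hi]
      have gen : z ∈ NoStart 1 → Lead p i N ((i, s) :: L) (of 1 ^ sg s * z) := fun hz => by
        simpa using Lead.snd (p := p) (q := i) (N := N) 1 one_ne_zero hs 0 (.inl rfl) hz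
      cases ih with
      | nil => exact gen (one_mem_noStart 1)
      | @snd L s' k hk hpre r hr h hh =>
        obtain rfl : s = s' := hx (i, s') rfl rfl
        have := Lead.snd (p := p) (q := i) (N := N) (L := (i, s) :: L) (s := s) (k + 1)
          (by omega) (by rw [List.replicate_succ]; exact List.cons_prefix_cons.2 ⟨rfl, hpre⟩) r hr hh
        rw [← mul_assoc, ← zpow_add]
        convert this using 3
        push_cast; ring
      | fst k hk hpre r hr hh =>
        exact gen (zpow_mul_mem_noStart (by decide) (e1 hk (hbound hbL hpre) hr) hh)
      | @neg L j hp hq h hh =>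
        have := Lead.snd (p := p) (q := i) (N := N) 1 one_ne_zero hs (N j) (.inr ⟨j, rfl⟩) hh
        rw [← mul_assoc, ← zpow_add]
        simpa [sub_eq_add_neg] using this
      | pos hp hq hh =>
        exact gen (zpow_mul_mem_noStart (by decide) (hN0 _) hh)
    have hi : collapse p q N (of i) = of 0 ^ N i * of 1 ^ N i := by simp [collapse, hip, hiq]
    rw [hi]
    cases s with
    | true =>
      rw [show sg true = 1 from rfl, zpow_one, mul_assoc]
      refine .pos hip hiq ?_
      have gen : z ∈ NoStart 1 → of 1 ^ N i * z ∈ NoStart 0 :=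
        zpow_mul_mem_noStart (by decide) (hN0 i)
      cases ih with
      | nil => exact gen (one_mem_noStart 1)
      | fst k hk hpre r hr hh =>
        exact gen (zpow_mul_mem_noStart (by decide) (e1 hk (hbound hbL hpre) hr) hh)
      | snd k hk hpre r hr hh =>
        rw [← mul_assoc, ← zpow_add]
        exact zpow_mul_mem_noStart (by decide) (e3 i hk (hbound hbL hpre) hr) hh
      | pos hp hq hh => exact gen (zpow_mul_mem_noStart (by decide) (hN0 _) hh)
      | @neg L j hp hq h hh =>
        rw [← mul_assoc, ← zpow_add]
        refine zpow_mul_mem_noStart (by decide) (e5 ?_) hh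
        rintro rfl
        exact absurd (hx (i, false) rfl rfl) (by simp)
    | false =>
      rw [show sg false = -1 from rfl, zpow_neg_one, mul_inv_rev, mul_assoc, ← zpow_neg,
        ← zpow_neg]
      refine .neg hip hiq ?_
      have gen : z ∈ NoStart 0 → of 0 ^ (-N i) * z ∈ NoStart 1 :=
        zpow_mul_mem_noStart (by decide) (neg_ne_zero.2 (hN0 i))
      cases ih with
      | nil => exact gen (one_mem_noStart 0)
      | snd k hk hpre r hr hh =>
        exact gen (zpow_mul_mem_noStart (by decide) (e2 hk (hbound hbL hpre) hr) hh)
      | fst k hk hpre r hr hh =>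
        rw [← mul_assoc, ← zpow_add]
        exact zpow_mul_mem_noStart (by decide) (e4 i hk (hbound hbL hpre) hr) hh
      | neg hp hq hh =>
        exact gen (zpow_mul_mem_noStart (by decide) (neg_ne_zero.2 (hN0 _)) hh)
      | @pos L j hp hq h hh =>
        rw [← mul_assoc, ← zpow_add]
        refine zpow_mul_mem_noStart (by decide) ?_ hh
        have : i ≠ j := by
          rintro rfl
          exact absurd (hx (i, true) rfl rfl) (by simp)
        have := e5 this
        omega

end Collapse

/-! ### The separating surjection -/

section Reduction

/-- In the basis given by `A`, no nontrivial power of a basis element fixes a coset of `H`.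
Passing to this basis amounts to replacing `H` by its preimage under `α`. -/
theorem pow_smul_ne [DecidableEq ι] {H : Subgroup (FreeGroup ι)}
    {A : ι → List ι} (hA : ∀ i, A i ≠ []) {α : FreeGroup ι ≃* FreeGroup ι}
    (hα : ∀ i, α (of i) = posWord (A i)) (hT : ∀ i, trapped (core H) (A i) = ∅)
    (i : ι) (d : ℕ) (hd : d ≠ 0) (c : FreeGroup ι ⧸ H.comap α.toMonoidHom) :
    of i ^ d • c ≠ c := by
  induction c using QuotientGroup.induction_on with | _ g
  intro h
  have h1 : ((of i ^ d * g : FreeGroup ι) : FreeGroup ι ⧸ H.comap α.toMonoidHom) = g := h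
  rw [QuotientGroup.eq] at h1
  have h2 : posWord (A i) ^ d • ((α g : FreeGroup ι) : FreeGroup ι ⧸ H) = (α g : FreeGroup ι) := by
    change ((posWord (A i) ^ d * α g : FreeGroup ι) : FreeGroup ι ⧸ H) = _
    rw [QuotientGroup.eq]
    have : α ((of i ^ d * g)⁻¹ * g) ∈ H := h1
    simpa [hα] using this
  have := mem_core_of_pow_fixed (hA i) hd h2
  rw [hT] at this
  exact this

theorem fg_map {G G' : Type*} [Group G] [Group G'] {H : Subgroup G} (hH : H.FG) (f : G →* G') :
    (H.map f).FG := by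
  have := (Group.fg_iff_subgroup_fg _).2 hH
  exact (Group.fg_iff_subgroup_fg _).1 (Group.fg_of_surjective (f.subgroupMap_surjective H))

theorem fg_comap {H : Subgroup (FreeGroup ι)} (hH : H.FG) (α : FreeGroup ι ≃* FreeGroup ι) :
    (H.comap α.toMonoidHom).FG := by
  rw [show H.comap α.toMonoidHom = H.map α.symm.toMonoidHom from
    Subgroup.comap_equiv_eq_map_symm α H]
  exact fg_map hH _

theorem infinite_orbit {G : Type*} [Group G] {H : Subgroup G} (hH : H.index = 0) (c : G ⧸ H) :
    (MulAction.orbit G c).Infinite := by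
  rw [MulAction.orbit_eq_univ, Set.infinite_univ_iff]
  exact Subgroup.index_eq_zero_iff_infinite.1 hH

/-- The separating surjection, for subgroups of infinite index in a free group of finite rank at
least two. -/
theorem exists_separating [Finite ι] [Nontrivial ι] {H K : Subgroup (FreeGroup ι)}
    (hH : H.FG) (hK : K.FG) (hHi : H.index = 0) (hKi : K.index = 0) :
    ∃ ψ : FreeGroup ι →* FreeGroup (Fin 2), Function.Surjective ψ ∧
      ∀ h ∈ H, ∀ k ∈ K, ψ h = ψ k → h = k := by
  classical
  obtain ⟨A, hA, hT⟩ := exists_admissible_trapped_eq_empty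
    (X := (FreeGroup ι ⧸ H) ⊕ (FreeGroup ι ⧸ K)) (V := Sum.inl '' core H ∪ Sum.inr '' core K)
    (by
      rintro (c | c) hfin
      · refine infinite_orbit hHi c
          (Set.Finite.subset (hfin.preimage Sum.inl_injective.injOn) ?_)
        rintro _ ⟨g, rfl⟩
        exact ⟨g, rfl⟩
      · refine infinite_orbit hKi c
          (Set.Finite.subset (hfin.preimage Sum.inr_injective.injOn) ?_)
        rintro _ ⟨g, rfl⟩
        exact ⟨g, rfl⟩)
    (((core_finite hH).image _).union ((core_finite hK).image _))
  obtain ⟨α, hα⟩ := hA.exists_mulEquiv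
  have hTH : ∀ i, trapped (core H) (A i) = ∅ := fun i => by
    refine Set.eq_empty_of_forall_notMem fun c hc => ?_
    have : Sum.inl c ∈ trapped (Sum.inl '' core H ∪ Sum.inr '' core K) (A i) :=
      fun B hB => .inl ⟨_, hc B hB, rfl⟩
    rw [hT] at this
    exact this
  have hTK : ∀ i, trapped (core K) (A i) = ∅ := fun i => by
    refine Set.eq_empty_of_forall_notMem fun c hc => ?_
    have : Sum.inr c ∈ trapped (Sum.inl '' core H ∪ Sum.inr '' core K) (A i) :=
      fun B hB => .inr ⟨_, hc B hB, rfl⟩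
    rw [hT] at this
    exact this
  obtain ⟨D, hD⟩ := exists_power_bound (fg_comap hH α) (fg_comap hK α)
    (pow_smul_ne hA.ne_nil hα hTH) (pow_smul_ne hA.ne_nil hα hTK)
  have hD0 : D ≠ 0 := by
    rintro rfl
    obtain ⟨i⟩ := (inferInstance : Nonempty ι)
    exact hD 1 (one_mem _) 1 (one_mem _) i true ⟨[], _, rfl⟩
  -- Distinct positive multiples of `D` serve as exponents.
  obtain ⟨n, ⟨e⟩⟩ := Finite.exists_equiv_fin ι
  obtain ⟨p, q, hpq⟩ := exists_pair_ne ι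
  let N : ι → ℤ := fun i => D * (e i + 1)
  have hN : ∀ i, (D : ℤ) ≤ N i := fun i => by
    have : (0 : ℤ) ≤ D * (e i : ℕ) := by positivity
    simp only [N]; linarith
  have hNN : ∀ i j, i ≠ j → (D : ℤ) ≤ |N i - N j| := fun i j hij => by
    have h1 : ((e i : ℕ) : ℤ) - (e j : ℕ) ≠ 0 := by
      rw [sub_ne_zero]
      intro h
      exact hij (e.injective (Fin.ext (by exact_mod_cast h)))
    have h2 : N i - N j = D * (((e i : ℕ) : ℤ) - (e j : ℕ)) := by simp only [N]; ring
    rw [h2, abs_mul, Nat.abs_cast]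
    exact le_mul_of_one_le_right (by positivity) (Int.one_le_abs h1)
  refine ⟨(collapse p q N).comp α.symm.toMonoidHom,
    (collapse_surjective hpq N).comp α.symm.surjective, fun h hh k hk heq => ?_⟩
  have hmem : ∀ {J : Subgroup (FreeGroup ι)} {g}, g ∈ J → α.symm g ∈ J.comap α.toMonoidHom := by
    intro J g hg
    simpa using hg
  have hw := hD (α.symm h)⁻¹ (inv_mem (hmem hh)) (α.symm k) (hmem hk)
  set w := (α.symm h)⁻¹ * α.symm k with hwdef
  have hcw : collapse p q N w = 1 := by
    rw [hwdef, _root_.map_mul, _root_.map_inv, inv_mul_eq_one]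
    exact heq
  have hne := (lead_collapse hpq hD0 hN hNN w.toWord isReduced_toWord hw).2
  rw [mk_toWord] at hne
  have hw1 : w = 1 := by
    by_contra hw1
    exact hne (fun h => hw1 (toWord_eq_nil_iff.1 h)) hcw
  rw [hwdef, inv_mul_eq_one] at hw1
  exact α.symm.injective hw1

/-- A generator `x` that does not occur in the finitely many generating words cannot be spelled:
the endomorphism that fixes `x` and kills the other generators is trivial on all these words. -/
theorem finite_of_fg (h : Group.FG (FreeGroup ι)) : Finite ι := by
  classical
  obtain ⟨S, hS⟩ := h.out
  let T : Set ι := ⋃ s ∈ S, {x | x ∈ s.toWord.map Prod.fst}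
  have hT : T.Finite := S.finite_toSet.biUnion fun s _ => List.finite_toSet _
  refine Set.finite_univ_iff.1 (hT.subset fun x _ => ?_)
  by_contra hx
  let f : FreeGroup ι →* FreeGroup ι := lift (Function.update (fun _ => 1) x (of x))
  have hf : f = 1 := by
    refine MonoidHom.eq_of_eqOn_dense hS fun s hs => ?_
    rw [← mk_toWord (x := s), lift_mk, MonoidHom.one_apply]
    refine List.prod_eq_one fun y hy => ?_
    obtain ⟨a, ha, rfl⟩ := List.mem_map.1 hy
    have hax : a.1 ≠ x := by
      rintro rfl
      exact hx (Set.mem_biUnion hs (List.mem_map_of_mem ha))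
    simp [hax]
  have : f (of x) = 1 := by rw [hf]; rfl
  simp [f] at this

/-- In a free group of rank at most one, every nontrivial subgroup has finite index. -/
theorem index_ne_zero_of_subsingleton [Subsingleton ι] {H : Subgroup (FreeGroup ι)}
    (hH : H ≠ ⊥) : H.index ≠ 0 := by
  obtain ⟨h, hh, h1⟩ := Subgroup.ne_bot_iff_exists_ne_one.1 hH |>.elim fun a ha =>
    (⟨a.1, a.2, fun h => ha (Subtype.ext h)⟩ : ∃ h, h ∈ H ∧ h ≠ 1)
  have : Nonempty ι := by
    by_contra hι
    rw [not_nonempty_iff] at hι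
    exact h1 (Subsingleton.elim _ _)
  obtain ⟨x⟩ := this
  have hx : ∀ g : FreeGroup ι, ∃ n : ℤ, of x ^ n = g := by
    intro g
    have : g ∈ Subgroup.closure (Set.range (of : ι → FreeGroup ι)) := by
      rw [closure_range_of]; trivial
    rw [← Subgroup.mem_zpowers_iff, Subgroup.zpowers_eq_closure]
    refine Subgroup.closure_mono ?_ this
    rintro _ ⟨i, rfl⟩
    rw [Subsingleton.elim i x]; rfl
  obtain ⟨k, rfl⟩ := hx h
  have hk : k ≠ 0 := by rintro rfl; simp at h1
  have : Finite (FreeGroup ι ⧸ H) := by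
    refine Set.finite_univ_iff.1 (((Set.finite_Ico (0 : ℤ) |k|).image
      (fun n => ((of x ^ n : FreeGroup ι) : FreeGroup ι ⧸ H))).subset fun c _ => ?_)
    induction c using QuotientGroup.induction_on with | _ g
    obtain ⟨n, rfl⟩ := hx g
    refine ⟨n % k, ⟨Int.emod_nonneg _ hk, Int.emod_lt_abs _ hk⟩, ?_⟩
    change ((of x ^ (n % k) : FreeGroup ι) : FreeGroup ι ⧸ H) = _
    rw [QuotientGroup.eq, ← zpow_neg, ← zpow_add, show -(n % k) + n = k * (n / k) by
      have := Int.emod_add_mul_ediv n k; omega, zpow_mul]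
    exact zpow_mem hh _
  exact Subgroup.index_ne_zero_of_finite

theorem nontrivial_of_sup_eq_top {H K : Subgroup (FreeGroup ι)} (hHK : H ⊔ K = ⊤)
    (hH : H.index = 0) (hK : K.index = 0) : Nontrivial ι := by
  by_contra hι
  rw [not_nontrivial_iff_subsingleton] at hι
  have h1 : H = ⊥ := by_contra fun h => index_ne_zero_of_subsingleton h hH
  have h2 : K = ⊥ := by_contra fun h => index_ne_zero_of_subsingleton h hK
  subst h1 h2
  rw [bot_sup_eq] at hHK
  rw [hHK, Subgroup.index_top] at hH
  exact one_ne_zero hH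

/-- The separating surjection, for two subgroups of infinite index that generate a free group `L`.
The rank of `L` is then automatically finite and at least two. -/
theorem exists_separating_of_mulEquiv {L : Type*} [Group L] (e : L ≃* FreeGroup ι)
    {H K : Subgroup L} (hH : H.FG) (hK : K.FG) (hHK : H ⊔ K = ⊤)
    (hHi : H.index = 0) (hKi : K.index = 0) :
    ∃ φ : L →* FreeGroup (Fin 2), Function.Surjective φ ∧
      ∀ h ∈ H, ∀ k ∈ K, φ h = φ k → h = k := by
  have hsup : H.map e.toMonoidHom ⊔ K.map e.toMonoidHom = ⊤ := by
    rw [← Subgroup.map_sup, hHK]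
    exact Subgroup.map_top_of_surjective _ e.surjective
  have hi : ∀ J : Subgroup L, (J.map e.toMonoidHom).index = J.index := fun J =>
    Subgroup.index_map_equiv J e
  have hfg : Group.FG (FreeGroup ι) := ⟨hsup ▸ (fg_map hH _).sup (fg_map hK _)⟩
  have := finite_of_fg hfg
  have := nontrivial_of_sup_eq_top hsup ((hi H).trans hHi) ((hi K).trans hKi)
  obtain ⟨ψ, hψ, hsep⟩ := exists_separating (fg_map hH e.toMonoidHom) (fg_map hK e.toMonoidHom)
    ((hi H).trans hHi) ((hi K).trans hKi)
  exact ⟨ψ.comp e.toMonoidHom, hψ.comp e.surjective, fun h hh k hk heq =>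
    e.injective (hsep _ ⟨h, hh, rfl⟩ _ ⟨k, hk, rfl⟩ heq)⟩

end Reduction

end JoinRankTwo

theorem join_realized_in_rank_two
    (m : ℕ) (hm : 2 ≤ m)
    (H K : Subgroup (FreeGroup (Fin m))) (hH : H.FG) (hK : K.FG)
    (hHL : (H.subgroupOf (H ⊔ K)).index = 0)
    (hKL : (K.subgroupOf (H ⊔ K)).index = 0) :
    ∃ H' K' : Subgroup (FreeGroup (Fin 2)),
      Nonempty (H' ≃* H) ∧
      Nonempty (K' ≃* K) ∧
      Nonempty ((H' ⊓ K' : Subgroup (FreeGroup (Fin 2))) ≃* (H ⊓ K : Subgroup (FreeGroup (Fin m)))) ∧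
      H' ⊔ K' = ⊤ := by
  have hHle : H ≤ H ⊔ K := le_sup_left
  have hKle : K ≤ H ⊔ K := le_sup_right
  have fg : ∀ J : Subgroup (FreeGroup (Fin m)), J.FG → J ≤ H ⊔ K →
      (J.subgroupOf (H ⊔ K)).FG := by
    intro J hJ hle
    have := (Group.fg_iff_subgroup_fg _).2 hJ
    rw [← Group.fg_iff_subgroup_fg]
    exact Group.fg_of_surjective (f := (Subgroup.subgroupOfEquivOfLe hle).symm.toMonoidHom)
      (Subgroup.subgroupOfEquivOfLe hle).symm.surjective
  have hsup : H.subgroupOf (H ⊔ K) ⊔ K.subgroupOf (H ⊔ K) = ⊤ := by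
    rw [← Subgroup.subgroupOf_sup hHle hKle, Subgroup.subgroupOf_self]
  obtain ⟨φ, hφ, hsep⟩ := JoinRankTwo.exists_separating_of_mulEquiv
    (IsFreeGroup.toFreeGroup (H ⊔ K : Subgroup (FreeGroup (Fin m)))) (fg H hH hHle) (fg K hK hKle)
    hsup hHL hKL
  have hinjH : Function.Injective (φ.comp (Subgroup.inclusion hHle)) := by
    rw [injective_iff_map_eq_one]
    intro a ha
    have := hsep (Subgroup.inclusion hHle a) a.2 1 (one_mem _) (by rw [map_one]; exact ha)
    exact Subgroup.inclusion_injective hHle (by rw [this, map_one])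
  have hinjK : Function.Injective (φ.comp (Subgroup.inclusion hKle)) := by
    rw [injective_iff_map_eq_one]
    intro a ha
    have := hsep 1 (one_mem _) (Subgroup.inclusion hKle a) a.2 (by rw [map_one]; exact ha.symm)
    exact Subgroup.inclusion_injective hKle (by rw [← this, map_one])
  have hIle : H ⊓ K ≤ H ⊔ K := inf_le_left.trans hHle
  have hinjI : Function.Injective (φ.comp (Subgroup.inclusion hIle)) :=
    hinjH.comp (Subgroup.inclusion_injective inf_le_left)
  have hrange : (φ.comp (Subgroup.inclusion hHle)).range ⊓ (φ.comp (Subgroup.inclusion hKle)).range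
      = (φ.comp (Subgroup.inclusion hIle)).range := by
    apply le_antisymm
    · rintro _ ⟨⟨a, rfl⟩, ⟨b, hb⟩⟩
      have hab := hsep (Subgroup.inclusion hHle a) a.2 (Subgroup.inclusion hKle b) b.2 hb.symm
      have hab' : (a : FreeGroup (Fin m)) = b := congrArg Subtype.val hab
      exact ⟨⟨a, a.2, hab' ▸ b.2⟩, rfl⟩
    · rintro _ ⟨a, rfl⟩
      exact ⟨⟨⟨a, a.2.1⟩, rfl⟩, ⟨⟨a, a.2.2⟩, rfl⟩⟩
  refine ⟨(φ.comp (Subgroup.inclusion hHle)).range, (φ.comp (Subgroup.inclusion hKle)).range,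
    ⟨(MonoidHom.ofInjective hinjH).symm⟩, ⟨(MonoidHom.ofInjective hinjK).symm⟩, ?_, ?_⟩
  · rw [hrange]
    exact ⟨(MonoidHom.ofInjective hinjI).symm⟩
  · rw [MonoidHom.range_comp, MonoidHom.range_comp, ← Subgroup.map_sup,
      Subgroup.inclusion_range, Subgroup.inclusion_range, hsup,
      Subgroup.map_top_of_surjective _ hφ]
end
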